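/- Let K and L be convex bodies in ℝ³ (compact convex sets with nonempty interior), both centrally symmetric about the origin O, with L contained in the interior of K and L strictly convex. Suppose that for every point x on the boundary of K, the graze Σ(L,x) is contained in a plane Δ_x, and that K is almost free with respect to L. Then L is an ellipsoid, i.e., the image of the closed Euclidean unit ball under an invertible affine transformation of ℝ³. -/

import Mathlib

open Metric Set

noncomputable section

/-- The ambient space ℝ³. -/
abbrev E3 := EuclideanSpace ℝ (Fin 3)

/-- The cone generated by `L` with apex `x`:
`C(L,x) = {x + λ (y - x) : y ∈ L, λ ≥ 0}`. -/
def coneGen (L : Set E3) (x : E3) : Set E3 :=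
  {p | ∃ y ∈ L, ∃ l : ℝ, 0 ≤ l ∧ p = x + l • (y - x)}

/-- The support cone `S(L,x)` of `L` from `x`, the boundary of `C(L,x)`. -/
def suppCone (L : Set E3) (x : E3) : Set E3 := frontier (coneGen L x)

/-- The graze `Σ(L,x) = S(L,x) ∩ bd L`. -/
def graze (L : Set E3) (x : E3) : Set E3 := suppCone L x ∩ frontier L

/-- An affine subspace of `ℝ³` is a plane if its direction is 2-dimensional. -/
def IsPlane (P : AffineSubspace ℝ E3) : Prop :=
  Module.finrank ℝ P.direction = 2

/-- The line through two points. -/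
def lineThrough (a b : E3) : Set E3 := ↑(affineSpan ℝ ({a, b} : Set E3))

/-- `K` is almost free with respect to `L` (given the planes `Δ z` containing the
grazes `Σ(L,z)` for `z ∈ bd K`): for every `z ∈ bd K` and every
`w ∈ Π_z ∩ bd K`, where `Π_z` is the plane through the origin parallel to `Δ z`,
the line through `z` and `w` does not meet `L`. -/
def AlmostFree (K L : Set E3) (Δ : E3 → AffineSubspace ℝ E3) : Prop :=
  ∀ z ∈ frontier K, ∀ w ∈ (↑(Δ z).direction : Set E3) ∩ frontier K,
    Disjoint (lineThrough z w) L

open scoped RealInnerProductSpace Topology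
open Filter

lemma ulim {X ι : Type*} [TopologicalSpace X] (U : Ultrafilter ι) {S : Set X}
    (hS : IsCompact S) (f : ι → X) (hf : ∀ᶠ i in (U : Filter ι), f i ∈ S) :
    ∃ x ∈ S, Tendsto f U (𝓝 x) := by
  obtain ⟨x, hx, h⟩ := hS.ultrafilter_le_nhds (U.map f) (le_principal_iff.2 hf)
  exact ⟨x, hx, h⟩

lemma exists_orth (u v : E3) : ∃ w : E3, ‖w‖ = 1 ∧ ⟪u, w⟫ = 0 ∧ ⟪v, w⟫ = 0 := by
  let f : E3 →ₗ[ℝ] ℝ × ℝ := (innerₛₗ ℝ u).prod (innerₛₗ ℝ v)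
  have h := LinearMap.ker_ne_bot_of_finrank_lt (f := f) (by simp)
  obtain ⟨w, hw, hw0⟩ := (Submodule.ne_bot_iff _).1 h
  have hw' : ⟪u, w⟫ = 0 ∧ ⟪v, w⟫ = 0 := by simpa [f] using hw
  refine ⟨(‖w‖)⁻¹ • w, ?_, ?_, ?_⟩
  · rw [norm_smul, norm_inv, norm_norm, inv_mul_cancel₀ (norm_ne_zero_iff.2 hw0)]
  · rw [inner_smul_right, hw'.1, mul_zero]
  · rw [inner_smul_right, hw'.2, mul_zero]

structure Ctx0 (K L : Set E3) (p : E3 → E3) (r : ℝ) : Prop where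
  Kc : IsCompact K
  Kconv : Convex ℝ K
  Lc : IsCompact L
  Lconv : Convex ℝ L
  LK : L ⊆ interior K
  r0 : 0 < r
  ball : closedBall 0 r ⊆ L
  pL : ∀ y, p y ∈ L
  pmax : ∀ y, ∀ x ∈ L, ⟪y, x⟫ ≤ ⟪y, p y⟫
  puniq : ∀ y, y ≠ 0 → ∀ x ∈ L, ⟪y, x⟫ = ⟪y, p y⟫ → x = p y

structure Ctx (K L : Set E3) (p a : E3 → E3) (r : ℝ) : Prop extends Ctx0 K L p r where
  ha : ∀ z ∈ frontier K, ∀ y, y ≠ 0 → ⟪y, z⟫ = ⟪y, p y⟫ → ⟪a z, p y - z⟫ = -1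

namespace Ctx0
variable {K L : Set E3} {p : E3 → E3} {r : ℝ} (c : Ctx0 K L p r)
include c

lemma hmax (y y' : E3) : ⟪y, p y'⟫ ≤ ⟪y, p y⟫ := c.pmax y _ (c.pL y')

lemma h_lb (y : E3) : r * ‖y‖ ≤ ⟪y, p y⟫ := by
  by_cases hy : y = 0
  · simp [hy]
  have hn : ‖y‖ ≠ 0 := norm_ne_zero_iff.2 hy
  have h := c.pmax y ((r / ‖y‖) • y) (c.ball (by
    rw [mem_closedBall_zero_iff, norm_smul, norm_div, norm_norm, div_mul_cancel₀ _ hn,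
      Real.norm_of_nonneg c.r0.le]))
  rw [inner_smul_right, real_inner_self_eq_norm_sq] at h
  calc r * ‖y‖ = r / ‖y‖ * ‖y‖ ^ 2 := by field_simp
    _ ≤ _ := h

lemma h_pos {y : E3} (hy : y ≠ 0) : 0 < ⟪y, p y⟫ :=
  lt_of_lt_of_le (mul_pos c.r0 (norm_pos_iff.2 hy)) (c.h_lb y)

lemma Kcl : IsClosed K := c.Kc.isClosed

lemma frK {z : E3} (hz : z ∈ frontier K) : z ∈ K ∧ z ∉ interior K := by
  rw [c.Kcl.frontier_eq] at hz; exact hz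

lemma frK_notL {z : E3} (hz : z ∈ frontier K) : z ∉ L := fun h => (c.frK hz).2 (c.LK h)

lemma bdd : ∃ B, 0 < B ∧ ∀ x ∈ K, ‖x‖ ≤ B := by
  obtain ⟨B, hB⟩ := c.Kc.isBounded.exists_norm_le
  exact ⟨max B 1, by positivity, fun x hx => (hB x hx).trans (le_max_left _ _)⟩

lemma LsubK : L ⊆ K := c.LK.trans interior_subset

lemma h_cont : Continuous (fun y : E3 => ⟪y, p y⟫) := by
  obtain ⟨B, hB, hBK⟩ := c.bdd
  have key : ∀ y y' : E3, ⟪y, p y⟫ - ⟪y', p y'⟫ ≤ B * dist y y' := by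
    intro y y'
    have h1 := c.hmax y' y
    have h2 : ⟪y - y', p y⟫ ≤ ‖y - y'‖ * ‖p y‖ := real_inner_le_norm _ _
    rw [inner_sub_left] at h2
    have h3 := hBK _ (c.LsubK (c.pL y))
    have h4 : ‖y - y'‖ * ‖p y‖ ≤ ‖y - y'‖ * B := by gcongr
    rw [dist_eq_norm]; linarith
  refine (LipschitzWith.of_dist_le_mul (K := B.toNNReal) fun y y' => ?_).continuous
  rw [Real.coe_toNNReal _ hB.le, Real.dist_eq, abs_le]
  have := key y y'
  have h' := key y' y
  rw [dist_comm] at h'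
  constructor <;> linarith

lemma p_cont {y : E3} (hy : y ≠ 0) : ContinuousAt p y := by
  rw [ContinuousAt, tendsto_iff_ultrafilter]
  intro U hU
  obtain ⟨x, hx, h⟩ := ulim U c.Lc p (Eventually.of_forall c.pL)
  have hid : Tendsto (fun y : E3 => y) U (𝓝 y) := hU
  have h1 : Tendsto (fun y : E3 => ⟪y, p y⟫) U (𝓝 ⟪y, x⟫) := hid.inner h
  have h2 : Tendsto (fun y : E3 => ⟪y, p y⟫) U (𝓝 ⟪y, p y⟫) :=
    (c.h_cont.tendsto y).comp hU
  have := c.puniq y hy x hx (tendsto_nhds_unique h1 h2)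
  rwa [← this]

lemma p_tendsto {ι : Type*} {l : Filter ι} {f : ι → E3} {y : E3} (hy : y ≠ 0)
    (hf : Tendsto f l (𝓝 y)) : Tendsto (fun i => p (f i)) l (𝓝 (p y)) :=
  (c.p_cont hy).tendsto.comp hf

lemma h_tendsto {ι : Type*} {l : Filter ι} {f : ι → E3} {y : E3}
    (hf : Tendsto f l (𝓝 y)) : Tendsto (fun i => ⟪f i, p (f i)⟫) l (𝓝 ⟪y, p y⟫) :=
  (c.h_cont.tendsto y).comp hf

lemma sep {z : E3} (hz : z ∉ L) : ∃ y : E3, ⟪y, p y⟫ < ⟪y, z⟫ := by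
  obtain ⟨f, u, h1, h2⟩ := geometric_hahn_banach_point_closed c.Lconv c.Lc.isClosed hz
  refine ⟨-(InnerProductSpace.toDual ℝ E3).symm f, ?_⟩
  rw [inner_neg_left, inner_neg_left, InnerProductSpace.toDual_symm_apply,
    InnerProductSpace.toDual_symm_apply]
  have := h2 _ (c.pL (-(InnerProductSpace.toDual ℝ E3).symm f))
  linarith

lemma NPaux {z ν : E3} (hz : z ∈ frontier K) (_hν0 : ν ≠ 0) (hlt : ⟪ν, z⟫ < ⟪ν, p ν⟫)
    (hν : ∀ y : E3, y ≠ 0 → ⟪y, z⟫ = ⟪y, p y⟫ → ⟪ν, p y - z⟫ = 0) : False := by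
  have : ∃ y0 : E3, ⟪y0, p y0⟫ < ⟪y0, z⟫ ∧ ∀ t : ℝ, y0 ≠ t • ν := by
    obtain ⟨y1, hy1⟩ := c.sep (c.frK_notL hz)
    by_cases hp : ∀ t : ℝ, y1 ≠ t • ν
    · exact ⟨y1, hy1, hp⟩
    push Not at hp
    obtain ⟨t0, ht0⟩ := hp
    obtain ⟨w, hw1, hw2, -⟩ := exists_orth ν ν
    have hT : Tendsto (fun t : ℝ => y1 + t • w) (𝓝[≠] 0) (𝓝 y1) := by
      have : Continuous (fun t : ℝ => y1 + t • w) := by fun_prop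
      have := this.tendsto 0
      simp only [zero_smul, add_zero] at this
      exact this.mono_left nhdsWithin_le_nhds
    have h1 := (c.h_tendsto hT).eventually_lt (hT.inner tendsto_const_nhds) hy1
    obtain ⟨t, h1, ht⟩ := (h1.and self_mem_nhdsWithin).exists
    refine ⟨_, h1, fun s hs => ?_⟩
    have : ⟪y1 + t • w, w⟫ = ⟪s • ν, w⟫ := by rw [hs]
    rw [ht0, inner_add_left, inner_smul_left, inner_smul_left, inner_smul_left, hw2,
      real_inner_self_eq_norm_sq, hw1] at this
    simp at this
    exact ht this
  obtain ⟨y0, hy0, hnp⟩ := this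
  let φ : ℝ → ℝ := fun s => ⟪y0 + s • ν, z⟫ - ⟪y0 + s • ν, p (y0 + s • ν)⟫
  have hφc : Continuous φ := by
    have h1 : Continuous (fun s : ℝ => y0 + s • ν) := by fun_prop
    exact (h1.inner continuous_const).sub (c.h_cont.comp h1)
  set S : ℝ := |⟪y0, z - p ν⟫| / (⟪ν, p ν⟫ - ⟪ν, z⟫) with hS
  have hd : 0 < ⟪ν, p ν⟫ - ⟪ν, z⟫ := sub_pos.2 hlt
  have hS0 : 0 ≤ S := by positivity
  have hend : φ S ≤ 0 := by
    have h1 := c.hmax (y0 + S • ν) ν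
    have h2 : S * (⟪ν, p ν⟫ - ⟪ν, z⟫) = |⟪y0, z - p ν⟫| := by rw [hS]; field_simp
    have h3 := le_abs_self ⟪y0, z - p ν⟫
    simp only [φ]
    rw [inner_add_left, inner_smul_left] at h1 ⊢
    rw [inner_sub_right] at h2 h3
    simp at h1 ⊢
    nlinarith
  have hst : 0 ≤ φ 0 := by simp [φ]; exact hy0.le
  obtain ⟨s, -, hs⟩ := intermediate_value_Icc' hS0 hφc.continuousOn ⟨hend, hst⟩
  have hne : y0 + s • ν ≠ 0 := by
    intro h
    exact hnp (-s) (by rw [neg_smul]; exact eq_neg_of_add_eq_zero_left h)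
  have heq : ⟪y0 + s • ν, z⟫ = ⟪y0 + s • ν, p (y0 + s • ν)⟫ := by
    simp only [φ] at hs; linarith
  have h0 := hν _ hne heq
  have h1 := c.hmax y0 (y0 + s • ν)
  rw [inner_add_left, inner_add_left, inner_smul_left, inner_smul_left] at heq
  rw [inner_sub_right] at h0
  simp at heq
  have : s * ⟪ν, z⟫ = s * ⟪ν, p (y0 + s • ν)⟫ := by rw [sub_eq_zero.1 h0]
  linarith

lemma NP {z ν : E3} (hz : z ∈ frontier K)
    (hν : ∀ y : E3, y ≠ 0 → ⟪y, z⟫ = ⟪y, p y⟫ → ⟪ν, p y - z⟫ = 0) : ν = 0 := by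
  by_contra h0
  by_cases hlt : ⟪ν, z⟫ < ⟪ν, p ν⟫
  · exact c.NPaux hz h0 hlt hν
  · refine c.NPaux hz (neg_ne_zero.2 h0) ?_ (fun y h1 h2 => ?_)
    · have h1 := c.h_pos h0
      have h2 := c.h_pos (neg_ne_zero.2 h0)
      rw [inner_neg_left]; linarith
    · rw [inner_neg_left, hν y h1 h2, neg_zero]

end Ctx0

namespace Ctx0
variable {K L : Set E3} {p : E3 → E3} {r : ℝ} (c : Ctx0 K L p r)
include c

lemma lsc {y z : E3} (hy : y ≠ 0) (hz : z ∉ L) (hyz : ⟪y, z⟫ = ⟪y, p y⟫) {O : Set E3}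
    (hO : O ∈ 𝓝 y) :
    ∀ᶠ w in 𝓝 z, ∃ y' ∈ O, y' ≠ 0 ∧ ⟪y', w⟫ = ⟪y', p y'⟫ := by
  set ν := z - p y with hν
  have hν0 : ν ≠ 0 := by
    intro h; exact hz (by rw [sub_eq_zero.1 h]; exact c.pL y)
  have hνn : 0 < ⟪ν, ν⟫ := real_inner_self_pos.2 hν0
  have hyν : ⟪y, ν⟫ = 0 := by rw [hν, inner_sub_right, hyz, sub_self]
  have hT : Tendsto (fun s : ℝ => y + s • ν) (𝓝 0) (𝓝 y) := by
    have : Continuous (fun t : ℝ => y + t • ν) := by fun_prop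
    simpa using this.tendsto 0
  have e1 := hT.eventually hO
  have e2 := hT.eventually (isOpen_ne.mem_nhds hy)
  have e3 : ∀ᶠ s : ℝ in 𝓝 0, 0 < ⟪ν, z - p (y + s • ν)⟫ :=
    (((tendsto_const_nhds (x := ν)).inner
      ((tendsto_const_nhds (x := z)).sub (c.p_tendsto hy hT)))).eventually_const_lt hνn
  obtain ⟨δ, hδ, hB⟩ := Metric.eventually_nhds_iff.1 ((e1.and e2).and e3)
  set s0 := δ / 2 with hs0
  have hs0p : 0 < s0 := by positivity
  have hB' : ∀ s : ℝ, |s| ≤ s0 → (y + s • ν ∈ O ∧ y + s • ν ≠ 0) ∧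
      0 < ⟪ν, z - p (y + s • ν)⟫ := fun s hs => hB (by
        rw [Real.dist_eq, sub_zero]; linarith)
  have hlo : ⟪y + (-s0) • ν, z⟫ - ⟪y + (-s0) • ν, p (y + (-s0) • ν)⟫ < 0 := by
    have h1 := c.hmax (y + (-s0) • ν) y
    have h2 : ⟪y + (-s0) • ν, z - p y⟫ = -s0 * ⟪ν, ν⟫ := by
      rw [← hν, inner_add_left, inner_smul_left, hyν]; simp
    rw [inner_sub_right] at h2
    nlinarith
  have hhi : 0 < ⟪y + s0 • ν, z⟫ - ⟪y + s0 • ν, p (y + s0 • ν)⟫ := by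
    have h1 := c.hmax y (y + s0 • ν)
    have h2 := (hB' s0 (by rw [abs_of_pos hs0p])).2
    rw [inner_sub_right] at h2
    rw [inner_add_left, inner_add_left, inner_smul_left, inner_smul_left]
    simp
    nlinarith
  have t1 : ∀ v : E3, Tendsto (fun w : E3 => ⟪v, w⟫ - ⟪v, p v⟫) (𝓝 z) (𝓝 (⟪v, z⟫ - ⟪v, p v⟫)) := by
    intro v
    have : Continuous (fun w : E3 => ⟪v, w⟫ - ⟪v, p v⟫) := by fun_prop
    exact this.tendsto z
  filter_upwards [(t1 _).eventually_lt_const hlo, (t1 _).eventually_const_lt hhi] with w hw1 hw2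
  have hc : Continuous (fun s : ℝ => ⟪y + s • ν, w⟫ - ⟪y + s • ν, p (y + s • ν)⟫) := by
    have h1 : Continuous (fun s : ℝ => y + s • ν) := by fun_prop
    exact (h1.inner continuous_const).sub (c.h_cont.comp h1)
  obtain ⟨s, hs, hs'⟩ := intermediate_value_Icc (by linarith : -s0 ≤ s0) hc.continuousOn
    ⟨hw1.le, hw2.le⟩
  obtain ⟨⟨h1, h2⟩, -⟩ := hB' s (abs_le.2 hs)
  exact ⟨_, h1, h2, sub_eq_zero.1 hs'⟩
end Ctx0

namespace Ctx
variable {K L : Set E3} {p a : E3 → E3} {r : ℝ} (c : Ctx K L p a r)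
include c

lemma a_cont {z : E3} (hz : z ∈ frontier K) : ContinuousWithinAt a (frontier K) z := by
  rw [ContinuousWithinAt, tendsto_iff_ultrafilter]
  intro U hU
  have hUz : Tendsto (fun w : E3 => w) U (𝓝 z) := hU.trans nhdsWithin_le_nhds
  have hUK : ∀ᶠ w in (U : Filter E3), w ∈ frontier K := hU self_mem_nhdsWithin
  have hs : ∀ w, 0 < 1 + ‖a w‖ := fun w => by positivity
  obtain ⟨b, -, hb⟩ := ulim U (isCompact_closedBall (0 : E3) 1)
    (fun w => (1 + ‖a w‖)⁻¹ • a w) (Eventually.of_forall fun w => by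
      rw [mem_closedBall_zero_iff, norm_smul, norm_inv, Real.norm_of_nonneg (hs w).le,
        inv_mul_le_iff₀ (hs w)]
      linarith)
  obtain ⟨s, -, hs'⟩ := ulim U (isCompact_Icc (a := (0 : ℝ)) (b := 1))
    (fun w => (1 + ‖a w‖)⁻¹) (Eventually.of_forall fun w => ⟨(inv_pos.2 (hs w)).le,
      inv_le_one_of_one_le₀ (by linarith [norm_nonneg (a w)])⟩)
  have hsum : ‖b‖ + s = 1 := by
    refine tendsto_nhds_unique (hb.norm.add hs') ?_
    refine tendsto_const_nhds.congr fun w => ?_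
    rw [norm_smul, norm_inv, Real.norm_of_nonneg (hs w).le]
    have := (hs w).ne'
    field_simp
    ring
  have key : b - s • a z = 0 := by
    refine c.NP hz fun y hy hyz => ?_
    have h1 := c.ha z hz y hy hyz
    suffices ⟪b, p y - z⟫ = -s by
      rw [inner_sub_left, inner_smul_left, this, h1]; simp
    have hlim : Tendsto (fun w => ⟪(1 + ‖a w‖)⁻¹ • a w, p y - w⟫ + (1 + ‖a w‖)⁻¹) U
      (𝓝 (⟪b, p y - z⟫ + s)) := (hb.inner (tendsto_const_nhds.sub hUz)).add hs'
    have hlim2 : Tendsto (fun w => ⟪(1 + ‖a w‖)⁻¹ • a w, p y - w⟫ + (1 + ‖a w‖)⁻¹) U (𝓝 0) := by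
      rw [Metric.tendsto_nhds]
      intro ε hε
      have hO := (c.p_cont hy) (Metric.ball_mem_nhds (p y) hε)
      filter_upwards [hUK, hUz.eventually (c.lsc hy (c.frK_notL hz) hyz hO)] with w hw ⟨y', hy', hy0, hyw⟩
      have h2 := c.ha w hw y' hy0 hyw
      have h3 : ‖p y' - p y‖ < ε := by simpa [dist_eq_norm] using hy'
      have h4 : ⟪(1 + ‖a w‖)⁻¹ • a w, p y - w⟫ + (1 + ‖a w‖)⁻¹ =
          (1 + ‖a w‖)⁻¹ * (- ⟪a w, p y' - p y⟫) := by
        have : p y - w = (p y' - w) - (p y' - p y) := by abel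
        rw [this, inner_smul_left, inner_sub_right, h2]
        simp; ring
      have h5 := abs_real_inner_le_norm (a w) (p y' - p y)
      rw [Real.dist_eq, sub_zero, h4, abs_mul, abs_neg, abs_of_pos (inv_pos.2 (hs w)),
        inv_mul_lt_iff₀ (hs w)]
      nlinarith [norm_nonneg (a w), norm_nonneg (p y' - p y)]
    have := tendsto_nhds_unique hlim hlim2
    linarith
  have hb2 : b = s • a z := sub_eq_zero.1 key
  have hs0 : s ≠ 0 := by
    intro h
    rw [hb2, h] at hsum
    simp at hsum
  have := (hs'.inv₀ hs0).smul hb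
  rw [hb2, smul_smul, inv_mul_cancel₀ hs0, one_smul] at this
  refine this.congr fun w => ?_
  rw [smul_smul, inv_inv, mul_inv_cancel₀ (hs w).ne', one_smul]

lemma a_tendsto {ι : Type*} {l : Filter ι} {zk : ι → E3} {z : E3} (hz : z ∈ frontier K)
    (hzk : ∀ᶠ i in l, zk i ∈ frontier K) (ht : Tendsto zk l (𝓝 z)) :
    Tendsto (fun i => a (zk i)) l (𝓝 (a z)) :=
  (c.a_cont hz).tendsto.comp (tendsto_nhdsWithin_iff.2 ⟨ht, hzk⟩)

end Ctx

lemma ray_unique {K : Set E3} (hK : Convex ℝ K) (hKc : IsClosed K) {q d : E3} (hq : q ∈ interior K)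
    {s t : ℝ} (hs : 0 < s) (hst : s < t)
    (h1 : q + s • d ∈ frontier K) (h2 : q + t • d ∈ frontier K) : False := by
  rw [hKc.frontier_eq] at h1 h2
  refine h1.2 (hK.openSegment_interior_self_subset_interior hq h2.1 ?_)
  have ht : 0 < t := hs.trans hst
  refine ⟨1 - s / t, s / t, by rw [sub_pos, div_lt_one ht]; exact hst, by positivity, by ring, ?_⟩
  rw [smul_add, smul_smul, div_mul_cancel₀ _ ht.ne', ← add_assoc, ← add_smul]
  simp

def tau (K : Set E3) (q d : E3) : ℝ :=
  open Classical in if h : ∃ t : ℝ, 0 < t ∧ q + t • d ∈ frontier K then h.choose else 0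

namespace Ctx0
variable {K L : Set E3} {p : E3 → E3} {r : ℝ} (c : Ctx0 K L p r)
include c

lemma tau_spec {q d : E3} (hq : q ∈ interior K) (hd : d ≠ 0) :
    0 < tau K q d ∧ q + tau K q d • d ∈ frontier K := by
  have : ∃ t : ℝ, 0 < t ∧ q + t • d ∈ frontier K := by
    have hcont : Continuous (fun t : ℝ => q + t • d) := by fun_prop
    have hpre : IsPreconnected ((fun t : ℝ => q + t • d) '' Ioi 0) :=
      isPreconnected_Ioi.image _ hcont.continuousOn
    obtain ⟨B, hB, hBK⟩ := c.bdd
    by_contra hno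
    push Not at hno
    have hfin := hpre (interior K) Kᶜ isOpen_interior c.Kcl.isOpen_compl
    suffices h : ((fun t : ℝ => q + t • d) '' Ioi 0 ∩ (interior K ∩ Kᶜ)).Nonempty by
      obtain ⟨x, hx0, hx1, hx2⟩ := h
      exact hx2 (interior_subset hx1)
    refine hfin ?_ ?_ ?_
    · rintro x ⟨t, ht, rfl⟩
      by_cases h : q + t • d ∈ K
      · left
        by_contra h'
        exact hno t ht (by rw [c.Kcl.frontier_eq]; exact ⟨h, h'⟩)
      · right; exact h
    · have : ∀ᶠ t : ℝ in 𝓝[>] 0, q + t • d ∈ interior K := by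
        have h0 : Tendsto (fun t : ℝ => q + t • d) (𝓝[>] 0) (𝓝 q) := by
          simpa using (hcont.tendsto 0).mono_left nhdsWithin_le_nhds
        filter_upwards [h0.eventually (isOpen_interior.mem_nhds hq)] with t ht
        exact ht
      obtain ⟨t, h1, h2⟩ := (this.and self_mem_nhdsWithin).exists
      exact ⟨_, ⟨t, h2, rfl⟩, h1⟩
    · have hd' := norm_pos_iff.2 hd
      have hT : 0 < (B + ‖q‖ + 1) / ‖d‖ := by positivity
      refine ⟨_, ⟨(B + ‖q‖ + 1) / ‖d‖, hT, rfl⟩, fun h => ?_⟩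
      have h1 := hBK _ h
      have h2 : ‖((B + ‖q‖ + 1) / ‖d‖) • d‖ = B + ‖q‖ + 1 := by
        rw [norm_smul, Real.norm_of_nonneg hT.le]; field_simp
      have h3 := norm_sub_le (q + ((B + ‖q‖ + 1) / ‖d‖) • d) q
      rw [add_sub_cancel_left, h2] at h3
      simp only at h1
      linarith
  rw [tau, dif_pos this]
  exact this.choose_spec

lemma tau_unique {q d : E3} (hq : q ∈ interior K) (hd : d ≠ 0) {t : ℝ} (ht : 0 < t)
    (h : q + t • d ∈ frontier K) : t = tau K q d := by
  obtain ⟨h1, h2⟩ := c.tau_spec hq hd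
  rcases lt_trichotomy t (tau K q d) with h3 | h3 | h3
  · exact (ray_unique c.Kconv c.Kcl hq ht h3 h h2).elim
  · exact h3
  · exact (ray_unique c.Kconv c.Kcl hq h1 h3 h2 h).elim

lemma tau_tendsto {ι : Type*} {l : Filter ι} {qk dk : ι → E3} {q d : E3} (hq : q ∈ interior K)
    (hd : d ≠ 0) (hqk : Tendsto qk l (𝓝 q)) (hdk : Tendsto dk l (𝓝 d)) :
    Tendsto (fun i => tau K (qk i) (dk i)) l (𝓝 (tau K q d)) := by
  rw [tendsto_iff_ultrafilter]
  intro U hU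
  have hqU := hqk.mono_left hU
  have hdU := hdk.mono_left hU
  obtain ⟨B, hB, hBK⟩ := c.bdd
  have hd' := norm_pos_iff.2 hd
  have hspec : ∀ᶠ i in (U : Filter ι), 0 < tau K (qk i) (dk i) ∧
      qk i + tau K (qk i) (dk i) • dk i ∈ frontier K := by
    filter_upwards [hqU.eventually (isOpen_interior.mem_nhds hq),
      hdU.eventually (isOpen_ne.mem_nhds hd)] with i h1 h2
    exact c.tau_spec h1 h2
  have hdl : ∀ᶠ i in (U : Filter ι), ‖d‖ / 2 < ‖dk i‖ :=
    hdU.norm.eventually_const_lt (by linarith)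
  obtain ⟨t, ht, hlim⟩ := ulim U (isCompact_Icc (a := (0 : ℝ)) (b := 2 * B / (‖d‖ / 2)))
    (fun i => tau K (qk i) (dk i)) (by
      filter_upwards [hspec, hdl, hqU.eventually (isOpen_interior.mem_nhds hq)] with i h1 h2 h3
      refine ⟨h1.1.le, ?_⟩
      rw [le_div_iff₀ (by positivity)]
      have h4 := hBK _ (c.frK h1.2).1
      have h5 := hBK _ (interior_subset h3)
      have h6 := norm_sub_le (qk i + tau K (qk i) (dk i) • dk i) (qk i)
      rw [add_sub_cancel_left, norm_smul, Real.norm_of_nonneg h1.1.le] at h6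
      nlinarith [h1.1])
  have hz : Tendsto (fun i => qk i + tau K (qk i) (dk i) • dk i) U (𝓝 (q + t • d)) :=
    hqU.add (hlim.smul hdU)
  have hfr : q + t • d ∈ frontier K :=
    isClosed_frontier.mem_of_tendsto hz (hspec.mono fun i h => h.2)
  have ht0 : 0 < t := by
    refine lt_of_le_of_ne ht.1 fun h => ?_
    rw [← h, zero_smul, add_zero] at hfr
    exact (c.frK hfr).2 hq
  rwa [← c.tau_unique hq hd ht0 hfr]

end Ctx0

lemma orth3 {u v w x : E3}
    (h : ∀ α β γ : ℝ, α • u + β • v + γ • w = 0 → α = 0 ∧ β = 0 ∧ γ = 0)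
    (hu : ⟪u, x⟫ = 0) (hv : ⟪v, x⟫ = 0) (hw : ⟪w, x⟫ = 0) : x = 0 := by
  have hli : LinearIndependent ℝ ![u, v, w] := by
    rw [Fintype.linearIndependent_iff]
    intro g hg
    rw [Fin.sum_univ_three] at hg
    obtain ⟨h1, h2, h3⟩ := h (g 0) (g 1) (g 2) (by simpa using hg)
    intro i
    fin_cases i <;> assumption
  have hsp := hli.span_eq_top_of_card_eq_finrank' (by simp)
  have hx : x ∈ Submodule.span ℝ (Set.range ![u, v, w]) := by rw [hsp]; trivial
  have : ∀ z ∈ Submodule.span ℝ (Set.range ![u, v, w]), ⟪z, x⟫ = 0 := by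
    intro z hz
    induction hz using Submodule.span_induction with
    | mem z hz =>
      obtain ⟨i, rfl⟩ := hz
      fin_cases i <;> simpa
    | zero => simp
    | add a b _ _ ha hb => rw [inner_add_left, ha, hb, add_zero]
    | smul t a _ ha => rw [inner_smul_left, ha, mul_zero]
  exact inner_self_eq_zero.1 (this x hx)

lemma orthoexp {a e w D : E3} (ha : a ≠ 0) (he : ‖e‖ = 1) (hw : ‖w‖ = 1)
    (hae : ⟪a, e⟫ = 0) (haw : ⟪a, w⟫ = 0) (hew : ⟪e, w⟫ = 0) (hD : ⟪a, D⟫ = 0) :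
    D = ⟪e, D⟫ • e + ⟪w, D⟫ • w := by
  have hee : ⟪e, e⟫ = 1 := by rw [real_inner_self_eq_norm_sq, he]; norm_num
  have hww : ⟪w, w⟫ = 1 := by rw [real_inner_self_eq_norm_sq, hw]; norm_num
  have haa : ⟪a, a⟫ ≠ 0 := inner_self_ne_zero.2 ha
  have hea : ⟪e, a⟫ = 0 := by rw [real_inner_comm, hae]
  have hwa : ⟪w, a⟫ = 0 := by rw [real_inner_comm, haw]
  have hwe : ⟪w, e⟫ = 0 := by rw [real_inner_comm, hew]
  rw [← sub_eq_zero]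
  refine orth3 (u := a) (v := e) (w := w) ?_ ?_ ?_ ?_
  · intro α β γ h
    have h1 : ⟪a, α • a + β • e + γ • w⟫ = 0 := by rw [h, inner_zero_right]
    have h2 : ⟪e, α • a + β • e + γ • w⟫ = 0 := by rw [h, inner_zero_right]
    have h3 : ⟪w, α • a + β • e + γ • w⟫ = 0 := by rw [h, inner_zero_right]
    simp only [inner_add_right, inner_smul_right, hae, haw, hew, hea, hwa, hwe, hee, hww] at h1 h2 h3
    refine ⟨?_, by linarith, by linarith⟩
    have : α * ⟪a, a⟫ = 0 := by linarith
    exact (mul_eq_zero.1 this).resolve_right haa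
  · simp only [inner_sub_right, inner_add_right, inner_smul_right, hae, haw, hD]; ring
  · simp only [inner_sub_right, inner_add_right, inner_smul_right, hew, hee]; ring
  · simp only [inner_sub_right, inner_add_right, inner_smul_right, hwe, hww]; ring

namespace Ctx0
variable {K L : Set E3} {p : E3 → E3} {r : ℝ} (c : Ctx0 K L p r)
include c

lemma p_smul {y : E3} (hy : y ≠ 0) {t : ℝ} (ht : 0 < t) : p (t • y) = p y := by
  refine c.puniq y hy _ (c.pL _) (le_antisymm (c.hmax _ _) ?_)
  have := c.hmax (t • y) y
  rw [inner_smul_left, inner_smul_left] at this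
  exact le_of_mul_le_mul_left this ht

end Ctx0

namespace Ctx
variable {K L : Set E3} {p a : E3 → E3} {r : ℝ} (c : Ctx K L p a r)
include c

set_option maxHeartbeats 1000000 in
lemma smoothA {q y1 ζ e y2 : E3} {t : ℝ} (hy1 : y1 ≠ 0) (hpq : p y1 = q) (hζ : ⟪y1, ζ⟫ = 0)
    (hF : ∀ y : E3, y ≠ 0 → p y = q → ⟪y, ζ⟫ = 0 → ∃ s : ℝ, y = s • y1)
    (ht : 0 < t) (hz : q + t • ζ ∈ frontier K) (he : ‖e‖ = 1) (hey : ⟪y1, e⟫ = 0)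
    (hea : ⟪a (q + t • ζ), e⟫ = 0) (hpy2 : p y2 = q) : ⟪y2, e⟫ ≤ 0 := by
  by_contra hcon
  push Not at hcon
  set z := q + t • ζ with hzdef
  have hΓ1 : ⟪y1, z⟫ = ⟪y1, p y1⟫ := by
    rw [hzdef, inner_add_right, inner_smul_right, hζ, hpq]; ring
  have haq := c.ha z hz y1 hy1 hΓ1
  rw [hpq] at haq
  have haζ : t * ⟪a z, ζ⟫ = 1 := by
    rw [hzdef] at haq ⊢
    rw [sub_add_cancel_left, inner_neg_right, inner_smul_right] at haq
    linarith
  have ha0 : a z ≠ 0 := by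
    intro h; rw [h] at haζ; simp at haζ
  have hee : ⟪e, e⟫ = 1 := by rw [real_inner_self_eq_norm_sq, he]; norm_num
  set η := ζ - ⟪e, ζ⟫ • e with hη
  have hη0 : η ≠ 0 := by
    intro h
    have : ⟪a z, η⟫ = 0 := by rw [h, inner_zero_right]
    rw [hη, inner_sub_right, inner_smul_right, hea, mul_zero, sub_zero] at this
    rw [this] at haζ; simp at haζ
  have hηe : ⟪e, η⟫ = 0 := by rw [hη, inner_sub_right, inner_smul_right, hee]; ring
  have hηp : 0 < ⟪η, η⟫ := real_inner_self_pos.2 hη0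
  have hηζ : ⟪η, ζ⟫ = ⟪η, η⟫ := by
    have : ζ = η + ⟪e, ζ⟫ • e := by rw [hη]; abel
    conv_lhs => rw [this]
    rw [inner_add_right, inner_smul_right, real_inner_comm e η, hηe]; ring
  obtain ⟨w, hw, hwa, hwe⟩ : ∃ w : E3, ‖w‖ = 1 ∧ ⟪a z, w⟫ = 0 ∧ ⟪e, w⟫ = 0 := exists_orth _ _
  obtain ⟨w, hw, hwa, hwe, hyw⟩ : ∃ w : E3, ‖w‖ = 1 ∧ ⟪a z, w⟫ = 0 ∧ ⟪e, w⟫ = 0 ∧ ⟪y1, w⟫ < 0 := by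
    rcases lt_trichotomy ⟪y1, w⟫ 0 with h | h | h
    · exact ⟨w, hw, hwa, hwe, h⟩
    · exfalso
      have : w = 0 := by
        refine orth3 (u := y1) (v := a z) (w := e) ?_ h hwa hwe
        intro α β γ h0
        have h1 : ⟪α • y1 + β • a z + γ • e, ζ⟫ = 0 := by rw [h0, inner_zero_left]
        have h2 : ⟪α • y1 + β • a z + γ • e, e⟫ = 0 := by rw [h0, inner_zero_left]
        simp only [inner_add_left, inner_smul_left, hζ, hea, hey, hee] at h1 h2
        simp at h1 h2
        rw [h2] at h1 h0
        have h3 : β = 0 := by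
          have : β * ⟪a z, ζ⟫ = 0 := by linarith
          refine (mul_eq_zero.1 this).resolve_right fun h => ?_
          rw [h] at haζ; simp at haζ
        rw [h3] at h0
        simp at h0
        exact ⟨h0.resolve_right hy1, h3, h2⟩
      rw [this] at hw; simp at hw
    · exact ⟨-w, by simpa, by simpa, by simpa, by simpa⟩
  set C := (|⟪e, ζ⟫| + 1) / ⟪η, η⟫ with hC
  have hC0 : 0 < C := by positivity
  have hCη : C * ⟪η, η⟫ = |⟪e, ζ⟫| + 1 := by rw [hC]; field_simp
  have hle := abs_le.1 (le_refl |⟪e, ζ⟫|)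
  have hT : Tendsto (fun δ : ℝ => y1 + δ • e + (C * δ) • η) (𝓝[>] 0) (𝓝 y1) := by
    have : Continuous (fun δ : ℝ => y1 + δ • e + (C * δ) • η) := by fun_prop
    have := this.tendsto 0
    simp only [zero_smul, mul_zero, add_zero] at this
    exact this.mono_left nhdsWithin_le_nhds
  have hp1 := (tendsto_const_nhds (x := z)).sub (c.p_tendsto hy1 hT)
  have e1 : ∀ᶠ δ : ℝ in 𝓝[>] 0, 0 < ⟪e + C • η, z - p (y1 + δ • e + (C * δ) • η)⟫ := by
    refine ((tendsto_const_nhds (x := e + C • η)).inner hp1).eventually_const_lt ?_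
    rw [hpq, hzdef, add_sub_cancel_left, inner_smul_right, inner_add_left, real_inner_smul_left, hηζ]
    refine mul_pos ht ?_
    linarith [hle.1]
  have hδ0 : Tendsto (fun δ : ℝ => δ) (𝓝[>] 0) (𝓝 0) := nhdsWithin_le_nhds
  have e2 : ∀ᶠ δ : ℝ in 𝓝[>] 0, C * δ * |⟪η, w⟫| < -⟪y1, w⟫ / 2 := by
    refine Tendsto.eventually_lt_const (v := 0) (by linarith) ?_
    simpa using (hδ0.const_mul C).mul_const (|⟪η, w⟫|)
  have e3 : ∀ᶠ δ : ℝ in 𝓝[>] 0, 2 * δ * |⟪y2, w⟫| < -⟪y1, w⟫ * ⟪y2, e⟫ := by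
    refine Tendsto.eventually_lt_const (v := 0) (mul_pos (by linarith) hcon) ?_
    simpa using (hδ0.const_mul 2).mul_const (|⟪y2, w⟫|)
  obtain ⟨δ, ⟨⟨h1, h2⟩, h3⟩, hδ⟩ := (((e1.and e2).and e3).and self_mem_nhdsWithin).exists
  have hδ : 0 < δ := hδ
  have hφc : Continuous (fun s : ℝ => ⟪y1 + δ • e + s • η, z⟫ -
      ⟪y1 + δ • e + s • η, p (y1 + δ • e + s • η)⟫) := by
    have h1 : Continuous (fun s : ℝ => y1 + δ • e + s • η) := by fun_prop
    exact (h1.inner continuous_const).sub (c.h_cont.comp h1)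
  have hlo : ⟪y1 + δ • e + (-(C * δ)) • η, z⟫ -
      ⟪y1 + δ • e + (-(C * δ)) • η, p (y1 + δ • e + (-(C * δ)) • η)⟫ ≤ 0 := by
    have h4 := c.hmax (y1 + δ • e + (-(C * δ)) • η) y1
    have h5 : ⟪y1 + δ • e + (-(C * δ)) • η, z - q⟫ ≤ 0 := by
      rw [hzdef, add_sub_cancel_left, inner_smul_right, inner_add_left, inner_add_left,
        real_inner_smul_left, real_inner_smul_left, hζ, hηζ]
      have : δ * ⟪e, ζ⟫ - C * δ * ⟪η, η⟫ ≤ 0 := by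
        have i1 := mul_le_mul_of_nonneg_left hle.2 hδ.le
        have i2 : C * δ * ⟪η, η⟫ = δ * (|⟪e, ζ⟫| + 1) := by rw [← hCη]; ring
        linarith
      have := mul_nonpos_of_nonneg_of_nonpos ht.le this
      linarith
    rw [inner_sub_right] at h5
    rw [hpq] at h4
    linarith
  have hhi : 0 ≤ ⟪y1 + δ • e + (C * δ) • η, z⟫ -
      ⟪y1 + δ • e + (C * δ) • η, p (y1 + δ • e + (C * δ) • η)⟫ := by
    have h4 := c.hmax y1 (y1 + δ • e + (C * δ) • η)
    have h5 : 0 < δ * ⟪e + C • η, z - p (y1 + δ • e + (C * δ) • η)⟫ := mul_pos hδ h1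
    generalize p (y1 + δ • e + (C * δ) • η) = x at *
    simp only [inner_sub_right, inner_add_left, inner_smul_left, RCLike.conj_to_real] at h5 ⊢
    linarith
  obtain ⟨s, hs, hs'⟩ := intermediate_value_Icc (by linarith [mul_pos hC0 hδ] : -(C * δ) ≤ C * δ) hφc.continuousOn
    ⟨hlo, hhi⟩
  have habs := abs_le.2 hs
  simp only at hs'
  set y := y1 + δ • e + s • η with hy
  have hye : ⟪y, e⟫ = δ := by
    rw [hy, inner_add_left, inner_add_left, inner_smul_left, inner_smul_left, hey, hee,
      real_inner_comm, hηe]; simp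
  have hy0 : y ≠ 0 := by
    intro h; rw [h, inner_zero_left] at hye; linarith
  have hyz : ⟪y, z⟫ = ⟪y, p y⟫ := sub_eq_zero.1 hs'
  have hay := c.ha z hz y hy0 hyz
  set D := p y - q with hD
  have haD : ⟪a z, D⟫ = 0 := by
    have : D = (p y - z) - (q - z) := by rw [hD]; abel
    rw [this, inner_sub_right, hay, haq]; ring
  have hD0 : D ≠ 0 := by
    intro h
    have hpy : p y = q := sub_eq_zero.1 h
    have h4 : ⟪y, ζ⟫ = 0 := by
      rw [hpy, hzdef, inner_add_right, inner_smul_right] at hyz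
      have : t * ⟪y, ζ⟫ = 0 := by linarith
      exact (mul_eq_zero.1 this).resolve_left ht.ne'
    obtain ⟨u, hu⟩ := hF y hy0 hpy h4
    rw [hu, inner_smul_left, hey] at hye
    simp at hye; linarith
  have hDexp := orthoexp ha0 he hw hea hwa hwe haD
  set σ := ⟪e, D⟫
  set ρ := ⟪w, D⟫
  have d1 : ⟪y1, D⟫ ≤ 0 := by
    rw [hD, inner_sub_right, sub_nonpos, ← hpq]; exact c.hmax _ _
  have d2 : ⟪y2, D⟫ ≤ 0 := by
    rw [hD, inner_sub_right, sub_nonpos, ← hpy2]; exact c.hmax _ _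
  have d3 : 0 ≤ ⟪y, D⟫ := by
    rw [hD, inner_sub_right, sub_nonneg, ← hpq]; exact c.hmax _ _
  rw [hDexp, inner_add_right, inner_smul_right, inner_smul_right] at d1 d2 d3
  rw [hey] at d1
  have hyw' : ⟪y, w⟫ = ⟪y1, w⟫ + s * ⟪η, w⟫ := by
    rw [hy, inner_add_left, inner_add_left, inner_smul_left, inner_smul_left, hwe]; simp
  rw [hye, hyw'] at d3
  have hρ : 0 ≤ ρ := by
    by_contra h; push Not at h
    have := mul_pos_of_neg_of_neg h hyw
    linarith
  have hsη : s * ⟪η, w⟫ ≤ -⟪y1, w⟫ / 2 := by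
    have h5 : s * ⟪η, w⟫ ≤ |s| * |⟪η, w⟫| := by rw [← abs_mul]; exact le_abs_self _
    have h6 : |s| * |⟪η, w⟫| ≤ C * δ * |⟪η, w⟫| := by gcongr
    linarith
  have hρσ : ρ * (-⟪y1, w⟫) ≤ 2 * δ * σ := by
    have i0 := mul_le_mul_of_nonneg_left hsη hρ
    linarith
  have hσ0 : 0 < σ := by
    have h7 : 0 ≤ σ := by
      have : 0 ≤ ρ * (-⟪y1, w⟫) := mul_nonneg hρ (by linarith)
      by_contra h; push Not at h
      have := mul_neg_of_pos_of_neg hδ h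
      linarith
    refine lt_of_le_of_ne h7 fun h => ?_
    rw [← h] at hρσ
    have : ρ = 0 := by
      refine le_antisymm ?_ hρ
      by_contra h'; push Not at h'
      have := mul_pos h' (neg_pos.2 hyw)
      linarith
    rw [← h, this] at hDexp
    exact hD0 (by rw [hDexp]; simp)
  have h8 := neg_abs_le ⟪y2, w⟫
  have h9 : σ * ⟪y2, e⟫ ≤ ρ * |⟪y2, w⟫| := by
    have := mul_le_mul_of_nonneg_left h8 hρ
    linarith
  have h10 : σ * (-⟪y1, w⟫ * ⟪y2, e⟫) ≤ σ * (2 * δ * |⟪y2, w⟫|) := by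
    have i1 : (-⟪y1, w⟫) * (σ * ⟪y2, e⟫) ≤ (-⟪y1, w⟫) * (ρ * |⟪y2, w⟫|) :=
      mul_le_mul_of_nonneg_left h9 (by linarith)
    have i2 : ρ * (-⟪y1, w⟫) * |⟪y2, w⟫| ≤ 2 * δ * σ * |⟪y2, w⟫| :=
      mul_le_mul_of_nonneg_right hρσ (abs_nonneg _)
    linarith
  have := le_of_mul_le_mul_left h10 hσ0
  linarith

end Ctx

namespace Ctx
variable {K L : Set E3} {p a : E3 → E3} {r : ℝ} (c : Ctx K L p a r)
include c

lemma smooth {y y' : E3} (hy : y ≠ 0) (hy' : y' ≠ 0) (hp : p y = p y') :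
    ∃ t : ℝ, 0 < t ∧ y' = t • y := by
  set q := p y with hq
  have hqL : q ∈ L := c.pL y
  have hqK : q ∈ interior K := c.LK hqL
  let F : Set E3 := {u | ⟪u, q⟫ = 1 ∧ ⟪u, p u⟫ = 1}
  have hFcl : IsClosed F := by
    have h1 : IsClosed {u : E3 | ⟪u, q⟫ = 1} := isClosed_eq (by fun_prop) continuous_const
    have h2 : IsClosed {u : E3 | ⟪u, p u⟫ = 1} := isClosed_eq c.h_cont continuous_const
    exact h1.inter h2
  have hFc : IsCompact F := by
    refine (isCompact_closedBall (0 : E3) (1 / r)).of_isClosed_subset hFcl fun u hu => ?_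
    rw [mem_closedBall_zero_iff, le_div_iff₀ c.r0]
    have := c.h_lb u
    rw [hu.2] at this
    linarith
  have hF0 : ∀ u ∈ F, u ≠ 0 := by
    rintro u hu rfl
    have := hu.1
    simp at this
  have hFp : ∀ u ∈ F, p u = q := fun u hu => (c.puniq u (hF0 u hu) q hqL (hu.1.trans hu.2.symm)).symm
  have hn : ∀ u : E3, u ≠ 0 → p u = q → (⟪u, p u⟫)⁻¹ • u ∈ F := by
    intro u hu hpu
    have h1 := c.h_pos hu
    refine ⟨?_, ?_⟩
    · rw [real_inner_smul_left, ← hpu, inv_mul_cancel₀ h1.ne']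
    · rw [c.p_smul hu (inv_pos.2 h1), real_inner_smul_left, inv_mul_cancel₀ h1.ne']
  obtain ⟨y2, hy2⟩ : ∃ y2 : E3, y2 = (⟪y, p y⟫)⁻¹ • y := ⟨_, rfl⟩
  have hy2F : y2 ∈ F := by rw [hy2]; exact hn y hy rfl
  by_cases hall : ∀ u ∈ F, u = y2
  · have h1 := hall _ (hn y' hy' hp.symm)
    have h2 := c.h_pos hy
    have h3 := c.h_pos hy'
    refine ⟨⟪y', p y'⟫ * (⟪y, p y⟫)⁻¹, by positivity, ?_⟩
    rw [← smul_smul, ← hy2, ← h1, smul_smul, mul_inv_cancel₀ h3.ne', one_smul]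
  exfalso
  push Not at hall
  obtain ⟨y0, hy0F, hy0⟩ := hall
  obtain ⟨y1, hy1F, hmax⟩ := hFc.exists_isMaxOn ⟨y2, hy2F⟩
    (f := fun u => ‖u - y2‖) (by fun_prop)
  have hmax' : ∀ u ∈ F, ‖u - y2‖ ≤ ‖y1 - y2‖ := fun u hu => hmax hu
  have hy12 : y1 ≠ y2 := by
    rintro rfl
    have := hmax' y0 hy0F
    rw [sub_self, norm_zero] at this
    exact hy0 (sub_eq_zero.1 (norm_le_zero_iff.1 this))
  obtain ⟨η, hη1, hη2⟩ : ∃ η : E3, ⟪y1, η⟫ = 0 ∧ ∀ u ∈ F, u ≠ y1 → ⟪u, η⟫ < 0 := by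
    refine ⟨(y1 - y2) - ⟪y1, y1 - y2⟫ • q, ?_, ?_⟩
    · rw [inner_sub_right, inner_smul_right, hy1F.1]; ring
    · intro u hu hne
      rw [inner_sub_right, inner_smul_right, hu.1, mul_one, ← inner_sub_left]
      have h1 := hmax' u hu
      have h2 : u - y2 = (u - y1) + (y1 - y2) := by abel
      have h3 : ‖u - y2‖ ^ 2 ≤ ‖y1 - y2‖ ^ 2 := by gcongr
      rw [h2, norm_add_sq_real] at h3
      have h4 : 0 < ‖u - y1‖ := norm_pos_iff.2 (sub_ne_zero.2 hne)
      have : 0 < ‖u - y1‖ ^ 2 := by positivity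
      linarith
  have hA : ∀ ζ : E3, ⟪y1, ζ⟫ = 0 → (∀ u ∈ F, u ≠ y1 → ⟪u, ζ⟫ < 0) → ∀ e : E3, ‖e‖ = 1 →
      ⟪y1, e⟫ = 0 → ⟪a (q + tau K q ζ • ζ), e⟫ = 0 → ∀ u ∈ F, ⟪u, e⟫ = 0 := by
    intro ζ h1 h2 e he hye hae u hu
    have hζ0 : ζ ≠ 0 := by
      rintro rfl
      have := h2 y2 hy2F hy12.symm
      simp at this
    obtain ⟨ht, hz⟩ := c.tau_spec hqK hζ0
    have hF : ∀ y : E3, y ≠ 0 → p y = q → ⟪y, ζ⟫ = 0 → ∃ s : ℝ, y = s • y1 := by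
      intro v hv hpv hvζ
      refine ⟨⟪v, p v⟫, ?_⟩
      by_contra hcon
      have := h2 _ (hn v hv hpv) (by
        rintro rfl
        rw [smul_smul, mul_inv_cancel₀ (c.h_pos hv).ne', one_smul] at hcon
        exact hcon rfl)
      rw [real_inner_smul_left, hvζ, mul_zero] at this
      exact lt_irrefl _ this
    refine le_antisymm ?_ ?_
    · exact c.smoothA (hF0 _ hy1F) (hFp _ hy1F) h1 hF ht hz he hye hae (hFp _ hu)
    · have := c.smoothA (e := -e) (hF0 _ hy1F) (hFp _ hy1F) h1 hF ht hz (by simpa) (by simpa)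
        (by simpa) (hFp _ hu)
      rw [inner_neg_right] at this
      linarith
  obtain ⟨E0, hE1, hE2, hE3⟩ := exists_orth y1 (a (q + tau K q η • η))
  have hE := hA η hη1 hη2 E0 hE1 hE2 hE3
  have hε : ∀ ε : ℝ, 0 < ε → ⟪a (q + tau K q (E0 + ε • η) • (E0 + ε • η)), E0⟫ = 0 := by
    intro ε hε
    obtain ⟨e, he1, he2, he3⟩ := exists_orth y1 (a (q + tau K q (E0 + ε • η) • (E0 + ε • η)))
    have he := hA (E0 + ε • η) (by rw [inner_add_right, inner_smul_right, hE2, hη1]; ring)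
      (fun u hu hne => by
        rw [inner_add_right, inner_smul_right, hE u hu, zero_add]
        exact mul_neg_of_pos_of_neg hε (hη2 u hu hne)) e he1 he2 he3
    have hee : ⟪e, e⟫ = 1 := by rw [real_inner_self_eq_norm_sq, he1]; norm_num
    have hD : E0 - ⟪e, E0⟫ • e = 0 := by
      refine orth3 (u := y1) (v := y2) (w := e) ?_ ?_ ?_ ?_
      · intro α β γ h0
        have i1 : ⟪α • y1 + β • y2 + γ • e, e⟫ = 0 := by rw [h0, inner_zero_left]
        have i2 : ⟪α • y1 + β • y2 + γ • e, q⟫ = 0 := by rw [h0, inner_zero_left]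
        rw [inner_add_left, inner_add_left, real_inner_smul_left, real_inner_smul_left,
          real_inner_smul_left] at i1 i2
        rw [he y1 hy1F, he y2 hy2F, hee] at i1
        have hγ : γ = 0 := by linarith
        rw [hy1F.1, hy2F.1, hγ] at i2
        have hβ : β = -α := by linarith
        rw [hγ, hβ, zero_smul, add_zero, neg_smul, ← sub_eq_add_neg, ← smul_sub] at h0
        have hα := (smul_eq_zero.1 h0).resolve_right (sub_ne_zero.2 hy12)
        exact ⟨hα, by rw [hβ, hα, neg_zero], hγ⟩
      · rw [inner_sub_right, inner_smul_right, hE2, he2]; ring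
      · rw [inner_sub_right, inner_smul_right, hE _ hy2F, he _ hy2F]; ring
      · rw [inner_sub_right, inner_smul_right, hee]; ring
    have h5 := congrArg (fun v => ⟪a (q + tau K q (E0 + ε • η) • (E0 + ε • η)), v⟫)
      (sub_eq_zero.1 hD)
    rw [h5, inner_smul_right, he3, mul_zero]
  have hE0 : E0 ≠ 0 := by rintro rfl; simp at hE1
  have hT : Tendsto (fun ε : ℝ => E0 + ε • η) (𝓝[>] 0) (𝓝 E0) := by
    have : Continuous (fun t : ℝ => E0 + t • η) := by fun_prop
    have := this.tendsto 0
    simp only [zero_smul, add_zero] at this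
    exact this.mono_left nhdsWithin_le_nhds
  have hτ := c.tau_tendsto hqK hE0 tendsto_const_nhds hT
  obtain ⟨ht, hz⟩ := c.tau_spec hqK hE0
  have hlim := c.a_tendsto (l := 𝓝[>] (0 : ℝ))
    (zk := fun ε : ℝ => q + tau K q (E0 + ε • η) • (E0 + ε • η)) hz
    (by filter_upwards [hT.eventually (isOpen_ne.mem_nhds hE0)] with ε h
        exact (c.tau_spec hqK h).2) (tendsto_const_nhds.add (hτ.smul hT))
  have h0 : ⟪a (q + tau K q E0 • E0), E0⟫ = 0 := by
    refine tendsto_nhds_unique (hlim.inner (tendsto_const_nhds (x := E0))) ?_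
    refine tendsto_const_nhds.congr' ?_
    filter_upwards [self_mem_nhdsWithin] with ε h
    exact (hε ε h).symm
  have h1 := c.ha _ hz y1 (hF0 _ hy1F) (by
    rw [inner_add_right, inner_smul_right, hE2, hFp _ hy1F]; ring)
  rw [hFp _ hy1F, sub_add_cancel_left, inner_neg_right, inner_smul_right, h0] at h1
  norm_num at h1

end Ctx

lemma choose_small {l : Filter ℕ} (hl : l ≤ atTop) {P : ℕ → ℝ → Prop}
    (h : ∀ δ : ℝ, 0 < δ → ∀ᶠ k in l, ∃ s : ℝ, |s| ≤ δ ∧ P k s) :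
    ∃ s : ℕ → ℝ, Tendsto s l (𝓝 0) ∧ ∀ᶠ k in l, P k (s k) := by
  have hc : ∀ k : ℕ, ∃ s : ℝ, (∃ s', P k s') → P k s ∧
      ∀ s', P k s' → |s| < |s'| + 1 / ((k : ℝ) + 1) := by
    intro k
    by_cases hk : ∃ s', P k s'
    · obtain ⟨s', hs'⟩ := hk
      have hne : ((fun s => |s|) '' {s | P k s}).Nonempty := ⟨_, s', hs', rfl⟩
      obtain ⟨_, ⟨s, hs, rfl⟩, hlt⟩ := Real.lt_sInf_add_pos hne
        (by positivity : 0 < 1 / ((k : ℝ) + 1))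
      refine ⟨s, fun _ => ⟨hs, fun u hu => hlt.trans_le ?_⟩⟩
      gcongr
      exact csInf_le ⟨0, by rintro _ ⟨x, _, rfl⟩; exact abs_nonneg x⟩ ⟨u, hu, rfl⟩
    · exact ⟨0, fun h => (hk h).elim⟩
  choose s hs using hc
  refine ⟨s, ?_, ?_⟩
  · rw [Metric.tendsto_nhds]
    intro δ hδ
    have h1 : Tendsto (fun k : ℕ => 1 / ((k : ℝ) + 1)) l (𝓝 0) :=
      tendsto_one_div_add_atTop_nhds_zero_nat.mono_left hl
    filter_upwards [h (δ / 2) (by positivity), h1.eventually_lt_const (by positivity : (0 : ℝ) < δ / 2)]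
      with k ⟨s', hs1, hs2⟩ hk
    have := (hs k ⟨s', hs2⟩).2 s' hs2
    rw [Real.dist_eq, sub_zero]
    linarith
  · filter_upwards [h 1 one_pos] with k ⟨s', _, hs2⟩
    exact (hs k ⟨s', hs2⟩).1

/-- convexity from subgradients -/
lemma cvx_of_sub {Nh : E3 → ℝ} {G : E3 → E3} (hsub : ∀ v w : E3, Nh v + ⟪G v, w - v⟫ ≤ Nh w)
    (v w : E3) {s t : ℝ} (hs : 0 ≤ s) (ht : 0 ≤ t) (hst : s + t = 1) :
    Nh (s • v + t • w) ≤ s * Nh v + t * Nh w := by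
  have h1 := hsub (s • v + t • w) v
  have h2 := hsub (s • v + t • w) w
  obtain rfl : s = 1 - t := by linarith
  have e1 : v - ((1 - t) • v + t • w) = t • (v - w) := by module
  have e2 : w - ((1 - t) • v + t • w) = (-(1 - t)) • (v - w) := by module
  rw [e1, inner_smul_right] at h1
  rw [e2, inner_smul_right] at h2
  have i1 := mul_le_mul_of_nonneg_left h1 hs
  have i2 := mul_le_mul_of_nonneg_left h2 ht
  linarith

lemma extract {Nh : E3 → ℝ} {G : E3 → E3} {y0 e1 e2 : E3}
    (he1 : ‖e1‖ = 1) (he2 : ‖e2‖ = 1) (hy1 : ⟪y0, e1⟫ = 0) (hy2 : ⟪y0, e2⟫ = 0)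
    (h12 : ⟪e1, e2⟫ = 0) (hy0 : y0 ≠ 0)
    (h0 : Nh 0 = 0) (hpos : ∀ v, 0 ≤ Nh v)
    (hsub : ∀ v w : E3, Nh v + ⟪G v, w - v⟫ ≤ Nh w) (hG : Tendsto G (𝓝 0) (𝓝 0))
    {κ : ℝ} (hκ : 0 < κ) (hlow : ∀ v : E3, ⟪y0, v⟫ = 0 → ‖v‖ ≤ 1 → κ * ‖v‖ ^ 2 ≤ Nh v) :
    ∃ ε lam : ℕ → ℝ, (∀ k, 0 < ε k) ∧ Tendsto ε atTop (𝓝 0) ∧ (∀ k, 0 < lam k) ∧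
      Tendsto (fun k => lam k / ε k) atTop (𝓝 0) ∧
      (∀ R : ℝ, ∃ C : ℝ, ∀ᶠ k in atTop, ∀ η : E3, ⟪y0, η⟫ = 0 → ‖η‖ ≤ R →
        Nh (ε k • η) ≤ C * lam k) ∧
      ∀ k, Nh (ε k • e1) + Nh (ε k • (-e1)) + Nh (ε k • e2) + Nh (ε k • (-e2)) = lam k := by
  have hray : ∀ (t : ℝ) (v : E3), 0 ≤ t → t ≤ 1 → Nh (t • v) ≤ Nh v := by
    intro t v h1 h2
    have := cvx_of_sub hsub v 0 h1 (sub_nonneg.2 h2) (by ring)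
    rw [smul_zero, add_zero, h0, mul_zero, add_zero] at this
    exact this.trans (mul_le_of_le_one_left (hpos v) h2)
  let F : ℝ → ℝ := fun t => Nh (t • e1) + Nh (t • (-e1)) + Nh (t • e2) + Nh (t • (-e2))
  have hFray : ∀ (s T : ℝ) (e : E3), |s| ≤ T → Nh (s • e) ≤ Nh (T • e) + Nh (T • (-e)) := by
    intro s T e hs
    have hT : 0 ≤ T := (abs_nonneg s).trans hs
    by_cases hT0 : T = 0
    · have : s = 0 := by rw [hT0] at hs; exact abs_nonpos_iff.1 hs
      rw [this, zero_smul, h0]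
      exact add_nonneg (hpos _) (hpos _)
    have hT' : 0 < T := lt_of_le_of_ne hT (Ne.symm hT0)
    rcases le_total 0 s with h | h
    · have := hray (s / T) (T • e) (by positivity) (by rw [div_le_one hT']; rwa [abs_of_nonneg h] at hs)
      rw [smul_smul, div_mul_cancel₀ _ hT0] at this
      linarith [hpos (T • (-e))]
    · have := hray (-s / T) (T • (-e)) (div_nonneg (by linarith) hT)
        (by rw [div_le_one hT']; rwa [abs_of_nonpos h] at hs)
      rw [smul_smul, div_mul_cancel₀ _ hT0, neg_smul_neg] at this
      linarith [hpos (T • e)]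
  let μ : ℕ → ℝ := fun j => 8 ^ j * F ((1 / 2) ^ j)
  have hFlow : ∀ t : ℝ, 0 ≤ t → t ≤ 1 → κ * t ^ 2 ≤ F t := by
    intro t h1 h2
    have := hlow (t • e1) (by rw [inner_smul_right, hy1, mul_zero])
      (by rw [norm_smul, he1, mul_one, Real.norm_of_nonneg h1]; exact h2)
    rw [norm_smul, he1, mul_one, Real.norm_of_nonneg h1] at this
    simp only [F]
    linarith [hpos (t • (-e1)), hpos (t • e2), hpos (t • (-e2))]
  have hμ : Tendsto μ atTop atTop := by
    refine tendsto_atTop_mono (f := fun j : ℕ => κ * 2 ^ j) (fun j => ?_)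
      ((tendsto_pow_atTop_atTop_of_one_lt (by norm_num)).const_mul_atTop hκ)
    have := hFlow ((1 / 2) ^ j) (by positivity) (pow_le_one₀ (by norm_num) (by norm_num))
    have h8 : (8 : ℝ) ^ j * (κ * ((1 / 2) ^ j) ^ 2) = κ * 2 ^ j := by
      have : (8 : ℝ) ^ j * ((1 / 2) ^ j) ^ 2 = 2 ^ j := by
        rw [← pow_mul, mul_comm j 2, pow_mul, ← mul_pow]; norm_num
      rw [← this]; ring
    rw [← h8]
    exact mul_le_mul_of_nonneg_left this (by positivity)
  have hs := Filter.high_scores hμ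
  choose J hJ1 hJ2 using hs
  have hJt : Tendsto J atTop atTop := tendsto_atTop_mono hJ1 tendsto_id
  have hεt : Tendsto (fun k => (1 / 2 : ℝ) ^ (J k)) atTop (𝓝 0) :=
    (tendsto_pow_atTop_nhds_zero_of_lt_one (by norm_num) (by norm_num)).comp hJt
  refine ⟨fun k => (1 / 2) ^ (J k), fun k => F ((1 / 2) ^ (J k)), fun k => by positivity, hεt,
    fun k => ?_, ?_, ?_, fun k => rfl⟩
  · exact lt_of_lt_of_le (by positivity)
      (hFlow ((1 / 2) ^ (J k)) (by positivity) (pow_le_one₀ (by norm_num) (by norm_num)))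
  · have hq : ∀ e : E3, Tendsto (fun k => ‖G ((1 / 2 : ℝ) ^ (J k) • e)‖ * ‖e‖) atTop (𝓝 0) := by
      intro e
      have h1 : Tendsto (fun k => (1 / 2 : ℝ) ^ (J k) • e) atTop (𝓝 0) := by
        simpa using hεt.smul_const e
      simpa using ((hG.comp h1).norm).mul_const ‖e‖
    have hb : ∀ (t : ℝ) (e : E3), 0 < t → Nh (t • e) / t ≤ ‖G (t • e)‖ * ‖e‖ := by
      intro t e ht
      have h1 := hsub (t • e) 0
      rw [h0, zero_sub, inner_neg_right, inner_smul_right] at h1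
      rw [div_le_iff₀ ht]
      have h2 := real_inner_le_norm (G (t • e)) e
      have h3 := mul_le_mul_of_nonneg_left h2 ht.le
      linarith
    have hsum := (((hq e1).add (hq (-e1))).add (hq e2)).add (hq (-e2))
    simp only [add_zero] at hsum
    refine squeeze_zero (fun k => ?_) (fun k => ?_) hsum
    · have : 0 ≤ F ((1 / 2) ^ (J k)) := by
        simp only [F]
        linarith [hpos ((1 / 2 : ℝ) ^ (J k) • e1), hpos ((1 / 2 : ℝ) ^ (J k) • (-e1)),
          hpos ((1 / 2 : ℝ) ^ (J k) • e2), hpos ((1 / 2 : ℝ) ^ (J k) • (-e2))]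
      positivity
    · simp only [F, add_div]
      have ht : (0 : ℝ) < (1 / 2) ^ (J k) := by positivity
      linarith [hb _ e1 ht, hb _ (-e1) ht, hb _ e2 ht, hb _ (-e2) ht]
  · intro R
    obtain ⟨i, hi⟩ := pow_unbounded_of_one_lt (2 * R) (by norm_num : (1 : ℝ) < 2)
    refine ⟨8 ^ i, ?_⟩
    filter_upwards [hJt.eventually_ge_atTop i] with k hk η hη hηR
    have hexp := orthoexp hy0 he1 he2 hy1 hy2 h12 hη
    have hx : |⟪e1, η⟫| ≤ R := (abs_real_inner_le_norm _ _).trans (by rw [he1, one_mul]; exact hηR)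
    have hy : |⟪e2, η⟫| ≤ R := (abs_real_inner_le_norm _ _).trans (by rw [he2, one_mul]; exact hηR)
    set t : ℝ := (1 / 2) ^ (J k) with ht
    have htp : 0 < t := by positivity
    have hT : (1 / 2 : ℝ) ^ (J k - i) = 2 ^ i * t := by
      rw [ht]
      have : (1 / 2 : ℝ) ^ (J k) = (1 / 2) ^ (J k - i) * (1 / 2) ^ i := by
        rw [← pow_add, Nat.sub_add_cancel hk]
      rw [this, mul_comm, mul_assoc, ← mul_pow]; norm_num
    have hF8 : F (2 ^ i * t) ≤ 8 ^ i * F t := by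
      rcases Nat.eq_zero_or_pos i with h | h
      · rw [h]; simp
      have := (hJ2 k (J k - i) (by omega)).le
      simp only [μ] at this
      rw [hT, ← ht] at this
      have h8 : (8 : ℝ) ^ (J k) = 8 ^ (J k - i) * 8 ^ i := by rw [← pow_add, Nat.sub_add_cancel hk]
      rw [h8, mul_assoc] at this
      exact le_of_mul_le_mul_left this (by positivity)
    refine le_trans ?_ hF8
    have hmid := cvx_of_sub hsub ((2 * t * ⟪e1, η⟫) • e1) ((2 * t * ⟪e2, η⟫) • e2)
      (s := 1 / 2) (t := 1 / 2) (by norm_num) (by norm_num) (by norm_num)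
    have heq : (1 / 2 : ℝ) • ((2 * t * ⟪e1, η⟫) • e1) + (1 / 2 : ℝ) • ((2 * t * ⟪e2, η⟫) • e2) = t • η := by
      conv_rhs => rw [hexp]
      module
    rw [heq] at hmid
    have hb : ∀ x : ℝ, |x| ≤ R → |2 * t * x| ≤ 2 ^ i * t := by
      intro x hx
      rw [abs_mul, abs_of_pos (by positivity : 0 < 2 * t)]
      have h1 : |x| * t ≤ R * t := by gcongr
      have h2 : 2 * R * t ≤ 2 ^ i * t := by gcongr
      linarith
    have b1 := hFray _ _ e1 (hb _ hx)
    have b2 := hFray _ _ e2 (hb _ hy)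
    simp only [F]
    linarith [hpos ((2 ^ i * t) • e1), hpos ((2 ^ i * t) • (-e1)),
          hpos ((2 ^ i * t) • e2), hpos ((2 ^ i * t) • (-e2))]

namespace Ctx
variable {K L : Set E3} {p a : E3 → E3} {r : ℝ} (c : Ctx K L p a r)
include c

set_option maxHeartbeats 1000000 in
lemma blowup {y0 c0 : E3} {ρ : ℝ} (hy0 : ‖y0‖ = 1) (hρ : 0 < ρ) (hball : closedBall c0 ρ ⊆ L)
    (hp0 : p y0 = c0 + ρ • y0) :
    ∃ N : E3 → ℝ, N 0 = 0 ∧ (∀ η : E3, ⟪y0, η⟫ = 0 → 0 ≤ N η) ∧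
      (∃ e : E3, ⟪y0, e⟫ = 0 ∧ 0 < N e) ∧
      ∀ z ∈ frontier K, ⟪y0, z⟫ = ⟪y0, p y0⟫ → ∀ η η' : E3, ⟪y0, η⟫ = 0 → ⟪y0, η'⟫ = 0 →
        ⟪η - η', z - p y0⟫ = 0 → ∃ g g' : E3, ⟪y0, g⟫ = 0 ∧ ⟪y0, g'⟫ = 0 ∧
        (∀ ζ : E3, ⟪y0, ζ⟫ = 0 → N η + ⟪g, ζ - η⟫ ≤ N ζ) ∧
        (∀ ζ : E3, ⟪y0, ζ⟫ = 0 → N η' + ⟪g', ζ - η'⟫ ≤ N ζ) ∧ ⟪a z, g - g'⟫ = 0 := by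
  have hy00 : y0 ≠ 0 := by rintro rfl; simp at hy0
  have hyy : ⟪y0, y0⟫ = 1 := by rw [real_inner_self_eq_norm_sq, hy0]; norm_num
  obtain ⟨e1, he1, hy1, -⟩ := exists_orth y0 y0
  obtain ⟨e2, he2, hy2, h12⟩ := exists_orth y0 e1
  let Nh : E3 → ℝ := fun v => ⟪y0 + v, p (y0 + v)⟫ - ⟪y0, p y0⟫ - ⟪p y0, v⟫
  let G : E3 → E3 := fun v => p (y0 + v) - p y0
  have h0 : Nh 0 = 0 := by simp [Nh]
  have hpos : ∀ v, 0 ≤ Nh v := by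
    intro v
    have := c.hmax (y0 + v) y0
    simp only [Nh]
    rw [inner_add_left] at this
    linarith [real_inner_comm (p y0) v]
  have hsub : ∀ v w : E3, Nh v + ⟪G v, w - v⟫ ≤ Nh w := by
    intro v w
    have h := c.hmax (y0 + w) (y0 + v)
    have e : ⟪y0 + w, p (y0 + v)⟫ = ⟪y0 + v, p (y0 + v)⟫ + ⟪p (y0 + v), w - v⟫ := by
      rw [real_inner_comm (w - v), ← inner_add_left]; congr 1; abel
    simp only [Nh, G]
    rw [inner_sub_left, inner_sub_right (p y0)]
    linarith
  have hG : Tendsto G (𝓝 0) (𝓝 0) := by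
    have h1 : Tendsto (fun v : E3 => y0 + v) (𝓝 0) (𝓝 y0) := by
      simpa using (tendsto_const_nhds (x := y0)).add (tendsto_id (α := E3) (x := 𝓝 0))
    simpa using (c.p_tendsto hy00 h1).sub (tendsto_const_nhds (x := p y0))
  have hlow : ∀ v : E3, ⟪y0, v⟫ = 0 → ‖v‖ ≤ 1 → ρ / 3 * ‖v‖ ^ 2 ≤ Nh v := by
    intro v hv hv1
    have hn : ‖y0 + v‖ ^ 2 = 1 + ‖v‖ ^ 2 := by
      rw [norm_add_sq_real, hy0, hv]; ring
    have hnp : 0 < ‖y0 + v‖ := by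
      by_contra h
      have : ‖y0 + v‖ = 0 := le_antisymm (not_lt.1 h) (norm_nonneg _)
      rw [this] at hn; nlinarith [sq_nonneg ‖v‖]
    have hge : 1 + ‖v‖ ^ 2 / 3 ≤ ‖y0 + v‖ := by
      refine le_of_sq_le_sq ?_ hnp.le
      rw [hn]
      have : ‖v‖ ^ 2 ≤ 1 := pow_le_one₀ (norm_nonneg _) hv1
      nlinarith [sq_nonneg ‖v‖]
    have hm := c.pmax (y0 + v) (c0 + (ρ / ‖y0 + v‖) • (y0 + v)) (hball (by
      rw [mem_closedBall, dist_eq_norm, add_sub_cancel_left, norm_smul, norm_div, norm_norm,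
        div_mul_cancel₀ _ hnp.ne', Real.norm_of_nonneg hρ.le]))
    rw [inner_add_right, inner_smul_right, real_inner_self_eq_norm_sq] at hm
    have e1 : ρ / ‖y0 + v‖ * ‖y0 + v‖ ^ 2 = ρ * ‖y0 + v‖ := by field_simp
    have e2 : ⟪y0, p y0⟫ = ⟪y0, c0⟫ + ρ := by
      rw [hp0, inner_add_right, inner_smul_right, hyy, mul_one]
    have e3 : ⟪p y0, v⟫ = ⟪v, c0⟫ := by
      rw [hp0, inner_add_left, real_inner_smul_left, hv, real_inner_comm]; ring
    simp only [Nh]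
    rw [e1, inner_add_left] at hm
    rw [e2, e3]
    have := mul_le_mul_of_nonneg_left hge hρ.le
    linarith
  obtain ⟨ε, lam, hε, hεt, hlam, hle, hbd, hsum⟩ := extract he1 he2 hy1 hy2 h12 hy00 h0 hpos hsub hG
    (by positivity : 0 < ρ / 3) hlow
  let U : Ultrafilter ℕ := hyperfilter ℕ
  have hU : (U : Filter ℕ) ≤ atTop := by
    rw [← Nat.cofinite_eq_atTop]; exact hyperfilter_le_cofinite
  let Nk : ℕ → E3 → ℝ := fun k v => Nh (ε k • v) / lam k
  let gk : ℕ → E3 → E3 := fun k v => (ε k / lam k) • G (ε k • v)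
  have hNk0 : ∀ k v, 0 ≤ Nk k v := fun k v => div_nonneg (hpos _) (hlam k).le
  have hNkz : ∀ k, Nk k 0 = 0 := fun k => by simp [Nk, h0]
  have hsubk : ∀ k (v w : E3), Nk k v + ⟪gk k v, w - v⟫ ≤ Nk k w := by
    intro k v w
    have h := hsub (ε k • v) (ε k • w)
    simp only [Nk, gk]
    rw [← smul_sub, inner_smul_right] at h
    rw [real_inner_smul_left, le_div_iff₀ (hlam k), add_mul, div_mul_cancel₀ _ (hlam k).ne']
    have : ε k / lam k * ⟪G (ε k • v), w - v⟫ * lam k = ε k * ⟪G (ε k • v), w - v⟫ := by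
      have := (hlam k).ne'
      field_simp
    rw [this]; exact h
  have hgy : ∀ k v, ⟪y0, gk k v⟫ = ε k * (Nk k v - ⟪gk k v, v⟫) := by
    intro k v
    have hl := (hlam k).ne'
    simp only [Nk, gk, Nh, G]
    have : ⟪y0 + ε k • v, p (y0 + ε k • v)⟫ = ⟪y0, p (y0 + ε k • v)⟫ + ε k * ⟪p (y0 + ε k • v), v⟫ := by
      rw [inner_add_left, real_inner_smul_left, real_inner_comm v]
    rw [this, inner_smul_right, inner_sub_right, real_inner_smul_left, inner_sub_left,
      inner_smul_right]
    field_simp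
    ring
  have hNkd : ∀ k v, Nk k v = Nh (ε k • v) / lam k := fun _ _ => rfl
  have hgkd : ∀ k v, gk k v = (ε k / lam k) • G (ε k • v) := fun _ _ => rfl
  clear_value Nk gk
  have hbddk : ∀ R : ℝ, ∃ C : ℝ, ∀ᶠ k in (U : Filter ℕ), ∀ η : E3, ⟪y0, η⟫ = 0 → ‖η‖ ≤ R →
      Nk k η ≤ C ∧ ‖gk k η‖ ≤ C := by
    intro R
    obtain ⟨C, hC⟩ := hbd (2 * |R| + 1)
    refine ⟨4 * C, ?_⟩
    filter_upwards [hU hC, hU (hεt.eventually_le_const (by norm_num : (0 : ℝ) < 1))] with k hk hk1 η hη hηR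
    have hRa := le_abs_self R
    have hR0 := abs_nonneg R
    have hN : ∀ v : E3, ⟪y0, v⟫ = 0 → ‖v‖ ≤ 2 * |R| + 1 → Nk k v ≤ C := by
      intro v h1 h2
      rw [hNkd, div_le_iff₀ (hlam k)]
      exact hk v h1 h2
    have hNη := hN η hη (by linarith)
    have hC0 : 0 ≤ C := (hNk0 k η).trans hNη
    have hu : ∀ u : E3, ⟪y0, u⟫ = 0 → ‖u‖ = 1 → |⟪u, gk k η⟫| ≤ C := by
      intro u hu1 hu2
      have i1 := hsubk k η (η + u)
      have i2 := hsubk k η (η - u)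
      have j1 := hN (η + u) (by rw [inner_add_right, hη, hu1, add_zero])
        ((norm_add_le _ _).trans (by rw [hu2]; linarith))
      have j2 := hN (η - u) (by rw [inner_sub_right, hη, hu1, sub_zero])
        ((norm_sub_le _ _).trans (by rw [hu2]; linarith))
      rw [add_sub_cancel_left] at i1
      rw [sub_sub_cancel_left, inner_neg_right] at i2
      rw [real_inner_comm, abs_le]
      constructor <;> linarith [hNk0 k η]
    have hgη1 : Nk k η ≤ ⟪gk k η, η⟫ := by
      have := hsubk k η 0
      rw [hNkz, zero_sub, inner_neg_right] at this
      linarith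
    have hgη2 : ⟪gk k η, η⟫ ≤ C := by
      have i1 := hsubk k η (η + η)
      rw [add_sub_cancel_left] at i1
      have j1 := hN (η + η) (by rw [inner_add_right, hη, add_zero])
        ((norm_add_le _ _).trans (by linarith))
      linarith [hNk0 k η]
    have hy : |⟪y0, gk k η⟫| ≤ C := by
      rw [hgy, abs_mul, abs_of_pos (hε k)]
      have : |Nk k η - ⟪gk k η, η⟫| ≤ C := by
        rw [abs_le]; constructor <;> linarith [hNk0 k η]
      calc ε k * |Nk k η - ⟪gk k η, η⟫| ≤ 1 * |Nk k η - ⟪gk k η, η⟫| := by gcongr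
        _ ≤ C := by linarith
    refine ⟨by linarith, ?_⟩
    have hexp := orthoexp (D := gk k η - ⟪y0, gk k η⟫ • y0) hy00 he1 he2 hy1 hy2 h12 (by
      rw [inner_sub_right, inner_smul_right, hyy]; ring)
    have e1y : ⟪e1, gk k η - ⟪y0, gk k η⟫ • y0⟫ = ⟪e1, gk k η⟫ := by
      rw [inner_sub_right, inner_smul_right, real_inner_comm y0 e1, hy1]; ring
    have e2y : ⟪e2, gk k η - ⟪y0, gk k η⟫ • y0⟫ = ⟪e2, gk k η⟫ := by
      rw [inner_sub_right, inner_smul_right, real_inner_comm y0 e2, hy2]; ring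
    rw [e1y, e2y] at hexp
    have hg : gk k η = ⟪y0, gk k η⟫ • y0 + (⟪e1, gk k η⟫ • e1 + ⟪e2, gk k η⟫ • e2) := by
      rw [← hexp]; abel
    have hn1 : ‖⟪y0, gk k η⟫ • y0‖ ≤ C := by rw [norm_smul, hy0, mul_one]; exact hy
    have hn2 : ‖⟪e1, gk k η⟫ • e1‖ ≤ C := by rw [norm_smul, he1, mul_one]; exact hu e1 hy1 he1
    have hn3 : ‖⟪e2, gk k η⟫ • e2‖ ≤ C := by rw [norm_smul, he2, mul_one]; exact hu e2 hy2 he2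
    calc ‖gk k η‖ = ‖⟪y0, gk k η⟫ • y0 + (⟪e1, gk k η⟫ • e1 + ⟪e2, gk k η⟫ • e2)‖ := by rw [← hg]
      _ ≤ ‖⟪y0, gk k η⟫ • y0‖ + ‖⟪e1, gk k η⟫ • e1 + ⟪e2, gk k η⟫ • e2‖ := norm_add_le _ _
      _ ≤ ‖⟪y0, gk k η⟫ • y0‖ + (‖⟪e1, gk k η⟫ • e1‖ + ‖⟪e2, gk k η⟫ • e2‖) := by
        gcongr; exact norm_add_le _ _
      _ ≤ 4 * C := by linarith
  have hNlim : ∀ (ηk : ℕ → E3) (R : ℝ), (∀ᶠ k in (U : Filter ℕ), ⟪y0, ηk k⟫ = 0 ∧ ‖ηk k‖ ≤ R) →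
      (∃ x : ℝ, Tendsto (fun k => Nk k (ηk k)) U (𝓝 x)) ∧
      ∃ g : E3, Tendsto (fun k => gk k (ηk k)) U (𝓝 g) := by
    intro ηk R h
    obtain ⟨C, hC⟩ := hbddk R
    constructor
    · obtain ⟨x, -, hx⟩ := ulim U (isCompact_Icc (a := (0 : ℝ)) (b := C)) (fun k => Nk k (ηk k)) (by
        filter_upwards [h, hC] with k h1 h2
        exact ⟨hNk0 _ _, (h2 _ h1.1 h1.2).1⟩)
      exact ⟨x, hx⟩
    · obtain ⟨x, -, hx⟩ := ulim U (isCompact_closedBall (0 : E3) C) (fun k => gk k (ηk k)) (by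
        filter_upwards [h, hC] with k h1 h2
        rw [mem_closedBall_zero_iff]
        exact (h2 _ h1.1 h1.2).2)
      exact ⟨x, hx⟩
  have hNex : ∀ η : E3, ∃ x : ℝ, ⟪y0, η⟫ = 0 → Tendsto (fun k => Nk k η) U (𝓝 x) := by
    intro η
    by_cases h : ⟪y0, η⟫ = 0
    · obtain ⟨x, hx⟩ := (hNlim (fun _ => η) ‖η‖ (Eventually.of_forall fun _ => ⟨h, le_rfl⟩)).1
      exact ⟨x, fun _ => hx⟩
    · exact ⟨0, fun h' => (h h').elim⟩
  choose N hN using hNex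
  have hεU : Tendsto ε U (𝓝 0) := hεt.mono_left hU
  have hgt : ∀ (ηk : ℕ → E3) (η : E3), (∀ᶠ k in (U : Filter ℕ), ⟪y0, ηk k⟫ = 0) → ⟪y0, η⟫ = 0 →
      Tendsto ηk U (𝓝 η) → ∃ g : E3, Tendsto (fun k => gk k (ηk k)) U (𝓝 g) ∧ ⟪y0, g⟫ = 0 ∧
        ∀ ζ : E3, ⟪y0, ζ⟫ = 0 → N η + ⟪g, ζ - η⟫ ≤ N ζ := by
    intro ηk η h1 hη ht
    obtain ⟨⟨x, hx⟩, ⟨g, hg⟩⟩ := hNlim ηk (‖η‖ + 1) (by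
      filter_upwards [h1, ht.norm.eventually_le_const (by linarith : ‖η‖ < ‖η‖ + 1)] with k i1 i2
      exact ⟨i1, i2⟩)
    obtain ⟨-, ⟨g1, hg1⟩⟩ := hNlim (fun _ => η) ‖η‖ (Eventually.of_forall fun _ => ⟨hη, le_rfl⟩)
    refine ⟨g, hg, ?_, fun ζ hζ => ?_⟩
    · refine tendsto_nhds_unique ((tendsto_const_nhds (x := y0)).inner hg) ?_
      have := hεU.mul (hx.sub (hg.inner ht))
      rw [zero_mul] at this
      exact this.congr fun k => (hgy k (ηk k)).symm
    · have t1 : Tendsto (fun k => Nk k η + ⟪gk k η, ηk k - η⟫ + ⟪gk k (ηk k), ζ - ηk k⟫) U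
          (𝓝 (N η + ⟪g1, η - η⟫ + ⟪g, ζ - η⟫)) :=
        ((hN η hη).add (hg1.inner (ht.sub tendsto_const_nhds))).add
          (hg.inner (tendsto_const_nhds.sub ht))
      rw [sub_self, inner_zero_right, add_zero] at t1
      refine le_of_tendsto_of_tendsto' t1 (hN ζ hζ) fun k => ?_
      linarith [hsubk k η (ηk k), hsubk k (ηk k) ζ]
  have hN0 : N 0 = 0 := by
    refine tendsto_nhds_unique (hN 0 (inner_zero_right _)) ?_
    exact tendsto_const_nhds.congr fun k => (hNkz k).symm
  have hNpos : ∀ η : E3, ⟪y0, η⟫ = 0 → 0 ≤ N η := fun η hη =>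
    ge_of_tendsto' (hN η hη) fun k => hNk0 k η
  have hy1' : ⟪y0, -e1⟫ = 0 := by rw [inner_neg_right, hy1, neg_zero]
  have hy2' : ⟪y0, -e2⟫ = 0 := by rw [inner_neg_right, hy2, neg_zero]
  have hNsum : N e1 + N (-e1) + N e2 + N (-e2) = 1 := by
    refine tendsto_nhds_unique ((((hN e1 hy1).add (hN _ hy1')).add (hN e2 hy2)).add (hN _ hy2')) ?_
    refine tendsto_const_nhds.congr fun k => ?_
    rw [hNkd, hNkd, hNkd, hNkd, ← add_div, ← add_div, ← add_div, hsum, div_self (hlam k).ne']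
  refine ⟨N, hN0, hNpos, ?_, ?_⟩
  · by_contra hcon
    push Not at hcon
    linarith [hcon e1 hy1, hcon _ hy1', hcon e2 hy2, hcon _ hy2']
  intro z hz hzy η η' hη hη' hηη
  obtain ⟨Z, hZ⟩ : ∃ Z : E3, Z = z - p y0 := ⟨_, rfl⟩
  rw [← hZ] at hηη
  have hzZ : p y0 + (1 : ℝ) • Z = z := by rw [hZ]; simp
  have hyZ : ⟪y0, Z⟫ = 0 := by rw [hZ, inner_sub_right, hzy, sub_self]
  have hZ0 : Z ≠ 0 := by
    intro h
    rw [h, smul_zero, add_zero] at hzZ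
    exact c.frK_notL hz (hzZ ▸ c.pL y0)
  have hqint : ∀ y, p y ∈ interior K := fun y => c.LK (c.pL y)
  have htau : tau K (p y0) Z = 1 :=
    (c.tau_unique (hqint y0) hZ0 one_pos (by rw [hzZ]; exact hz)).symm
  have hyt : ∀ (v : ℕ → E3) (v0 : E3), Tendsto v U (𝓝 v0) →
      Tendsto (fun k => y0 + ε k • v k) U (𝓝 y0) := by
    intro v v0 h
    simpa using (tendsto_const_nhds (x := y0)).add (hεU.smul h)
  obtain ⟨yk, hyk⟩ : ∃ yk : ℕ → E3, ∀ k, yk k = y0 + ε k • η := ⟨_, fun _ => rfl⟩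
  have hykt : Tendsto yk U (𝓝 y0) := by
    refine (hyt (fun _ => η) η tendsto_const_nhds).congr fun k => (hyk k).symm
  have hqt := c.p_tendsto hy00 hykt
  obtain ⟨Zk, hZk⟩ : ∃ Zk : ℕ → E3, ∀ k, Zk k = Z - (⟪yk k, Z⟫ / ⟪yk k, yk k⟫) • yk k :=
    ⟨_, fun _ => rfl⟩
  have hZkt : Tendsto Zk U (𝓝 Z) := by
    have h1 : Tendsto (fun k => Z - (⟪yk k, Z⟫ / ⟪yk k, yk k⟫) • yk k) U
        (𝓝 (Z - (⟪y0, Z⟫ / ⟪y0, y0⟫) • y0)) :=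
      tendsto_const_nhds.sub (((hykt.inner tendsto_const_nhds).div (hykt.inner hykt)
        (by rw [hyy]; exact one_ne_zero)).smul hykt)
    rw [hyZ, zero_div, zero_smul, sub_zero] at h1
    exact h1.congr fun k => (hZk k).symm
  obtain ⟨zk, hzk⟩ : ∃ zk : ℕ → E3, ∀ k, zk k = p (yk k) + tau K (p (yk k)) (Zk k) • Zk k :=
    ⟨_, fun _ => rfl⟩
  have hzkt : Tendsto zk U (𝓝 z) := by
    have h1 := hqt.add ((c.tau_tendsto (hqint y0) hZ0 hqt hZkt).smul hZkt)
    rw [htau, hzZ] at h1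
    exact h1.congr fun k => (hzk k).symm
  have hzkK : ∀ᶠ k in (U : Filter ℕ), zk k ∈ frontier K := by
    filter_upwards [hZkt.eventually (isOpen_ne.mem_nhds hZ0)] with k hk
    rw [hzk]; exact (c.tau_spec (hqint _) hk).2
  have hyk0 : ∀ᶠ k in (U : Filter ℕ), yk k ≠ 0 := hykt.eventually (isOpen_ne.mem_nhds hy00)
  have hΓk : ∀ᶠ k in (U : Filter ℕ), ⟪yk k, zk k⟫ = ⟪yk k, p (yk k)⟫ := by
    filter_upwards [hyk0] with k hk
    have h1 : ⟪yk k, yk k⟫ ≠ 0 := inner_self_ne_zero.2 hk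
    rw [hzk, inner_add_right, inner_smul_right, hZk, inner_sub_right, inner_smul_right,
      div_mul_cancel₀ _ h1]
    ring
  have haz := c.a_tendsto hz hzkK hzkt
  have hH : ∀ᶠ k in (U : Filter ℕ), ∀ v : E3,
      ⟪y0 + ε k • v, zk k⟫ - ⟪y0 + ε k • v, p (y0 + ε k • v)⟫ =
        ε k * (⟪v - η, zk k - p y0⟫ - lam k / ε k * (Nk k v - Nk k η)) := by
    filter_upwards [hΓk] with k hk v
    have hl := (hlam k).ne'
    have hε' := (hε k).ne'
    have e1 : ε k * (⟪v - η, zk k - p y0⟫ - lam k / ε k * (Nk k v - Nk k η)) =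
        ε k * ⟪v - η, zk k - p y0⟫ - (Nh (ε k • v) - Nh (ε k • η)) := by
      rw [hNkd, hNkd]; field_simp
    rw [e1]
    simp only [Nh]
    rw [hyk] at hk
    rw [← hk]
    generalize ⟪y0 + ε k • v, p (y0 + ε k • v)⟫ = X
    simp only [inner_smul_right, inner_sub_left, inner_sub_right,
      real_inner_comm v (p y0), real_inner_comm η (p y0), inner_add_left, real_inner_smul_left]
    ring
  have hZZ : 0 < ⟪Z, Z⟫ := real_inner_self_pos.2 hZ0
  have hyv : ∀ s : ℝ, ⟪y0, η' + s • Z⟫ = 0 := by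
    intro s; rw [inner_add_right, inner_smul_right, hη', hyZ]; ring
  have hlim : ∀ s : ℝ, Tendsto (fun k => ⟪η' + s • Z - η, zk k - p y0⟫ -
      lam k / ε k * (Nk k (η' + s • Z) - Nk k η)) U (𝓝 (s * ⟪Z, Z⟫)) := by
    intro s
    have h1 := ((tendsto_const_nhds (x := η' + s • Z - η)).inner
      (hzkt.sub (tendsto_const_nhds (x := p y0)))).sub
      ((hle.mono_left hU).mul ((hN _ (hyv s)).sub (hN η hη)))
    rw [zero_mul, sub_zero, ← hZ] at h1
    have e : ⟪η' + s • Z - η, Z⟫ = s * ⟪Z, Z⟫ := by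
      have : η' + s • Z - η = s • Z - (η - η') := by abel
      rw [this, inner_sub_left, real_inner_smul_left, hηη, sub_zero]
    rwa [e] at h1
  obtain ⟨s, hst, hsroot⟩ := choose_small hU (P := fun k s =>
      ⟪y0 + ε k • (η' + s • Z), zk k⟫ - ⟪y0 + ε k • (η' + s • Z), p (y0 + ε k • (η' + s • Z))⟫ = 0) (by
    intro δ hδ
    filter_upwards [hH, (hlim δ).eventually_const_lt (mul_pos hδ hZZ),
      (hlim (-δ)).eventually_lt_const (by rw [neg_mul]; exact neg_neg_of_pos (mul_pos hδ hZZ))]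
      with k h1 h2 h3
    have hcont : Continuous (fun s : ℝ => ⟪y0 + ε k • (η' + s • Z), zk k⟫ -
        ⟪y0 + ε k • (η' + s • Z), p (y0 + ε k • (η' + s • Z))⟫) := by
      have h1 : Continuous (fun s : ℝ => y0 + ε k • (η' + s • Z)) := by fun_prop
      exact (h1.inner continuous_const).sub (c.h_cont.comp h1)
    obtain ⟨s, hs, hs'⟩ := intermediate_value_Icc (by linarith : -δ ≤ δ) hcont.continuousOn
      (show (0 : ℝ) ∈ _ from ⟨by
        simp only [h1]
        exact (mul_neg_of_pos_of_neg (hε k) h3).le, by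
        simp only [h1]
        exact (mul_pos (hε k) h2).le⟩)
    exact ⟨s, abs_le.2 hs, hs'⟩)
  have hvt : Tendsto (fun k => η' + s k • Z) U (𝓝 η') := by
    simpa using (tendsto_const_nhds (x := η')).add (hst.smul_const Z)
  obtain ⟨g, hg1, hg2, hg3⟩ := hgt (fun _ => η) η (Eventually.of_forall fun _ => hη) hη
    tendsto_const_nhds
  obtain ⟨g', hg1', hg2', hg3'⟩ := hgt (fun k => η' + s k • Z) η'
    (Eventually.of_forall fun k => hyv (s k)) hη' hvt
  refine ⟨g, g', hg2, hg2', hg3, hg3', ?_⟩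
  refine tendsto_nhds_unique (haz.inner (hg1.sub hg1')) ?_
  refine tendsto_const_nhds.congr' ?_
  filter_upwards [hzkK, hyk0, hΓk, hsroot, (hyt _ _ hvt).eventually (isOpen_ne.mem_nhds hy00)]
    with k h1 h2 h3 h4 h5
  have i1 := c.ha _ h1 _ h2 h3
  have i2 := c.ha _ h1 _ h5 (sub_eq_zero.1 h4)
  rw [hgkd, hgkd, ← smul_sub, inner_smul_right]
  simp only [G]
  rw [sub_sub_sub_cancel_right, ← hyk]
  have : p (yk k) - p (y0 + ε k • (η' + s k • Z)) =
    (p (yk k) - zk k) - (p (y0 + ε k • (η' + s k • Z)) - zk k) := by abel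
  rw [this, inner_sub_right, i1, i2]
  ring

end Ctx

theorem common_sub (F G : ℝ → ℝ)
    (h : ∀ t, ∃ s, ∀ t', F t + s * (t' - t) ≤ F t' ∧ G t + s * (t' - t) ≤ G t') (t : ℝ) :
    F t - G t = F 0 - G 0 := by
  choose s hs using h
  have key : ∀ x y, |(F y - G y) - (F x - G x)| ≤ (s y - s x) * (y - x) := by
    intro x y
    have h1 := hs x y
    have h2 := hs y x
    rw [abs_le]
    constructor <;> nlinarith [h1.1, h1.2, h2.1, h2.2]
  have bd : ∀ n : ℕ, ∀ i : ℕ, |(F (i * (t / n)) - G (i * (t / n))) - (F 0 - G 0)|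
      ≤ (s (i * (t / n)) - s 0) * (t / n) := by
    intro n i
    induction i with
    | zero => simp
    | succ i ih =>
      have h1 := key (i * (t / n)) ((i + 1 : ℕ) * (t / n))
      have e : ((i + 1 : ℕ) : ℝ) * (t / n) - i * (t / n) = t / n := by push_cast; ring
      rw [e] at h1
      have h2 := abs_sub_le (F ((i + 1 : ℕ) * (t / n)) - G ((i + 1 : ℕ) * (t / n)))
        (F (i * (t / n)) - G (i * (t / n))) (F 0 - G 0)
      linarith
  have fin : ∀ n : ℕ, |(F t - G t) - (F 0 - G 0)| ≤ (s t - s 0) * (t / ((n : ℝ) + 1)) := by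
    intro n
    have h1 := bd (n + 1) (n + 1)
    have e : ((n + 1 : ℕ) : ℝ) * (t / ((n + 1 : ℕ) : ℝ)) = t := by
      field_simp
    rw [e] at h1
    push_cast at h1
    exact h1
  have lim : Tendsto (fun n : ℕ => (s t - s 0) * (t / ((n : ℝ) + 1))) atTop (𝓝 0) := by
    have h1 := (tendsto_one_div_add_atTop_nhds_zero_nat (𝕜 := ℝ)).const_mul ((s t - s 0) * t)
    rw [mul_zero] at h1
    exact h1.congr fun n => by ring
  have := ge_of_tendsto' lim fin
  have h3 := abs_nonpos_iff.1 this
  linarith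

theorem cont_of_sub (u : ℝ → ℝ) (h : ∀ t, ∃ s, ∀ t', u t + s * (t' - t) ≤ u t') :
    Continuous u := by
  have hc : ConvexOn ℝ univ u := by
    refine ⟨convex_univ, fun x _ y _ α β hα hβ hαβ => ?_⟩
    obtain ⟨s, hs⟩ := h (α • x + β • y)
    have h1 := mul_le_mul_of_nonneg_left (hs x) hα
    have h2 := mul_le_mul_of_nonneg_left (hs y) hβ
    simp only [smul_eq_mul] at *
    have e : u (α * x + β * y) = α * (u (α * x + β * y) + s * (x - (α * x + β * y))) +
      β * (u (α * x + β * y) + s * (y - (α * x + β * y))) := by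
      have : β = 1 - α := by linarith
      subst this
      ring
    linarith
  exact continuousOn_univ.1 (hc.continuousOn isOpen_univ)

theorem add_lin (f : ℝ → ℝ) (hf : Continuous f) (ha : ∀ x y, f (x + y) = f x + f y) (x : ℝ) :
    f x = x * f 1 := by
  have := map_real_smul (AddMonoidHom.mk' f ha) (by exact hf) x 1
  simpa using this

theorem frechet_quad (u : ℝ → ℝ) (hu : Continuous u) (h0 : u 0 = 0) (hpos : ∀ t, 0 ≤ u t)
    (h : ∀ x σ τ, u (x + σ + τ) - u (x + σ) - u (x + τ) + u x = u (σ + τ) - u σ - u τ) :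
    ∃ α, 0 ≤ α ∧ ∀ t, u t = α * t ^ 2 := by
  have hD : ∀ τ σ, u (σ + τ) - u σ - u τ = σ * (u (1 + τ) - u 1 - u τ) := by
    intro τ σ
    refine add_lin (fun σ => u (σ + τ) - u σ - u τ) (by fun_prop) ?_ σ
    intro x y
    have := h x y τ
    linarith
  have hD1 : ∀ τ, u (1 + τ) - u 1 - u τ = τ * (u (1 + 1) - u 1 - u 1) := by
    intro τ
    have := hD 1 τ
    rw [add_comm τ 1] at this
    linarith
  obtain ⟨c, hc⟩ : ∃ c, c = u (1 + 1) - u 1 - u 1 := ⟨_, rfl⟩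
  have hl := add_lin (fun t => u t - c / 2 * t ^ 2) (by fun_prop) (by
    intro x y
    have := hD y x
    rw [hD1 y, ← hc] at this
    linarith)
  obtain ⟨d, hd⟩ : ∃ d, d = u 1 - c / 2 * 1 ^ 2 := ⟨_, rfl⟩
  have hu' : ∀ t, u t = c / 2 * t ^ 2 + d * t := by
    intro t; have := hl t; simp only [← hd] at this; linarith
  have hc0 : 0 ≤ c := by
    have h1 := hpos 1; have h2 := hpos (-1)
    rw [hu'] at h1 h2; linarith
  have hd0 : d = 0 := by
    by_contra hne
    have h1 := hpos (-d / (c + 1))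
    rw [hu'] at h1
    have e : c / 2 * (-d / (c + 1)) ^ 2 + d * (-d / (c + 1)) = - (d ^ 2 * (c / 2 + 1)) / (c + 1) ^ 2 := by
      field_simp; ring
    rw [e] at h1
    have h2 : 0 < d ^ 2 * (c / 2 + 1) / (c + 1) ^ 2 := by positivity
    rw [neg_div] at h1
    linarith
  exact ⟨c / 2, by linarith, fun t => by rw [hu', hd0]; ring⟩

/-- the subgradient property at direction pair `(a, Z)` -/
def SubP (N : E3 → ℝ) (y0 a Z : E3) : Prop :=
  ∀ η η' : E3, ⟪y0, η⟫ = 0 → ⟪y0, η'⟫ = 0 → ⟪η - η', Z⟫ = 0 → ∃ g g' : E3, ⟪y0, g⟫ = 0 ∧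
    ⟪y0, g'⟫ = 0 ∧ (∀ ζ, ⟪y0, ζ⟫ = 0 → N η + ⟪g, ζ - η⟫ ≤ N ζ) ∧
    (∀ ζ, ⟪y0, ζ⟫ = 0 → N η' + ⟪g', ζ - η'⟫ ≤ N ζ) ∧ ⟪a, g - g'⟫ = 0

theorem SubP.mp {N : E3 → ℝ} {y0 a Z : E3} (h : SubP N y0 a Z) (hm : ⟪y0, a⟫ = 0)
    {η ζ : E3} (hη : ⟪y0, η⟫ = 0) (hζ : ⟪y0, ζ⟫ = 0) (hζZ : ⟪ζ, Z⟫ = 0) (τ : ℝ) :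
    N (η + τ • a + ζ) - N (η + τ • a) = N (η + ζ) - N η := by
  have h1 : ∀ t : ℝ, ⟪y0, η + t • a⟫ = 0 := by
    intro t; rw [inner_add_right, inner_smul_right, hη, hm]; ring
  have h2 : ∀ t : ℝ, ⟪y0, η + t • a + ζ⟫ = 0 := by
    intro t; rw [inner_add_right, h1, hζ]; ring
  have := common_sub (fun t => N (η + t • a + ζ)) (fun t => N (η + t • a)) (by
    intro t
    obtain ⟨g, g', -, -, hg, hg', hgg⟩ := h (η + t • a + ζ) (η + t • a) (h2 t) (h1 t) (by simpa using hζZ)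
    refine ⟨⟪a, g⟫, fun t' => ⟨?_, ?_⟩⟩
    · have h3 := hg _ (h2 t')
      have e : η + t' • a + ζ - (η + t • a + ζ) = (t' - t) • a := by module
      rw [e, inner_smul_right, real_inner_comm] at h3
      linarith
    · have h3 := hg' _ (h1 t')
      have e : η + t' • a - (η + t • a) = (t' - t) • a := by module
      rw [e, inner_smul_right, real_inner_comm] at h3
      rw [inner_sub_right] at hgg
      have : ⟪a, g⟫ = ⟪a, g'⟫ := by linarith
      rw [this]
      linarith) τ
  simpa using this

theorem SubP.proj {N : E3 → ℝ} {y0 a Z : E3} (h : SubP N y0 a Z) :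
    SubP N y0 (a - ⟪y0, a⟫ • y0) Z := by
  intro η η' hη hη' hh
  obtain ⟨g, g', h1, h2, h3, h4, h5⟩ := h η η' hη hη' hh
  refine ⟨g, g', h1, h2, h3, h4, ?_⟩
  rw [inner_sub_left, h5, real_inner_smul_left, inner_sub_right, h1, h2]; simp

theorem SubP.quad {N : E3 → ℝ} {y0 a Z b W f : E3} (h : SubP N y0 a Z) (h' : SubP N y0 b W)
    (hN0 : N 0 = 0) (hN : ∀ η, ⟪y0, η⟫ = 0 → 0 ≤ N η)
    (ha : ⟪y0, a⟫ = 0) (hb : ⟪y0, b⟫ = 0) (haZ : ⟪a, Z⟫ = 1) (hbZ : ⟪b, Z⟫ ≠ 0)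
    (hf : ⟪y0, f⟫ = 0) (hfW : ⟪f, W⟫ = 0) (hfZ : ⟪f, Z⟫ ≠ 0) :
    ∃ α, 0 ≤ α ∧ ∀ τ : ℝ, N (τ • a) = α * τ ^ 2 := by
  have hdec : ∀ η, ⟪y0, η⟫ = 0 → N η = N (⟪η, Z⟫ • a) + N (η - ⟪η, Z⟫ • a) := by
    intro η hη
    have h1 := h.mp ha (η := 0) (ζ := η - ⟪η, Z⟫ • a) (by simp)
      (by rw [inner_sub_right, inner_smul_right, hη, ha]; ring)
      (by rw [inner_sub_left, real_inner_smul_left, haZ]; ring) ⟪η, Z⟫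
    simp only [zero_add, hN0] at h1
    rw [add_sub_cancel] at h1
    linarith
  refine frechet_quad (fun τ => N (τ • a)) ?_ (by simpa using hN0)
    (fun t => hN _ (by rw [inner_smul_right, ha, mul_zero])) ?_
  · apply cont_of_sub
    intro t
    have hV : ∀ t : ℝ, ⟪y0, t • a⟫ = 0 := fun t => by rw [inner_smul_right, ha, mul_zero]
    obtain ⟨g, -, -, -, hg, -, -⟩ := h (t • a) (t • a) (hV t) (hV t) (by simp)
    refine ⟨⟪a, g⟫, fun t' => ?_⟩
    have := hg _ (hV t')
    rw [← sub_smul, inner_smul_right, real_inner_comm] at this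
    linarith
  · have key : ∀ x σ τ : ℝ, N ((x + σ * ⟪b, Z⟫ + τ * ⟪f, Z⟫) • a) - N ((x + σ * ⟪b, Z⟫) • a)
        - N ((x + τ * ⟪f, Z⟫) • a) + N (x • a) =
        - (N ((σ • b + τ • f) - (σ * ⟪b, Z⟫ + τ * ⟪f, Z⟫) • a) - N (σ • b - (σ * ⟪b, Z⟫) • a)
          - N (τ • f - (τ * ⟪f, Z⟫) • a)) := by
      intro x σ τ
      have hx : ⟪y0, x • a⟫ = 0 := by rw [inner_smul_right, ha, mul_zero]
      have h1 := h'.mp hb hx (ζ := τ • f) (by rw [inner_smul_right, hf, mul_zero])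
        (by rw [real_inner_smul_left, hfW, mul_zero]) σ
      rw [hdec (x • a + σ • b + τ • f) (by simp [inner_add_right, inner_smul_right, ha, hb, hf]),
        hdec (x • a + σ • b) (by simp [inner_add_right, inner_smul_right, ha, hb, hf]),
        hdec (x • a + τ • f) (by simp [inner_add_right, inner_smul_right, ha, hb, hf])] at h1
      simp only [inner_add_left, real_inner_smul_left, haZ, mul_one] at h1
      have e1 : x • a + σ • b + τ • f - (x + σ * ⟪b, Z⟫ + τ * ⟪f, Z⟫) • a =
        (σ • b + τ • f) - (σ * ⟪b, Z⟫ + τ * ⟪f, Z⟫) • a := by module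
      have e2 : x • a + σ • b - (x + σ * ⟪b, Z⟫) • a = σ • b - (σ * ⟪b, Z⟫) • a := by module
      have e3 : x • a + τ • f - (x + τ * ⟪f, Z⟫) • a = τ • f - (τ * ⟪f, Z⟫) • a := by module
      rw [e1, e2, e3] at h1
      linarith
    intro x σ τ
    have k1 := key x (σ / ⟪b, Z⟫) (τ / ⟪f, Z⟫)
    have k2 := key 0 (σ / ⟪b, Z⟫) (τ / ⟪f, Z⟫)
    rw [div_mul_cancel₀ _ hbZ, div_mul_cancel₀ _ hfZ] at k1 k2
    simp only [zero_add, zero_smul, hN0] at k2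
    linarith

/-- the boundary point of `K` on the ray from `p y` in direction `d` -/
def zr (K : Set E3) (p : E3 → E3) (y d : E3) : E3 := p y + tau K (p y) d • d

def PreConj (K : Set E3) (p a : E3 → E3) (y : E3) (R : E3 →L[ℝ] E3) : Prop :=
  (∀ u v, ⟪R u, v⟫ = ⟪u, R v⟫) ∧ (∀ u, 0 ≤ ⟪R u, u⟫) ∧ R y = 0 ∧
    ∀ z ∈ frontier K, ⟪y, z⟫ = ⟪y, p y⟫ → R (a z) = ⟪R (a z), a z⟫ • (z - p y)

namespace Ctx
variable {K L : Set E3} {p a : E3 → E3} {r : ℝ} (c : Ctx K L p a r)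
include c

lemma pint (y : E3) : p y ∈ interior K := c.LK (c.pL y)

lemma zr_mem (y : E3) {d : E3} (hd : d ≠ 0) : zr K p y d ∈ frontier K :=
  (c.tau_spec (c.pint y) hd).2

lemma zr_inner {y d : E3} (hd : ⟪y, d⟫ = 0) : ⟪y, zr K p y d⟫ = ⟪y, p y⟫ := by
  rw [zr, inner_add_right, inner_smul_right, hd]; ring

lemma zr_self {y z : E3} (hz : z ∈ frontier K) : zr K p y (z - p y) = z := by
  have h0 : z - p y ≠ 0 := by
    intro h; rw [sub_eq_zero] at h; exact c.frK_notL hz (h ▸ c.pL y)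
  have := c.tau_unique (c.pint y) h0 one_pos (by simpa using hz)
  rw [zr, ← this]; simp

lemma zr_tendsto {ι : Type*} {l : Filter ι} {yk dk : ι → E3} {y d : E3} (hy : y ≠ 0) (hd : d ≠ 0)
    (hyk : Tendsto yk l (𝓝 y)) (hdk : Tendsto dk l (𝓝 d)) :
    Tendsto (fun i => zr K p (yk i) (dk i)) l (𝓝 (zr K p y d)) := by
  have h := c.p_tendsto hy hyk
  exact h.add ((c.tau_tendsto (c.pint y) hd h hdk).smul hdk)

lemma azr_tendsto {ι : Type*} {l : Filter ι} {yk dk : ι → E3} {y d : E3} (hy : y ≠ 0) (hd : d ≠ 0)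
    (hyk : Tendsto yk l (𝓝 y)) (hdk : Tendsto dk l (𝓝 d)) :
    Tendsto (fun i => a (zr K p (yk i) (dk i))) l (𝓝 (a (zr K p y d))) := by
  refine c.a_tendsto (c.zr_mem y hd) ?_ (c.zr_tendsto hy hd hyk hdk)
  filter_upwards [hdk.eventually (isOpen_ne.mem_nhds hd)] with i hi
  exact c.zr_mem _ hi

lemma aZ {y z : E3} (hy : y ≠ 0) (hz : z ∈ frontier K) (h : ⟪y, z⟫ = ⟪y, p y⟫) :
    ⟪a z, z - p y⟫ = 1 := by
  have := c.ha z hz y hy h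
  rw [← neg_sub, inner_neg_right]; linarith

lemma preconj0 {y0 c0 : E3} {ρ : ℝ} (hy0 : ‖y0‖ = 1) (hρ : 0 < ρ) (hball : closedBall c0 ρ ⊆ L)
    (hp0 : p y0 = c0 + ρ • y0) : ∃ R, R ≠ 0 ∧ PreConj K p a y0 R := by
  have hy00 : y0 ≠ 0 := by rintro rfl; simp at hy0
  have hyy : ⟪y0, y0⟫ = 1 := by rw [real_inner_self_eq_norm_sq, hy0]; norm_num
  obtain ⟨N, hN0, hNpos, ⟨e, hye, hNe⟩, hS⟩ := c.blowup hy0 hρ hball hp0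
  obtain ⟨m, hm⟩ : ∃ m : E3 → E3, ∀ z, m z = a z - ⟪y0, a z⟫ • y0 := ⟨_, fun _ => rfl⟩
  have hmy : ∀ z, ⟪y0, m z⟫ = 0 := by
    intro z; rw [hm, inner_sub_right, inner_smul_right, hyy]; ring
  have hsub : ∀ z ∈ frontier K, ⟪y0, z⟫ = ⟪y0, p y0⟫ → SubP N y0 (m z) (z - p y0) := by
    intro z hz hyz
    rw [hm]
    exact SubP.proj (hS z hz hyz)
  have hyZ : ∀ z, ⟪y0, z⟫ = ⟪y0, p y0⟫ → ⟪y0, z - p y0⟫ = 0 := by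
    intro z h; rw [inner_sub_right, h, sub_self]
  have hmZ : ∀ z ∈ frontier K, ⟪y0, z⟫ = ⟪y0, p y0⟫ → ⟪m z, z - p y0⟫ = 1 := by
    intro z hz hyz
    rw [hm, inner_sub_left, c.aZ hy00 hz hyz, real_inner_smul_left, hyZ z hyz]; ring
  have hma : ∀ z v, ⟪y0, v⟫ = 0 → ⟪m z, v⟫ = ⟪a z, v⟫ := by
    intro z v hv
    rw [hm, inner_sub_left, real_inner_smul_left, hv]; ring
  have hquad : ∀ z ∈ frontier K, ⟪y0, z⟫ = ⟪y0, p y0⟫ →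
      ∃ α, 0 ≤ α ∧ ∀ τ : ℝ, N (τ • m z) = α * τ ^ 2 := by
    intro z hz hyz
    obtain ⟨Z, hZ⟩ : ∃ Z, Z = z - p y0 := ⟨_, rfl⟩
    have hZ1 := hmZ z hz hyz
    have hZy := hyZ z hyz
    have hself := c.zr_self (y := y0) hz
    rw [← hZ] at hZ1 hZy hself
    have hZ0 : Z ≠ 0 := by rintro h; rw [h] at hZ1; simp at hZ1
    obtain ⟨w, hw1, hyw, hZw⟩ := exists_orth y0 Z
    have ht : Tendsto (fun s : ℝ => Z + s • w) (𝓝[≠] 0) (𝓝 Z) := by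
      have h1 : Continuous (fun s : ℝ => Z + s • w) := by fun_prop
      have := h1.tendsto 0
      simp only [zero_smul, add_zero] at this
      exact this.mono_left nhdsWithin_le_nhds
    have h2 := (c.azr_tendsto hy00 hZ0 (tendsto_const_nhds (x := y0)) ht).inner (𝕜 := ℝ)
      (tendsto_const_nhds (x := Z))
    rw [hself, hZ, c.aZ hy00 hz hyz, ← hZ] at h2
    have h3 := h2.eventually (isOpen_ne.mem_nhds (one_ne_zero))
    obtain ⟨s, ⟨h3, h4⟩, h5⟩ := ((h3.and (ht.eventually (isOpen_ne.mem_nhds hZ0))).and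
      self_mem_nhdsWithin).exists
    have h5 : s ≠ 0 := h5
    have hyd : ⟪y0, Z + s • w⟫ = 0 := by
      rw [inner_add_right, inner_smul_right, hZy, hyw]; ring
    have h6 := c.zr_mem y0 h4
    have h7 := c.zr_inner hyd
    refine (hsub z hz hyz).quad (hsub _ h6 h7) (f := s • Z - ⟪Z, Z⟫ • w) hN0 hNpos (hmy _) (hmy _)
      (hmZ z hz hyz) ?_ ?_ ?_ ?_
    · rw [← hZ, hma _ _ hZy]; exact h3
    · rw [inner_sub_right, inner_smul_right, inner_smul_right, hZy, hyw]; ring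
    · have : zr K p y0 (Z + s • w) - p y0 = tau K (p y0) (Z + s • w) • (Z + s • w) := by
        rw [zr]; abel
      rw [this, inner_smul_right, inner_sub_left, real_inner_smul_left, real_inner_smul_left,
        inner_add_right, inner_add_right, inner_smul_right, inner_smul_right, hZw,
        real_inner_comm Z w, hZw, real_inner_self_eq_norm_sq w, hw1]
      ring
    · rw [← hZ, inner_sub_left, real_inner_smul_left, real_inner_smul_left, real_inner_comm Z w, hZw]
      have := inner_self_ne_zero (𝕜 := ℝ).2 hZ0
      rw [mul_zero, sub_zero]
      exact mul_ne_zero h5 this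
  obtain ⟨d, hd1, hyd, -⟩ := exists_orth y0 y0
  have hd0 : d ≠ 0 := by rintro rfl; simp at hd1
  obtain ⟨z, hz⟩ : ∃ z, z = zr K p y0 d := ⟨_, rfl⟩
  have hzK : z ∈ frontier K := hz ▸ c.zr_mem y0 hd0
  have hyz : ⟪y0, z⟫ = ⟪y0, p y0⟫ := hz ▸ c.zr_inner hyd
  obtain ⟨Z, hZ⟩ : ∃ Z, Z = z - p y0 := ⟨_, rfl⟩
  obtain ⟨α, hα, hNα⟩ := hquad z hzK hyz
  obtain ⟨d', hd'1, hyd', hmd'⟩ := exists_orth y0 (m z)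
  have hd'0 : d' ≠ 0 := by rintro rfl; simp at hd'1
  obtain ⟨z', hz'⟩ : ∃ z', z' = zr K p y0 d' := ⟨_, rfl⟩
  have hz'K : z' ∈ frontier K := hz' ▸ c.zr_mem y0 hd'0
  have hyz' : ⟪y0, z'⟫ = ⟪y0, p y0⟫ := hz' ▸ c.zr_inner hyd'
  obtain ⟨Z', hZ'⟩ : ∃ Z', Z' = z' - p y0 := ⟨_, rfl⟩
  have hmZ' : ⟪m z, Z'⟫ = 0 := by
    rw [hZ', hz', zr, add_sub_cancel_left, inner_smul_right, hmd', mul_zero]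
  obtain ⟨α', hα', hNα'⟩ := hquad z' hz'K hyz'
  have hmzZ : ⟪m z, Z⟫ = 1 := by rw [hZ]; exact hmZ z hzK hyz
  have hmzZ' : ⟪m z', Z'⟫ = 1 := by rw [hZ']; exact hmZ z' hz'K hyz'
  have hyZ0 : ⟪y0, Z⟫ = 0 := by rw [hZ]; exact hyZ z hyz
  have hyZ'0 : ⟪y0, Z'⟫ = 0 := by rw [hZ']; exact hyZ z' hyz'
  have hZ'0 : Z' ≠ 0 := by rintro h; rw [h] at hmzZ'; simp at hmzZ'
  have hmz0 : m z ≠ 0 := by rintro h; rw [h] at hmzZ; simp at hmzZ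
  obtain ⟨β, hβ⟩ : ∃ β, β = α' + α * ⟪m z', Z⟫ ^ 2 := ⟨_, rfl⟩
  have hβ0 : 0 ≤ β := by rw [hβ]; positivity
  have hdec : ∀ z ∈ frontier K, ⟪y0, z⟫ = ⟪y0, p y0⟫ → ∀ η, ⟪y0, η⟫ = 0 →
      N η = N (⟪η, z - p y0⟫ • m z) + N (η - ⟪η, z - p y0⟫ • m z) := by
    intro z hz hyz η hη
    have h1 := (hsub z hz hyz).mp (hmy z) (η := 0) (ζ := η - ⟪η, z - p y0⟫ • m z) (by simp)
      (by rw [inner_sub_right, inner_smul_right, hη, hmy]; ring)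
      (by rw [inner_sub_left, real_inner_smul_left, hmZ z hz hyz]; ring) ⟪η, z - p y0⟫
    simp only [zero_add, hN0] at h1
    rw [add_sub_cancel] at h1
    linarith
  have hmult : ∀ x : E3, ⟪y0, x⟫ = 0 → ⟪x, Z'⟫ = 0 → x = ⟪x, Z⟫ • m z := by
    intro x h1 h2
    have h3 := orthoexp (a := y0) (e := d') (w := ‖m z‖⁻¹ • m z) hy00 hd'1 (by
        rw [norm_smul, norm_inv, norm_norm, inv_mul_cancel₀ (norm_ne_zero_iff.2 hmz0)]) hyd'
        (by rw [inner_smul_right, hmy, mul_zero])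
        (by rw [inner_smul_right, real_inner_comm, hmd', mul_zero]) (D := x) h1
    have h4 : ⟪d', x⟫ = 0 := by
      rw [hZ', hz', zr, add_sub_cancel_left, inner_smul_right] at h2
      rw [real_inner_comm]
      rcases mul_eq_zero.1 h2 with h | h
      · exact absurd h (c.tau_spec (c.pint y0) hd'0).1.ne'
      · exact h
    rw [h4, zero_smul, zero_add, smul_smul] at h3
    obtain ⟨k, hk⟩ : ∃ k, k = ⟪‖m z‖⁻¹ • m z, x⟫ * ‖m z‖⁻¹ := ⟨_, rfl⟩
    rw [← hk] at h3
    rw [h3, real_inner_smul_left, hmzZ, mul_one]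
  have hNform : ∀ η, ⟪y0, η⟫ = 0 → N η = α * ⟪Z, η⟫ ^ 2 + β * ⟪Z', η⟫ ^ 2 := by
    intro η hη
    have h1 := hdec z hzK hyz η hη
    rw [← hZ, hNα] at h1
    obtain ⟨ζ, hζ⟩ : ∃ ζ, ζ = η - ⟪η, Z⟫ • m z := ⟨_, rfl⟩
    have hζy : ⟪y0, ζ⟫ = 0 := by rw [hζ, inner_sub_right, inner_smul_right, hη, hmy]; ring
    have hζZ : ⟪ζ, Z⟫ = 0 := by rw [hζ, inner_sub_left, real_inner_smul_left, hmzZ]; ring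
    have hζZ' : ⟪ζ, Z'⟫ = ⟪η, Z'⟫ := by rw [hζ, inner_sub_left, real_inner_smul_left, hmZ']; ring
    have h2 := hdec z' hz'K hyz' ζ hζy
    rw [← hZ', hNα', hζZ', hmult (ζ - ⟪η, Z'⟫ • m z')
      (by rw [inner_sub_right, inner_smul_right, hζy, hmy]; ring)
      (by rw [inner_sub_left, real_inner_smul_left, hmzZ', hζZ']; ring), hNα, inner_sub_left,
      real_inner_smul_left, hζZ] at h2
    rw [← hζ, h2] at h1
    rw [h1, hβ, real_inner_comm Z η, real_inner_comm Z' η]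
    ring
  obtain ⟨R, hR⟩ : ∃ R : E3 →L[ℝ] E3, ∀ v, R v = (α * ⟪Z, v⟫) • Z + (β * ⟪Z', v⟫) • Z' := by
    refine ⟨(innerSL ℝ Z).smulRight (α • Z) + (innerSL ℝ Z').smulRight (β • Z'), fun v => ?_⟩
    simp [smul_smul, mul_comm]
  have hRi : ∀ u v, ⟪R u, v⟫ = α * ⟪Z, u⟫ * ⟪Z, v⟫ + β * ⟪Z', u⟫ * ⟪Z', v⟫ := by
    intro u v
    rw [hR, inner_add_left, real_inner_smul_left, real_inner_smul_left]
  have hRN : ∀ η, ⟪y0, η⟫ = 0 → N η = ⟪R η, η⟫ := by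
    intro η hη; rw [hNform η hη, hRi]; ring
  refine ⟨R, ?_, ?_, ?_, ?_, ?_⟩
  · rintro h
    have := hRN e hye
    rw [h] at this
    simp at this
    linarith
  · intro u v
    rw [hRi, real_inner_comm (R v) u, hRi]; ring
  · intro u
    rw [hRi]
    have h1 := mul_nonneg hα (mul_self_nonneg ⟪Z, u⟫)
    have h2 := mul_nonneg hβ0 (mul_self_nonneg ⟪Z', u⟫)
    linarith
  · rw [hR, real_inner_comm, hyZ0, real_inner_comm, hyZ'0]; simp
  · intro w hw hyw
    have hRm : ∀ v, ⟪R (a w), v⟫ = ⟪R (m w), v⟫ := by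
      intro v
      have e1 : ∀ X, ⟪y0, X⟫ = 0 → ⟪X, a w⟫ = ⟪X, m w⟫ := by
        intro X hX
        rw [real_inner_comm, ← hma w X hX, real_inner_comm]
      rw [hRi, hRi, e1 Z hyZ0, e1 Z' hyZ'0]
    have hperp : ∀ ζ, ⟪y0, ζ⟫ = 0 → ⟪ζ, w - p y0⟫ = 0 → ⟪R (m w), ζ⟫ = 0 := by
      intro ζ h1 h2
      have h3 := (hsub w hw hyw).mp (hmy w) (η := 0) (by simp) h1 h2 1
      rw [zero_add, one_smul, zero_add, hN0, hRN _ (hmy w), hRN _ h1, hRN _ (by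
        rw [inner_add_right, hmy, h1, add_zero])] at h3
      simp only [hRi, inner_add_right] at h3 ⊢
      linarith
    refine ext_inner_right ℝ fun v => ?_
    have e := hperp (v - ⟪w - p y0, v⟫ • m w - ⟪y0, v⟫ • y0)
      (by rw [inner_sub_right, inner_sub_right, inner_smul_right, inner_smul_right, hyy, hmy]; ring)
      (by rw [inner_sub_left, inner_sub_left, real_inner_smul_left, real_inner_smul_left,
            hmZ w hw hyw, hyZ w hyw, real_inner_comm]; ring)
    have e0 : ⟪R (m w), y0⟫ = 0 := by
      rw [hRi, real_inner_comm y0 Z, hyZ0, real_inner_comm y0 Z', hyZ'0]; ring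
    rw [inner_sub_right, inner_sub_right, inner_smul_right, inner_smul_right, e0] at e
    have e2 : ⟪R (a w), a w⟫ = ⟪R (m w), m w⟫ := by
      rw [hRm]
      rw [hm w, inner_sub_right, inner_smul_right, ← hm w, e0, mul_zero, sub_zero]
    rw [real_inner_smul_left, hRm, e2]
    linarith

end Ctx

theorem ulim' {X : Type*} [TopologicalSpace X] {ι : Type*} (U : Ultrafilter ι) {S : Set X} (hS : IsCompact S) (f : ι → X)
    (hf : ∀ᶠ i in (U : Filter ι), f i ∈ S) : ∃ x ∈ S, Tendsto f U (𝓝 x) := by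
  obtain ⟨x, hx, h⟩ := hS.ultrafilter_le_nhds (U.map f) (le_principal_iff.2 hf)
  exact ⟨x, hx, h⟩

namespace Ctx
variable {K L : Set E3} {p a : E3 → E3} {r : ℝ} (c : Ctx K L p a r)
include c

lemma inball {y : E3} (hy : ‖y‖ = 1) {t : ℝ} (ht0 : 0 < t) (ht : t < 1) :
    ∃ y' : E3, ∃ ρ : ℝ, ‖y'‖ = 1 ∧ 0 < ρ ∧ closedBall (t • p y) ρ ⊆ L ∧
      p y' = t • p y + ρ • y' ∧ ρ ≤ (1 - t) * ⟪y, p y⟫ := by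
  have hcont : Continuous (fun u : E3 => ⟪u, p u⟫ - ⟪u, t • p y⟫) :=
    c.h_cont.sub (continuous_id.inner continuous_const)
  obtain ⟨y', hy', hmin⟩ := (isCompact_sphere (0 : E3) 1).exists_isMinOn
    ⟨y, by simpa using hy⟩ hcont.continuousOn
  have hy1 : ‖y'‖ = 1 := by simpa using hy'
  have hy'0 : y' ≠ 0 := by rintro rfl; simp at hy1
  have hmin' : ∀ u : E3, ‖u‖ = 1 →
      ⟪y', p y'⟫ - ⟪y', t • p y⟫ ≤ ⟪u, p u⟫ - ⟪u, t • p y⟫ := by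
    intro u hu
    exact hmin (by simpa using hu)
  obtain ⟨ρ, hρ⟩ : ∃ ρ, ρ = ⟪y', p y'⟫ - ⟪y', t • p y⟫ := ⟨_, rfl⟩
  have hρ0 : 0 < ρ := by
    have h1 := c.h_pos hy'0
    have h2 := mul_le_mul_of_nonneg_left (c.hmax y' y) ht0.le
    have h3 := mul_lt_mul_of_pos_right ht h1
    rw [hρ, inner_smul_right]; linarith
  have hb : closedBall (t • p y) ρ ⊆ L := by
    intro x hx
    by_contra hxL
    obtain ⟨y1, hy1'⟩ := c.sep hxL
    have h0 : y1 ≠ 0 := by rintro rfl; simp at hy1'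
    have hn : 0 < ‖y1‖ := norm_pos_iff.2 h0
    have h1 := hmin' (‖y1‖⁻¹ • y1) (by rw [norm_smul, norm_inv, norm_norm, inv_mul_cancel₀ hn.ne'])
    rw [c.p_smul h0 (inv_pos.2 hn), ← hρ, real_inner_smul_left, real_inner_smul_left, ← mul_sub,
      inv_mul_eq_div, le_div_iff₀ hn] at h1
    have h2 : ⟪y1, x - t • p y⟫ ≤ ‖y1‖ * ‖x - t • p y‖ := real_inner_le_norm _ _
    have h3 : ‖x - t • p y‖ ≤ ρ := by rw [← dist_eq_norm]; exact hx
    have h4 := mul_le_mul_of_nonneg_left h3 hn.le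
    rw [inner_sub_right] at h2
    linarith
  refine ⟨y', ρ, hy1, hρ0, hb, ?_, ?_⟩
  · refine (c.puniq y' hy'0 _ (hb ?_) ?_).symm
    · rw [mem_closedBall, dist_eq_norm, add_sub_cancel_left, norm_smul, hy1, mul_one,
        Real.norm_of_nonneg hρ0.le]
    · rw [inner_add_right, inner_smul_right _ _ ρ, real_inner_self_eq_norm_sq, hy1, hρ]; ring
  · have := hmin' y hy
    rw [← hρ, inner_smul_right] at this
    linarith

lemma preconj1 {y : E3} (hy : ‖y‖ = 1) : ∃ R, R ≠ 0 ∧ PreConj K p a y R := by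
  have hy0 : y ≠ 0 := by rintro rfl; simp at hy
  have hyy : ⟪y, y⟫ = 1 := by rw [real_inner_self_eq_norm_sq, hy]; norm_num
  have hex : ∀ k : ℕ, ∃ y' : E3, ∃ ρ : ℝ, ∃ R : E3 →L[ℝ] E3, ‖y'‖ = 1 ∧ 0 < ρ ∧
      p y' = (1 - 1 / ((k : ℝ) + 1 + 1)) • p y + ρ • y' ∧
      ρ ≤ (1 / ((k : ℝ) + 1 + 1)) * ⟪y, p y⟫ ∧ ‖R‖ = 1 ∧ PreConj K p a y' R := by
    intro k
    have hk : (0 : ℝ) < 1 / ((k : ℝ) + 1 + 1) := by positivity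
    have hk1 : 1 / ((k : ℝ) + 1 + 1) < 1 := by
      rw [div_lt_one (by positivity)]; linarith [(Nat.cast_nonneg k : (0 : ℝ) ≤ k)]
    obtain ⟨y', ρ, h1, h2, h3, h4, h5⟩ := c.inball hy (t := 1 - 1 / ((k : ℝ) + 1 + 1))
      (by linarith) (by linarith)
    obtain ⟨R, hR0, hRs, hRp, hRy, hR⟩ := c.preconj0 h1 h2 h3 h4
    have hn : 0 < ‖R‖ := norm_pos_iff.2 hR0
    refine ⟨y', ρ, ‖R‖⁻¹ • R, h1, h2, h4, by rwa [sub_sub_cancel] at h5, ?_, ?_, ?_, ?_, ?_⟩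
    · rw [norm_smul, norm_inv, norm_norm, inv_mul_cancel₀ hn.ne']
    · intro u v
      rw [ContinuousLinearMap.smul_apply, ContinuousLinearMap.smul_apply, real_inner_smul_left,
        inner_smul_right, hRs]
    · intro u
      rw [ContinuousLinearMap.smul_apply, real_inner_smul_left]
      exact mul_nonneg (inv_pos.2 hn).le (hRp u)
    · rw [ContinuousLinearMap.smul_apply, hRy, smul_zero]
    · intro z hz hyz
      rw [ContinuousLinearMap.smul_apply, real_inner_smul_left, mul_smul, ← hR z hz hyz]
  choose yk ρ Rk hyk hρ hpk hρk hRk hPk using hex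
  have hU : ((hyperfilter ℕ : Ultrafilter ℕ) : Filter ℕ) ≤ atTop := Nat.hyperfilter_le_atTop
  obtain ⟨U, hUU⟩ : ∃ U : Ultrafilter ℕ, U = hyperfilter ℕ := ⟨_, rfl⟩
  rw [← hUU] at hU
  obtain ⟨y', hy'S, hy't⟩ := ulim' U (isCompact_sphere (0 : E3) 1) yk
    (Eventually.of_forall fun k => by simpa using hyk k)
  have hy'1 : ‖y'‖ = 1 := by simpa using hy'S
  have hy'0 : y' ≠ 0 := by rintro rfl; simp at hy'1
  obtain ⟨R, hRS, hRt⟩ := ulim' U (isCompact_sphere (0 : E3 →L[ℝ] E3) 1) Rk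
    (Eventually.of_forall fun k => by simpa using hRk k)
  have hR1 : ‖R‖ = 1 := by simpa using hRS
  have hlim0 : Tendsto (fun k : ℕ => 1 / ((k : ℝ) + 1 + 1)) U (𝓝 0) := by
    have := (tendsto_one_div_add_atTop_nhds_zero_nat (𝕜 := ℝ)).comp (tendsto_add_atTop_nat 1)
    refine (this.mono_left hU).congr fun k => ?_
    simp
  have hρt : Tendsto ρ U (𝓝 0) := by
    have h1 := hlim0.mul_const ⟪y, p y⟫
    rw [zero_mul] at h1
    exact tendsto_of_tendsto_of_tendsto_of_le_of_le tendsto_const_nhds h1 (fun k => (hρ k).le) hρk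
  have hpt : Tendsto (fun k => p (yk k)) U (𝓝 (p y)) := by
    have h1 := ((hlim0.const_sub 1).smul_const (p y)).add (hρt.smul hy't)
    rw [sub_zero, one_smul, zero_smul, add_zero] at h1
    exact h1.congr fun k => (hpk k).symm
  have hpp := tendsto_nhds_unique (c.p_tendsto hy'0 hy't) hpt
  obtain ⟨s, hs, hsy⟩ := c.smooth hy'0 hy0 hpp
  have hs1 : s = 1 := by
    have : ‖y‖ = s * ‖y'‖ := by rw [hsy, norm_smul, Real.norm_of_nonneg hs.le]
    rw [hy, hy'1] at this; linarith
  rw [hs1, one_smul] at hsy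
  subst hsy
  have happ : ∀ (vk : ℕ → E3) (v : E3), Tendsto vk U (𝓝 v) →
      Tendsto (fun k => Rk k (vk k)) U (𝓝 (R v)) := fun vk v hv =>
    (isBoundedBilinearMap_apply (𝕜 := ℝ) (E := E3) (F := E3)).continuous.tendsto (R, v) |>.comp (hRt.prodMk_nhds hv)
  refine ⟨R, by rintro rfl; simp at hR1, ?_, ?_, ?_, ?_⟩
  · intro u v
    refine tendsto_nhds_unique ((happ _ u tendsto_const_nhds).inner tendsto_const_nhds)
      (((tendsto_const_nhds (x := u)).inner (happ _ v tendsto_const_nhds)).congr fun k => ?_)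
    exact ((hPk k).1 u v).symm
  · intro u
    exact ge_of_tendsto' ((happ _ u tendsto_const_nhds).inner tendsto_const_nhds)
      fun k => (hPk k).2.1 u
  · refine tendsto_nhds_unique (happ _ _ hy't) (tendsto_const_nhds.congr fun k => ?_)
    exact ((hPk k).2.2.1).symm
  · intro z hz hyz
    obtain ⟨Z, hZ⟩ : ∃ Z, Z = z - p y := ⟨_, rfl⟩
    have hself := c.zr_self (y := y) hz
    rw [← hZ] at hself
    have hyZ : ⟪y, Z⟫ = 0 := by rw [hZ, inner_sub_right, hyz, sub_self]
    have hZ0 : Z ≠ 0 := by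
      intro h
      have := c.aZ hy0 hz hyz
      rw [← hZ, h] at this; simp at this
    obtain ⟨d, hd⟩ : ∃ d : ℕ → E3, ∀ k, d k = Z - ⟪yk k, Z⟫ • yk k := ⟨_, fun _ => rfl⟩
    have hdt : Tendsto d U (𝓝 Z) := by
      have h1 := (tendsto_const_nhds (x := Z)).sub ((hy't.inner (𝕜 := ℝ) (tendsto_const_nhds (x := Z))).smul hy't)
      rw [hyZ, zero_smul, sub_zero] at h1
      exact h1.congr fun k => (hd k).symm
    have hyd : ∀ k, ⟪yk k, d k⟫ = 0 := by
      intro k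
      rw [hd, inner_sub_right, inner_smul_right, real_inner_self_eq_norm_sq, hyk]; ring
    have hzt := c.zr_tendsto hy0 hZ0 hy't hdt
    have hat := c.azr_tendsto hy0 hZ0 hy't hdt
    rw [hself] at hzt hat
    have hRa := happ _ _ hat
    refine tendsto_nhds_unique hRa (((hRa.inner hat).smul (hzt.sub hpt)).congr' ?_)
    filter_upwards [hdt.eventually (isOpen_ne.mem_nhds hZ0)] with k hk
    exact ((hPk k).2.2.2 _ (c.zr_mem _ hk) (c.zr_inner (hyd k))).symm

end Ctx

def Conj (K : Set E3) (p a : E3 → E3) (y : E3) (M : E3 →ₗ[ℝ] E3) : Prop :=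
  (∀ u v, ⟪M u, v⟫ = ⟪u, M v⟫) ∧ (∀ u, u ≠ 0 → 0 < ⟪M u, u⟫) ∧
    ∀ z ∈ frontier K, ⟪y, z⟫ = ⟪y, p y⟫ → ∀ d, ⟪y, d⟫ = 0 →
      ⟪M (z - p y), d⟫ = ⟪M (z - p y), z - p y⟫ * ⟪a z, d⟫

namespace Ctx
variable {K L : Set E3} {p a : E3 → E3} {r : ℝ} (c : Ctx K L p a r)
include c

lemma nondeg {y : E3} (hy : ‖y‖ = 1) {R : E3 →L[ℝ] E3} (hR0 : R ≠ 0) (hR : PreConj K p a y R)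
    {k : E3} (hk : ‖k‖ = 1) (hyk : ⟪y, k⟫ = 0) (hRk : R k = 0) : False := by
  have hy0 : y ≠ 0 := by rintro rfl; simp at hy
  have hyy : ⟪y, y⟫ = 1 := by rw [real_inner_self_eq_norm_sq, hy]; norm_num
  have hkk : ⟪k, k⟫ = 1 := by rw [real_inner_self_eq_norm_sq, hk]; norm_num
  obtain ⟨hRs, hRp, hRy, hRz⟩ := hR
  obtain ⟨e, he, hye, hke⟩ := exists_orth y k
  have he0 : e ≠ 0 := by rintro rfl; simp at he
  have hexp : ∀ x : E3, R x = ⟪e, x⟫ • R e := by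
    intro x
    have h1 := orthoexp hy0 he hk hye hyk (by rw [real_inner_comm]; exact hke)
      (D := x - ⟪y, x⟫ • y) (by rw [inner_sub_right, inner_smul_right, hyy]; ring)
    have h2 : R (x - ⟪y, x⟫ • y) = R x := by rw [map_sub, map_smul, hRy]; simp
    rw [← h2, h1, map_add, map_smul, map_smul, hRk, smul_zero, add_zero, inner_sub_right,
      inner_smul_right, real_inner_comm y e, hye, mul_zero, sub_zero]
  have hRe : R e ≠ 0 := by
    intro h
    apply hR0
    ext1 x
    rw [hexp, h]; simp
  have hae : ∀ z ∈ frontier K, ⟪y, z⟫ = ⟪y, p y⟫ → ⟪z - p y, k⟫ ≠ 0 → ⟪a z, e⟫ = 0 := by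
    intro z hz hyz hne
    have h1 := hRz z hz hyz
    have h2 : ⟪R (a z), k⟫ = 0 := by rw [hRs, hRk, inner_zero_right]
    rw [h1, real_inner_smul_left] at h2
    have h3 := (mul_eq_zero.1 h2).resolve_right hne
    rw [h3, zero_smul, hexp] at h1
    rw [real_inner_comm]
    exact (smul_eq_zero.1 h1).resolve_right hRe
  have ht : Tendsto (fun s : ℝ => e + s • k) (𝓝[≠] 0) (𝓝 e) := by
    have h1 : Continuous (fun s : ℝ => e + s • k) := by fun_prop
    have := h1.tendsto 0
    simp only [zero_smul, add_zero] at this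
    exact this.mono_left nhdsWithin_le_nhds
  have h2 := (c.azr_tendsto hy0 he0 (tendsto_const_nhds (x := y)) ht).inner (𝕜 := ℝ)
    (tendsto_const_nhds (x := e))
  have h3 : ⟪a (zr K p y e), e⟫ = 0 := by
    refine tendsto_nhds_unique h2 (tendsto_const_nhds.congr' ?_)
    filter_upwards [ht.eventually (isOpen_ne.mem_nhds he0), self_mem_nhdsWithin] with s hs hs0
    have hs0 : s ≠ 0 := hs0
    refine (hae _ (c.zr_mem _ hs) (c.zr_inner ?_) ?_).symm
    · rw [inner_add_right, inner_smul_right, hye, hyk]; ring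
    · rw [zr, add_sub_cancel_left, real_inner_smul_left, inner_add_left, real_inner_smul_left,
        real_inner_comm, hke, hkk]
      have := (c.tau_spec (c.pint y) hs).1.ne'
      rw [zero_add, mul_one]
      exact mul_ne_zero this hs0
  have h4 := c.aZ hy0 (c.zr_mem y he0) (c.zr_inner hye)
  have h5 : zr K p y e - p y = tau K (p y) e • e := by rw [zr, add_sub_cancel_left]
  rw [h5, inner_smul_right, h3] at h4
  simp at h4

lemma conj {y : E3} (hy : ‖y‖ = 1) : ∃ M, Conj K p a y M := by
  have hy0 : y ≠ 0 := by rintro rfl; simp at hy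
  have hyy : ⟪y, y⟫ = 1 := by rw [real_inner_self_eq_norm_sq, hy]; norm_num
  obtain ⟨R, hR0, hPC⟩ := c.preconj1 hy
  obtain ⟨hRs, hRp, hRy, hRz⟩ := id hPC
  have hnd : ∀ k : E3, ⟪y, k⟫ = 0 → R k = 0 → k = 0 := by
    intro k h1 h2
    by_contra h0
    refine c.nondeg hy hR0 hPC (k := ‖k‖⁻¹ • k) ?_ ?_ ?_
    · rw [norm_smul, norm_inv, norm_norm, inv_mul_cancel₀ (norm_ne_zero_iff.2 h0)]
    · rw [inner_smul_right, h1, mul_zero]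
    · rw [map_smul, h2, smul_zero]
  obtain ⟨S, hS⟩ : ∃ S : E3 →ₗ[ℝ] E3, ∀ u, S u = R u + ⟪y, u⟫ • y :=
    ⟨(R + (innerSL ℝ y).smulRight y : E3 →L[ℝ] E3), fun u => by simp⟩
  have hinj : Function.Injective S := by
    rw [← LinearMap.ker_eq_bot, LinearMap.ker_eq_bot']
    intro u hu
    rw [hS] at hu
    have h1 : ⟪y, R u + ⟪y, u⟫ • y⟫ = 0 := by rw [hu, inner_zero_right]
    rw [inner_add_right, inner_smul_right, hyy, ← hRs, hRy, inner_zero_left] at h1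
    have h2 : ⟪y, u⟫ = 0 := by linarith
    rw [h2, zero_smul, add_zero] at hu
    exact hnd u h2 hu
  obtain ⟨M, hMS, hSM⟩ : ∃ M : E3 →ₗ[ℝ] E3, (∀ u, M (S u) = u) ∧ ∀ u, S (M u) = u :=
    ⟨(LinearEquiv.ofInjectiveEndo S hinj).symm,
      fun u => (LinearEquiv.ofInjectiveEndo S hinj).symm_apply_apply u,
      fun u => (LinearEquiv.ofInjectiveEndo S hinj).apply_symm_apply u⟩
  have hSs : ∀ u v, ⟪S u, v⟫ = ⟪u, S v⟫ := by
    intro u v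
    rw [hS, hS, inner_add_left, inner_add_right, hRs, real_inner_smul_left, inner_smul_right,
      real_inner_comm y u]; ring
  have hSpos : ∀ w, w ≠ 0 → 0 < ⟪S w, w⟫ := by
    intro w hw
    rw [hS, inner_add_left, real_inner_smul_left]
    have h1 := hRp w
    have h2 := mul_self_nonneg ⟪y, w⟫
    by_contra hcon
    have h3 : ⟪R w, w⟫ = 0 := by linarith
    have h4 : ⟪y, w⟫ = 0 := mul_self_eq_zero.1 (by linarith)
    apply hw
    apply hnd w h4
    have h5 : ∀ t : ℝ, 0 ≤ ⟪R (R w), R w⟫ * (t * t) + (2 * ⟪R w, R w⟫) * t + 0 := by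
      intro t
      have := hRp (w + t • R w)
      rw [map_add, map_smul, inner_add_left, inner_add_right, inner_add_right, real_inner_smul_left,
        real_inner_smul_left, inner_smul_right, inner_smul_right, h3, hRs (R w) w] at this
      linarith
    have h6 := discrim_le_zero h5
    rw [discrim] at h6
    have h7 : ⟪R w, R w⟫ ^ 2 ≤ 0 := by linarith
    have h8 : ⟪R w, R w⟫ = 0 := by
      exact pow_eq_zero_iff (two_ne_zero) |>.1 (le_antisymm h7 (sq_nonneg _))
    exact inner_self_eq_zero.1 h8
  refine ⟨M, ?_, ?_, ?_⟩
  · intro u v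
    conv_lhs => rw [← hSM v]
    rw [← hSs, hSM]
  · intro u hu
    have h0 : M u ≠ 0 := by
      intro h
      apply hu
      rw [← hSM u, h, map_zero]
    have := hSpos _ h0
    rwa [hSM, real_inner_comm] at this
  · intro z hz hyz d hd
    obtain ⟨Z, hZ⟩ : ∃ Z, Z = z - p y := ⟨_, rfl⟩
    have h1 := hRz z hz hyz
    have h2 := c.aZ hy0 hz hyz
    rw [← hZ] at h1 h2 ⊢
    have hyZ : ⟪y, Z⟫ = 0 := by rw [hZ, inner_sub_right, hyz, sub_self]
    have hMy : M y = y := by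
      have : S y = y := by rw [hS, hRy, hyy]; simp
      conv_lhs => rw [← this]
      rw [hMS]
    have h3 := hS (a z)
    rw [h1] at h3
    have h4 := congrArg M h3
    rw [hMS, map_add, map_smul, map_smul, hMy] at h4
    have h5 : ∀ d, ⟪y, d⟫ = 0 → ⟪a z, d⟫ = ⟪R (a z), a z⟫ * ⟪M Z, d⟫ := by
      intro d hd
      conv_lhs => rw [h4]
      rw [inner_add_left, real_inner_smul_left, real_inner_smul_left, hd]; 
      rw [h1]; ring
    have h6 := h5 Z hyZ
    rw [h2] at h6
    rw [h5 d hd]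
    linear_combination (-⟪M Z, d⟫ : ℝ) * (-h6)

end Ctx

section Fam
variable {ι W : Type*} [AddCommGroup W] [Module ℝ W]

def MatchB (l : ι → W →ₗ[ℝ] ℝ) (b : ι → W →ₗ[ℝ] W →ₗ[ℝ] ℝ) (B : W →ₗ[ℝ] W →ₗ[ℝ] ℝ) (i : ι) :
    Prop := ∃ k : ℝ, 0 < k ∧ ∀ u v, l i u = 0 → l i v = 0 → B u v = k * b i u v

structure Fam (l : ι → W →ₗ[ℝ] ℝ) (b : ι → W →ₗ[ℝ] W →ₗ[ℝ] ℝ) (S : Set ι) : Prop where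
  sym : ∀ i ∈ S, ∀ u v, b i u v = b i v u
  TI : ∀ i ∈ S, ∀ j ∈ S, ∀ k ∈ S, i ≠ j → i ≠ k → j ≠ k → ∃ e, l i e = 1 ∧ l j e = 0 ∧ l k e = 0
  LL : ∀ i ∈ S, ∀ j ∈ S, i ≠ j → ∃ κ : ℝ, 0 < κ ∧ ∀ u v, l i u = 0 → l i v = 0 → l j u = 0 →
    l j v = 0 → b i u v = κ * b j u v
  POS : ∀ i ∈ S, ∀ j ∈ S, ∀ k ∈ S, i ≠ j → i ≠ k → j ≠ k → ∃ u, l i u = 0 ∧ l j u = 0 ∧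
    l k u = 0 ∧ 0 < b i u u

theorem glue {l1 l2 l3 : W →ₗ[ℝ] ℝ} {b1 b2 b3 : W →ₗ[ℝ] W →ₗ[ℝ] ℝ} {e1 e2 e3 : W}
    (h11 : l1 e1 = 1) (h12 : l1 e2 = 0) (h13 : l1 e3 = 0)
    (h21 : l2 e1 = 0) (h22 : l2 e2 = 1) (h23 : l2 e3 = 0)
    (h31 : l3 e1 = 0) (h32 : l3 e2 = 0) (h33 : l3 e3 = 1)
    (s1 : ∀ u v, b1 u v = b1 v u) (s2 : ∀ u v, b2 u v = b2 v u) (s3 : ∀ u v, b3 u v = b3 v u)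
    (a12 : ∀ u v, l1 u = 0 → l1 v = 0 → l2 u = 0 → l2 v = 0 → b1 u v = b2 u v)
    (a13 : ∀ u v, l1 u = 0 → l1 v = 0 → l3 u = 0 → l3 v = 0 → b1 u v = b3 u v)
    (a23 : ∀ u v, l2 u = 0 → l2 v = 0 → l3 u = 0 → l3 v = 0 → b2 u v = b3 u v) :
    ∃ B : W →ₗ[ℝ] W →ₗ[ℝ] ℝ, (∀ u v, B u v = B v u) ∧
      (∀ u v, l1 u = 0 → l1 v = 0 → B u v = b1 u v) ∧
      (∀ u v, l2 u = 0 → l2 v = 0 → B u v = b2 u v) ∧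
      (∀ u v, l3 u = 0 → l3 v = 0 → B u v = b3 u v) := by
  obtain ⟨P1, hP1⟩ : ∃ P : W →ₗ[ℝ] W, ∀ u, P u = u - l1 u • e1 :=
    ⟨LinearMap.id - l1.smulRight e1, fun u => by simp⟩
  obtain ⟨P2, hP2⟩ : ∃ P : W →ₗ[ℝ] W, ∀ u, P u = u - l2 u • e2 :=
    ⟨LinearMap.id - l2.smulRight e2, fun u => by simp⟩
  obtain ⟨P3, hP3⟩ : ∃ P : W →ₗ[ℝ] W, ∀ u, P u = u - l3 u • e3 :=
    ⟨LinearMap.id - l3.smulRight e3, fun u => by simp⟩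
  have L1 : ∀ u, l1 (P1 u) = 0 ∧ l1 (P2 u) = l1 u ∧ l1 (P3 u) = l1 u := by
    intro u; simp [hP1, hP2, hP3, h11, h12, h13]
  have L2 : ∀ u, l2 (P1 u) = l2 u ∧ l2 (P2 u) = 0 ∧ l2 (P3 u) = l2 u := by
    intro u; simp [hP1, hP2, hP3, h21, h22, h23]
  have L3 : ∀ u, l3 (P1 u) = l3 u ∧ l3 (P2 u) = l3 u ∧ l3 (P3 u) = 0 := by
    intro u; simp [hP1, hP2, hP3, h31, h32, h33]
  have F1 : ∀ u, l1 u = 0 → P1 u = u := by intro u h; simp [hP1, h]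
  have F2 : ∀ u, l2 u = 0 → P2 u = u := by intro u h; simp [hP2, h]
  have F3 : ∀ u, l3 u = 0 → P3 u = u := by intro u h; simp [hP3, h]
  refine ⟨b1.compl₁₂ P1 P1 + b2.compl₁₂ P2 P2 + b3.compl₁₂ P3 P3
    - b1.compl₁₂ (P1 ∘ₗ P2) (P1 ∘ₗ P2) - b1.compl₁₂ (P1 ∘ₗ P3) (P1 ∘ₗ P3)
    - b2.compl₁₂ (P2 ∘ₗ P3) (P2 ∘ₗ P3)
    + b1.compl₁₂ (P1 ∘ₗ P2 ∘ₗ P3) (P1 ∘ₗ P2 ∘ₗ P3), ?_, ?_, ?_, ?_⟩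
  · intro u v
    simp only [LinearMap.add_apply, LinearMap.sub_apply, LinearMap.compl₁₂_apply,
      LinearMap.comp_apply]
    rw [s1 (P1 u), s2 (P2 u), s3 (P3 u), s1 (P1 (P2 u)), s1 (P1 (P3 u)), s2 (P2 (P3 u)),
      s1 (P1 (P2 (P3 u)))]
  · intro u v hu hv
    simp only [LinearMap.add_apply, LinearMap.sub_apply, LinearMap.compl₁₂_apply,
      LinearMap.comp_apply]
    have g2 : ∀ u, l1 u = 0 → l1 (P2 u) = 0 := fun u h => by rw [(L1 u).2.1, h]
    have g3 : ∀ u, l1 u = 0 → l1 (P3 u) = 0 := fun u h => by rw [(L1 u).2.2, h]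
    rw [F1 u hu, F1 v hv, F1 _ (g2 u hu), F1 _ (g2 v hv), F1 _ (g3 u hu), F1 _ (g3 v hv),
      F1 _ (g2 _ (g3 u hu)), F1 _ (g2 _ (g3 v hv)),
      a12 _ _ (g2 u hu) (g2 v hv) (L2 u).2.1 (L2 v).2.1,
      a13 _ _ (g3 u hu) (g3 v hv) (L3 u).2.2 (L3 v).2.2,
      a12 _ _ (g2 _ (g3 u hu)) (g2 _ (g3 v hv)) (L2 _).2.1 (L2 _).2.1]
    ring
  · intro u v hu hv
    simp only [LinearMap.add_apply, LinearMap.sub_apply, LinearMap.compl₁₂_apply,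
      LinearMap.comp_apply]
    have g3 : ∀ u, l2 u = 0 → l2 (P3 u) = 0 := fun u h => by rw [(L2 u).2.2, h]
    rw [F2 u hu, F2 v hv, F2 _ (g3 u hu), F2 _ (g3 v hv),
      a23 _ _ (g3 u hu) (g3 v hv) (L3 u).2.2 (L3 v).2.2]
    ring
  · intro u v hu hv
    simp only [LinearMap.add_apply, LinearMap.sub_apply, LinearMap.compl₁₂_apply,
      LinearMap.comp_apply]
    rw [F3 u hu, F3 v hv]
    ring

theorem glue_unique {l1 l2 l3 : W →ₗ[ℝ] ℝ} {g : W →ₗ[ℝ] W →ₗ[ℝ] ℝ} {e1 e2 e3 : W}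
    (h11 : l1 e1 = 1) (h12 : l1 e2 = 0) (h13 : l1 e3 = 0)
    (h21 : l2 e1 = 0) (h22 : l2 e2 = 1) (h23 : l2 e3 = 0)
    (h31 : l3 e1 = 0) (h32 : l3 e2 = 0) (h33 : l3 e3 = 1)
    (g1 : ∀ u v, l1 u = 0 → l1 v = 0 → g u v = 0)
    (g2 : ∀ u v, l2 u = 0 → l2 v = 0 → g u v = 0)
    (g3 : ∀ u v, l3 u = 0 → l3 v = 0 → g u v = 0) (u v : W) : g u v = 0 := by
  have dec : ∀ u, ∃ n, l1 n = 0 ∧ l2 n = 0 ∧ l3 n = 0 ∧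
      u = n + l1 u • e1 + l2 u • e2 + l3 u • e3 := by
    intro u
    refine ⟨u - l1 u • e1 - l2 u • e2 - l3 u • e3, ?_, ?_, ?_, by abel⟩ <;>
      simp [h11, h12, h13, h21, h22, h23, h31, h32, h33]
  obtain ⟨n, n1, n2, n3, hu⟩ := dec u
  obtain ⟨m, m1, m2, m3, hv⟩ := dec v
  rw [hu, hv]
  simp only [map_add, map_smul, LinearMap.add_apply, LinearMap.smul_apply]
  rw [g1 n m n1 m1, g2 n e1 n2 h21, g1 n e2 n1 h12, g1 n e3 n1 h13,
    g2 e1 m h21 m2, g1 e2 m h12 m1, g1 e3 m h13 m1,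
    g2 e1 e1 h21 h21, g3 e1 e2 h31 h32, g2 e1 e3 h21 h23,
    g3 e2 e1 h32 h31, g1 e2 e2 h12 h12, g1 e2 e3 h12 h13,
    g2 e3 e1 h23 h21, g1 e3 e2 h13 h12, g1 e3 e3 h13 h13]
  simp

variable {l : ι → W →ₗ[ℝ] ℝ} {b : ι → W →ₗ[ℝ] W →ₗ[ℝ] ℝ} {S : Set ι}

theorem Fam.ex (F : Fam l b S) {i j k : ι} (hi : i ∈ S) (hj : j ∈ S) (hk : k ∈ S) (hij : i ≠ j)
    (hik : i ≠ k) (hjk : j ≠ k) :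
    ∃ B : W →ₗ[ℝ] W →ₗ[ℝ] ℝ, (∀ u v, B u v = B v u) ∧ ∀ m ∈ S, MatchB l b B m := by
  obtain ⟨e1, h11, h21, h31⟩ := F.TI i hi j hj k hk hij hik hjk
  obtain ⟨e2, h22, h12, h32⟩ := F.TI j hj i hi k hk hij.symm hjk hik
  obtain ⟨e3, h33, h13, h23⟩ := F.TI k hk i hi j hj hik.symm hjk.symm hij
  obtain ⟨x, hx, K12⟩ := F.LL i hi j hj hij
  obtain ⟨y, hy, K13⟩ := F.LL i hi k hk hik
  obtain ⟨z, hz, K23⟩ := F.LL j hj k hk hjk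
  obtain ⟨w, w1, w2, w3, hw⟩ := F.POS i hi j hj k hk hij hik hjk
  have hxyz : x * z = y := by
    have q1 := K12 w w w1 w1 w2 w2
    have q2 := K13 w w w1 w1 w3 w3
    have q3 := K23 w w w2 w2 w3 w3
    have : b k w w ≠ 0 := by intro h; rw [h] at q2; linarith
    apply mul_right_cancel₀ this
    rw [← q2, q1, q3]; ring
  obtain ⟨B, hB, B1, B2, B3⟩ := glue (b1 := b i) (b2 := x • b j) (b3 := y • b k)
    h11 h12 h13 h21 h22 h23 h31 h32 h33 (F.sym i hi)
    (fun u v => by simp [F.sym j hj u v]) (fun u v => by simp [F.sym k hk u v])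
    (fun u v a1 a2 a3 a4 => by simpa using K12 u v a1 a2 a3 a4)
    (fun u v a1 a2 a3 a4 => by simpa using K13 u v a1 a2 a3 a4)
    (fun u v a1 a2 a3 a4 => by
      have := K23 u v a1 a2 a3 a4
      simp only [LinearMap.smul_apply, smul_eq_mul]
      rw [this, ← hxyz]; ring)
  refine ⟨B, hB, ?_⟩
  have M1 : MatchB l b B i := ⟨1, one_pos, fun u v a1 a2 => by rw [B1 u v a1 a2, one_mul]⟩
  have M2 : MatchB l b B j := ⟨x, hx, fun u v a1 a2 => by rw [B2 u v a1 a2]; simp⟩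
  have M3 : MatchB l b B k := ⟨y, hy, fun u v a1 a2 => by rw [B3 u v a1 a2]; simp⟩
  intro m hm
  by_cases mi : m = i
  · rw [mi]; exact M1
  by_cases mj : m = j
  · rw [mj]; exact M2
  by_cases mk : m = k
  · rw [mk]; exact M3
  have ratio : ∀ n ∈ S, m ≠ n → MatchB l b B n → ∃ q : ℝ, 0 < q ∧ ∀ u v, l m u = 0 → l m v = 0 →
      l n u = 0 → l n v = 0 → B u v = q * b m u v := by
    rintro n hn hmn ⟨s, hs, hB⟩
    obtain ⟨κ, hκ, hκ'⟩ := F.LL n hn m hm hmn.symm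
    refine ⟨s * κ, by positivity, fun u v a1 a2 a3 a4 => ?_⟩
    rw [hB u v a3 a4, hκ' u v a3 a4 a1 a2]; ring
  obtain ⟨q1, hq1, Q1⟩ := ratio i hi mi M1
  obtain ⟨q2, hq2, Q2⟩ := ratio j hj mj M2
  obtain ⟨q3, hq3, Q3⟩ := ratio k hk mk M3
  have e12 : q1 = q2 := by
    obtain ⟨w, w1, w2, w3, hw⟩ := F.POS m hm i hi j hj mi mj hij
    apply mul_right_cancel₀ hw.ne'
    rw [← Q1 w w w1 w1 w2 w2, ← Q2 w w w1 w1 w3 w3]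
  have e13 : q1 = q3 := by
    obtain ⟨w, w1, w2, w3, hw⟩ := F.POS m hm i hi k hk mi mk hik
    apply mul_right_cancel₀ hw.ne'
    rw [← Q1 w w w1 w1 w2 w2, ← Q3 w w w1 w1 w3 w3]
  subst e12
  subst e13
  refine ⟨q1, hq1, ?_⟩
  obtain ⟨g, hg⟩ : ∃ g : W →ₗ[ℝ] W →ₗ[ℝ] ℝ, ∀ u v, g u v = B u v - q1 * b m u v :=
    ⟨B - q1 • b m, fun u v => by simp⟩
  have gs : ∀ u v, g u v = g v u := by intro u v; rw [hg, hg, hB, F.sym m hm]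
  have G1 : ∀ u v, l m u = 0 → l m v = 0 → l i u = 0 → l i v = 0 → g u v = 0 :=
    fun u v a1 a2 a3 a4 => by rw [hg, Q1 u v a1 a2 a3 a4, sub_self]
  have G2 : ∀ u v, l m u = 0 → l m v = 0 → l j u = 0 → l j v = 0 → g u v = 0 :=
    fun u v a1 a2 a3 a4 => by rw [hg, Q2 u v a1 a2 a3 a4, sub_self]
  have G3 : ∀ u v, l m u = 0 → l m v = 0 → l k u = 0 → l k v = 0 → g u v = 0 :=
    fun u v a1 a2 a3 a4 => by rw [hg, Q3 u v a1 a2 a3 a4, sub_self]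
  obtain ⟨e, ei, ej, em⟩ := F.TI i hi j hj m hm hij (Ne.symm mi) (Ne.symm mj)
  obtain ⟨f, fj, fi, fm⟩ := F.TI j hj i hi m hm hij.symm (Ne.symm mj) (Ne.symm mi)
  have form : ∀ u v, l m u = 0 → l m v = 0 →
      g u v = (l i u * l j v + l j u * l i v) * g e f := by
    have dec : ∀ u, l m u = 0 → ∃ n, l i n = 0 ∧ l j n = 0 ∧ l m n = 0 ∧
        u = n + l i u • e + l j u • f := by
      intro u hu
      refine ⟨u - l i u • e - l j u • f, ?_, ?_, ?_, by abel⟩ <;>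
        simp [ei, ej, em, fi, fj, fm, hu]
    intro u v hu hv
    obtain ⟨n, n1, n2, n3, hu'⟩ := dec u hu
    obtain ⟨n', m1, m2, m3, hv'⟩ := dec v hv
    conv_lhs => rw [hu', hv']
    simp only [map_add, map_smul, LinearMap.add_apply, LinearMap.smul_apply, smul_eq_mul]
    rw [G1 n n' n3 m3 n1 m1, G2 n e n3 em n2 ej, G1 n f n3 fm n1 fi, G2 e n' em m3 ej m2,
      G1 f n' fm m3 fi m1, G2 e e em em ej ej, G1 f f fm fm fi fi, gs f e]
    ring
  have gz : g e f = 0 := by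
    obtain ⟨v, v1, v2, v3⟩ := F.TI i hi k hk m hm hik (Ne.symm mi) (Ne.symm mk)
    obtain ⟨w, w1, w2, w3⟩ := F.TI j hj k hk m hm hjk (Ne.symm mj) (Ne.symm mk)
    have r1 := form v v v3 v3
    have r3 := form v w v3 w3
    rw [G3 _ _ v3 v3 v2 v2, v1] at r1
    rw [G3 _ _ v3 w3 v2 w2, v1, w1] at r3
    linear_combination -r3 + l i w / 2 * r1
  intro u v hu hv
  have := form u v hu hv
  rw [gz, mul_zero, hg] at this
  linarith

theorem Fam.uniq (F : Fam l b S) {i j k : ι} (hi : i ∈ S) (hj : j ∈ S) (hk : k ∈ S) (hij : i ≠ j)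
    (hik : i ≠ k) (hjk : j ≠ k) {B B' : W →ₗ[ℝ] W →ₗ[ℝ] ℝ}
    (M1 : MatchB l b B i) (M2 : MatchB l b B j) (M3 : MatchB l b B k)
    (N1 : MatchB l b B' i) (N2 : MatchB l b B' j) (N3 : MatchB l b B' k) :
    ∃ q : ℝ, 0 < q ∧ ∀ u v, B' u v = q * B u v := by
  obtain ⟨e1, h11, h21, h31⟩ := F.TI i hi j hj k hk hij hik hjk
  obtain ⟨e2, h22, h12, h32⟩ := F.TI j hj i hi k hk hij.symm hjk hik
  obtain ⟨e3, h33, h13, h23⟩ := F.TI k hk i hi j hj hik.symm hjk.symm hij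
  obtain ⟨w, w1, w2, w3, hw⟩ := F.POS i hi j hj k hk hij hik hjk
  have hBw : 0 < B w w := by
    obtain ⟨s, hs, h⟩ := M1
    rw [h w w w1 w1]; positivity
  have rat : ∀ n, l n w = 0 → MatchB l b B n → MatchB l b B' n → ∀ u v, l n u = 0 → l n v = 0 →
      B' u v = B' w w / B w w * B u v := by
    rintro n hn ⟨s, hs, h⟩ ⟨t, ht, h'⟩ u v hu hv
    rw [h u v hu hv, h' u v hu hv, h w w hn hn, h' w w hn hn]
    rw [h w w hn hn] at hBw
    have : b n w w ≠ 0 := by intro h0; rw [h0] at hBw; simp at hBw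
    field_simp
  refine ⟨B' w w / B w w, ?_, fun u v => ?_⟩
  · obtain ⟨s, hs, h⟩ := N1
    rw [h w w w1 w1]; positivity
  · have := glue_unique (g := B' - (B' w w / B w w) • B) h11 h12 h13 h21 h22 h23 h31 h32 h33
      (fun u v a1 a2 => by simp [rat i w1 M1 N1 u v a1 a2])
      (fun u v a1 a2 => by simp [rat j w2 M2 N2 u v a1 a2])
      (fun u v a1 a2 => by simp [rat k w3 M3 N3 u v a1 a2]) u v
    simp at this
    linarith

end Fam

def prW (p : E3 → E3) (y : E3) : E3 × ℝ →ₗ[ℝ] E3 :=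
  LinearMap.fst ℝ E3 ℝ - (LinearMap.snd ℝ E3 ℝ).smulRight (p y)

def lW (p : E3 → E3) (y : E3) : E3 × ℝ →ₗ[ℝ] ℝ := (innerₗ E3 y) ∘ₗ prW p y

def bW (p : E3 → E3) (M : E3 → E3 →ₗ[ℝ] E3) (y : E3) : E3 × ℝ →ₗ[ℝ] E3 × ℝ →ₗ[ℝ] ℝ :=
  (innerₗ E3).compl₁₂ (M y ∘ₗ prW p y) (prW p y)

lemma prW_apply (p : E3 → E3) (y : E3) (u : E3 × ℝ) : prW p y u = u.1 - u.2 • p y := by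
  simp [prW]

lemma lW_apply (p : E3 → E3) (y : E3) (u : E3 × ℝ) :
    lW p y u = ⟪y, u.1⟫ - u.2 * ⟪y, p y⟫ := by
  simp [lW, prW_apply, inner_sub_right, inner_smul_right]

lemma bW_apply (p : E3 → E3) (M : E3 → E3 →ₗ[ℝ] E3) (y : E3) (u v : E3 × ℝ) :
    bW p M y u v = ⟪M y (u.1 - u.2 • p y), v.1 - v.2 • p y⟫ := by
  rw [← prW_apply, ← prW_apply]; rfl

namespace Ctx
variable {K L : Set E3} {p a : E3 → E3} {r : ℝ} (c : Ctx K L p a r)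
include c

lemma strict {y y' : E3} (hy : ‖y‖ = 1) (hy' : ‖y'‖ = 1) (h : y ≠ y') :
    ⟪y, p y'⟫ < ⟪y, p y⟫ := by
  have hy0 : y ≠ 0 := by rintro rfl; simp at hy
  have hy'0 : y' ≠ 0 := by rintro rfl; simp at hy'
  refine lt_of_le_of_ne (c.hmax _ _) fun he => h ?_
  have h1 := c.puniq y hy0 _ (c.pL y') he
  obtain ⟨t, ht, h2⟩ := c.smooth hy'0 hy0 h1
  have : ‖y‖ = t * ‖y'‖ := by rw [h2, norm_smul, Real.norm_of_nonneg ht.le]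
  rw [hy, hy', mul_one] at this
  rw [h2, ← this, one_smul]

lemma ti {y1 y2 y3 : E3} (h1 : ‖y1‖ = 1) (h2 : ‖y2‖ = 1) (h3 : ‖y3‖ = 1) (h12 : y1 ≠ y2)
    (h13 : y1 ≠ y3) (h23 : y2 ≠ y3) :
    ∃ e, lW p y1 e = 1 ∧ lW p y2 e = 0 ∧ lW p y3 e = 0 := by
  have n1 : y1 ≠ 0 := by rintro rfl; simp at h1
  have n2 : y2 ≠ 0 := by rintro rfl; simp at h2
  have n3 : y3 ≠ 0 := by rintro rfl; simp at h3
  by_contra hno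
  have hker : ∀ e, lW p y2 e = 0 → lW p y3 e = 0 → lW p y1 e = 0 := by
    intro e e2 e3
    by_contra e1
    exact hno ⟨(lW p y1 e)⁻¹ • e, by simp [e1], by simp [e2], by simp [e3]⟩
  have hsp := mem_span_of_iInf_ker_le_ker (L := ![lW p y2, lW p y3]) (K := lW p y1) (by
    intro e he
    simp only [Submodule.mem_iInf, LinearMap.mem_ker] at he ⊢
    exact hker e (he 0) (he 1))
  rw [Matrix.range_cons, Matrix.range_cons, Matrix.range_empty, union_empty] at hsp
  rw [show ({lW p y2} ∪ {lW p y3} : Set (E3 × ℝ →ₗ[ℝ] ℝ)) = {lW p y2, lW p y3} from rfl,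
    Submodule.mem_span_pair] at hsp
  obtain ⟨α, β, hαβ⟩ := hsp
  have hx : ∀ x, α * ⟪y2, x⟫ + β * ⟪y3, x⟫ = ⟪y1, x⟫ := by
    intro x
    have := congrArg (fun f => f (x, (0 : ℝ))) hαβ
    simpa [lW_apply] using this
  have hh : α * ⟪y2, p y2⟫ + β * ⟪y3, p y3⟫ = ⟪y1, p y1⟫ := by
    have := congrArg (fun f => f ((0 : E3), (-1 : ℝ))) hαβ
    simpa [lW_apply] using this
  have q1 := c.h_pos n1
  have q2 := c.h_pos n2
  have q3 := c.h_pos n3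
  rcases lt_or_ge β 0 with hβ | hβ
  · have hx2 := hx (p y2)
    have s1 := c.strict h1 h2 h12
    have s2 := mul_pos_of_neg_of_neg hβ (sub_neg.2 (c.strict h3 h2 h23.symm))
    linarith
  rcases lt_or_ge α 0 with hα | hα
  · have hx2 := hx (p y3)
    have s1 := c.strict h1 h3 h13
    have s2 := mul_pos_of_neg_of_neg hα (sub_neg.2 (c.strict h2 h3 h23))
    linarith
  have hx1 := hx (p y1)
  have d2 := sub_pos.2 (c.strict h2 h1 h12.symm)
  have d3 := sub_pos.2 (c.strict h3 h1 h13.symm)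
  have s2 := mul_nonneg hα d2.le
  have s3 := mul_nonneg hβ d3.le
  have z2 : α * (⟪y2, p y2⟫ - ⟪y2, p y1⟫) = 0 := by linarith
  have z3 : β * (⟪y3, p y3⟫ - ⟪y3, p y1⟫) = 0 := by linarith
  have hα0 := (mul_eq_zero.1 z2).resolve_right d2.ne'
  have hβ0 := (mul_eq_zero.1 z3).resolve_right d3.ne'
  rw [hα0, hβ0] at hh
  linarith

lemma posW {M : E3 → E3 →ₗ[ℝ] E3} (hM : ∀ y, ‖y‖ = 1 → Conj K p a y (M y))
    {y1 y2 y3 : E3} (h1 : ‖y1‖ = 1) (h2 : ‖y2‖ = 1) (h12 : y1 ≠ y2) :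
    ∃ u, lW p y1 u = 0 ∧ lW p y2 u = 0 ∧ lW p y3 u = 0 ∧ 0 < bW p M y1 u u := by
  have hker := LinearMap.ker_ne_bot_of_finrank_lt
    (f := (LinearMap.pi ![lW p y1, lW p y2, lW p y3] : E3 × ℝ →ₗ[ℝ] (Fin 3 → ℝ))) (by simp)
  obtain ⟨u, hu, hu0⟩ := Submodule.exists_mem_ne_zero_of_ne_bot hker
  rw [LinearMap.mem_ker] at hu
  have e1 : lW p y1 u = 0 := congrFun hu 0
  have e2 : lW p y2 u = 0 := congrFun hu 1
  have e3 : lW p y3 u = 0 := congrFun hu 2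
  refine ⟨u, e1, e2, e3, ?_⟩
  rw [bW_apply]
  refine (hM y1 h1).2.1 _ fun h0 => hu0 ?_
  rw [sub_eq_zero] at h0
  rw [lW_apply, h0, inner_smul_right, ← mul_sub] at e2
  have h5 := (mul_eq_zero.1 e2).resolve_right (sub_neg.2 (c.strict h2 h1 h12.symm)).ne
  rw [h5, zero_smul] at h0
  exact Prod.ext h0 h5

lemma ll_aux {M : E3 → E3 →ₗ[ℝ] E3} (hM : ∀ y, ‖y‖ = 1 → Conj K p a y (M y))
    {y1 y2 u d : E3} {t t' : ℝ} (h1 : ‖y1‖ = 1) (h2 : ‖y2‖ = 1) (h12 : y1 ≠ y2)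
    (hg : 0 < ⟪y1, y2⟫) (hd : ‖d‖ = 1) (hd1 : ⟪y1, d⟫ = 0) (hd2 : ⟪y2, d⟫ = 0)
    (hu1 : ⟪y1, u⟫ = ⟪y1, p y1⟫) (hu2 : ⟪y2, u⟫ = ⟪y2, p y2⟫) (ht : 0 < t) (ht' : 0 < t')
    (hz : u + t • d ∈ frontier K) (hw : u - t' • d ∈ frontier K)
    (hP' : 1 + ⟪a (u - t' • d), (u + t • d) - (u - t' • d)⟫ ≠ 0) :
    ∃ κ : ℝ, 0 < κ ∧ ∀ v w, lW p y1 v = 0 → lW p y1 w = 0 → lW p y2 v = 0 →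
    lW p y2 w = 0 → bW p M y1 v w = κ * bW p M y2 v w := by
  have n1 : y1 ≠ 0 := by rintro rfl; simp at h1
  have n2 : y2 ≠ 0 := by rintro rfl; simp at h2
  have hdd : ⟪d, d⟫ = 1 := by rw [real_inner_self_eq_norm_sq, hd]; norm_num
  have h11 : ⟪y1, y1⟫ = 1 := by rw [real_inner_self_eq_norm_sq, h1]; norm_num
  have h22 : ⟪y2, y2⟫ = 1 := by rw [real_inner_self_eq_norm_sq, h2]; norm_num
  obtain ⟨z, hzd⟩ : ∃ z, z = u + t • d := ⟨_, rfl⟩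
  obtain ⟨w, hwd⟩ : ∃ w, w = u - t' • d := ⟨_, rfl⟩
  rw [← hzd] at hz hP'
  rw [← hwd] at hw hP'
  have hg1 : ⟪y1, y2⟫ < 1 := (inner_lt_one_iff_real_of_norm_eq_one h1 h2).2 h12
  have hzw : z - w = (t + t') • d := by rw [hzd, hwd]; module
  obtain ⟨P, hP⟩ : ∃ P, P = 1 + ⟪a z, w - z⟫ := ⟨_, rfl⟩
  obtain ⟨P', hPd⟩ : ∃ P', P' = 1 + ⟪a w, z - w⟫ := ⟨_, rfl⟩
  rw [← hPd] at hP'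
  have val : ∀ y, ‖y‖ = 1 → ⟪y, d⟫ = 0 → ⟪y, u⟫ = ⟪y, p y⟫ →
      0 < bW p M y (z, 1) (z, 1) ∧ bW p M y (z, 1) (w, 1) = bW p M y (z, 1) (z, 1) * P ∧
      bW p M y (w, 1) (z, 1) = bW p M y (z, 1) (z, 1) * P ∧
      bW p M y (w, 1) (w, 1) = bW p M y (z, 1) (z, 1) * (P / P') := by
    intro y hy hyd hyu
    obtain ⟨hs, hp, hc⟩ := hM y hy
    have hyz : ⟪y, z⟫ = ⟪y, p y⟫ := by
      rw [hzd, inner_add_right, inner_smul_right, hyd, hyu]; ring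
    have hyw : ⟪y, w⟫ = ⟪y, p y⟫ := by
      rw [hwd, inner_sub_right, inner_smul_right, hyd, hyu]; ring
    simp only [bW_apply, one_smul]
    have hZ0 : z - p y ≠ 0 := by
      intro h; rw [sub_eq_zero] at h; exact c.frK_notL hz (h ▸ c.pL y)
    have c1 := hc z hz hyz (w - z) (by rw [inner_sub_right, hyz, hyw, sub_self])
    have c2 := hc w hw hyw (z - w) (by rw [inner_sub_right, hyz, hyw, sub_self])
    have e1 : ⟪M y (z - p y), w - p y⟫ = ⟪M y (z - p y), z - p y⟫ * P := by
      have : w - p y = (z - p y) + (w - z) := by abel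
      rw [this, inner_add_right, c1, hP]; ring
    have e2 : ⟪M y (w - p y), z - p y⟫ = ⟪M y (w - p y), w - p y⟫ * P' := by
      have : z - p y = (w - p y) + (z - w) := by abel
      rw [this, inner_add_right, c2, hPd]; ring
    have e3 : ⟪M y (w - p y), z - p y⟫ = ⟪M y (z - p y), w - p y⟫ := by
      rw [hs, real_inner_comm]
    refine ⟨hp _ hZ0, e1, e3.trans e1, ?_⟩
    rw [← mul_div_assoc, eq_div_iff hP', ← e2, e3, e1]
  have span : ∀ v, lW p y1 v = 0 → lW p y2 v = 0 → ∃ α β : ℝ, v = α • (z, (1 : ℝ)) + β • (w, (1 : ℝ)) := by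
    intro v hv1 hv2
    rw [lW_apply] at hv1 hv2
    obtain ⟨x, hx⟩ : ∃ x, x = v.1 - v.2 • u := ⟨_, rfl⟩
    have hx1 : ⟪y1, x⟫ = 0 := by rw [hx, inner_sub_right, inner_smul_right, hu1]; exact hv1
    have hx2 : ⟪y2, x⟫ = 0 := by rw [hx, inner_sub_right, inner_smul_right, hu2]; exact hv2
    have h3 : x - ⟪d, x⟫ • d = 0 := by
      refine orth3 (u := y1) (v := y2) (w := d) ?_ ?_ ?_ ?_
      · intro α β γ h
        have i1 : ⟪y1, α • y1 + β • y2 + γ • d⟫ = 0 := by rw [h, inner_zero_right]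
        have i2 : ⟪y2, α • y1 + β • y2 + γ • d⟫ = 0 := by rw [h, inner_zero_right]
        have i3 : ⟪d, α • y1 + β • y2 + γ • d⟫ = 0 := by rw [h, inner_zero_right]
        simp only [inner_add_right, inner_smul_right, h11, h22, hdd, hd1, hd2,
          real_inner_comm y1 d, real_inner_comm y2 d, real_inner_comm y1 y2] at i1 i2 i3
        have hq : 1 - ⟪y1, y2⟫ ^ 2 ≠ 0 := by
          have : 0 < (1 - ⟪y1, y2⟫) * (1 + ⟪y1, y2⟫) := mul_pos (by linarith) (by linarith)
          intro h; linarith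
        have hα : α = 0 := by
          apply (mul_eq_zero.1 _).resolve_right hq
          linear_combination i1 - ⟪y1, y2⟫ * i2
        have hβ : β = 0 := by rw [hα] at i2; linarith
        exact ⟨hα, hβ, by linarith⟩
      · rw [inner_sub_right, inner_smul_right, hd1, hx1]; ring
      · rw [inner_sub_right, inner_smul_right, hd2, hx2]; ring
      · rw [inner_sub_right, inner_smul_right, hdd]; ring
    have hx3 : v.1 = v.2 • u + ⟪d, x⟫ • d := by
      rw [← sub_eq_zero.1 h3, hx]; abel
    obtain ⟨s, hs⟩ : ∃ s, s = ⟪d, x⟫ := ⟨_, rfl⟩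
    rw [← hs] at hx3
    have htt : t + t' ≠ 0 := by positivity
    refine ⟨(s + v.2 * t') / (t + t'), (v.2 * t - s) / (t + t'), Prod.ext ?_ ?_⟩
    · rw [hx3, hzd, hwd]
      simp only [Prod.fst_add, Prod.smul_fst]
      match_scalars <;> field_simp <;> ring
    · simp only [Prod.snd_add, Prod.smul_snd, smul_eq_mul]
      field_simp; ring
  obtain ⟨A1, A2, A3, A4⟩ := val y1 h1 hd1 hu1
  obtain ⟨B1, B2, B3, B4⟩ := val y2 h2 hd2 hu2
  refine ⟨bW p M y1 (z, 1) (z, 1) / bW p M y2 (z, 1) (z, 1), by positivity, ?_⟩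
  intro v v' a1 a2 a3 a4
  obtain ⟨α, β, hv⟩ := span v a1 a3
  obtain ⟨α', β', hv'⟩ := span v' a2 a4
  rw [hv, hv']
  simp only [map_add, map_smul, LinearMap.add_apply, LinearMap.smul_apply, smul_eq_mul]
  rw [A2, A3, A4, B2, B3, B4]
  field_simp

end Ctx

namespace Ctx
variable {K L : Set E3} {p a : E3 → E3} {r : ℝ} (c : Ctx K L p a r)
include c

lemma ll_ev {M : E3 → E3 →ₗ[ℝ] E3} (hM : ∀ y, ‖y‖ = 1 → Conj K p a y (M y))
    {y0 : E3} (h0 : ‖y0‖ = 1) :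
    ∀ᶠ q : E3 × E3 in 𝓝 (y0, y0), ‖q.1‖ = 1 → ‖q.2‖ = 1 → q.1 ≠ q.2 →
    ∃ κ : ℝ, 0 < κ ∧ ∀ v w, lW p q.1 v = 0 → lW p q.1 w = 0 → lW p q.2 v = 0 →
    lW p q.2 w = 0 → bW p M q.1 v w = κ * bW p M q.2 v w := by
  have n0 : y0 ≠ 0 := by rintro rfl; simp at h0
  have h00 : ⟪y0, y0⟫ = 1 := by rw [real_inner_self_eq_norm_sq, h0]; norm_num
  suffices hs : ∀ᶠ q : E3 × E3 in 𝓝 (y0, y0) ⊓ 𝓟 {q | ‖q.1‖ = 1 ∧ ‖q.2‖ = 1 ∧ q.1 ≠ q.2},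
      ∃ κ : ℝ, 0 < κ ∧ ∀ v w, lW p q.1 v = 0 → lW p q.1 w = 0 → lW p q.2 v = 0 →
      lW p q.2 w = 0 → bW p M q.1 v w = κ * bW p M q.2 v w by
    rw [eventually_inf_principal] at hs
    filter_upwards [hs] with q hq a1 a2 a3
    exact hq ⟨a1, a2, a3⟩
  rw [Filter.Eventually, mem_iff_ultrafilter]
  intro U hU
  have hq : Tendsto (fun q : E3 × E3 => q) U (𝓝 (y0, y0)) := hU.trans inf_le_left
  have hq1 : Tendsto (fun q : E3 × E3 => q.1) U (𝓝 y0) := (continuous_fst.tendsto (y0, y0)).comp hq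
  have hq2 : Tendsto (fun q : E3 × E3 => q.2) U (𝓝 y0) := (continuous_snd.tendsto (y0, y0)).comp hq
  have hprop : ∀ᶠ q : E3 × E3 in (U : Filter (E3 × E3)), ‖q.1‖ = 1 ∧ ‖q.2‖ = 1 ∧ q.1 ≠ q.2 :=
    (hU.trans inf_le_right) (mem_principal_self _)
  have hgt : Tendsto (fun q : E3 × E3 => ⟪q.1, q.2⟫) U (𝓝 1) := by
    have := hq1.inner (𝕜 := ℝ) hq2
    rwa [h00] at this
  have hg : ∀ᶠ q : E3 × E3 in (U : Filter (E3 × E3)), 0 < ⟪q.1, q.2⟫ :=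
    hgt.eventually (isOpen_Ioi.mem_nhds (by norm_num))
  choose d hd using fun q : E3 × E3 => exists_orth q.1 q.2
  obtain ⟨d0, hd0S, hdt⟩ := ulim U (isCompact_sphere (0 : E3) 1) d
    (Eventually.of_forall fun q => by simpa using (hd q).1)
  have hd0 : ‖d0‖ = 1 := by simpa using hd0S
  have nd0 : d0 ≠ 0 := by rintro rfl; simp at hd0
  have hy0d0 : ⟪y0, d0⟫ = 0 :=
    tendsto_nhds_unique (hq1.inner (𝕜 := ℝ) hdt) (tendsto_const_nhds.congr fun q => ((hd q).2.1).symm)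
  obtain ⟨D, hD⟩ : ∃ D : E3 × E3 → E3, ∀ q, D q = p q.2 - p q.1 := ⟨_, fun _ => rfl⟩
  have hp1 := c.p_tendsto n0 hq1
  have hp2 := c.p_tendsto n0 hq2
  have hDt : Tendsto D U (𝓝 0) := by
    have := hp2.sub hp1
    rw [sub_self] at this
    exact this.congr fun q => (hD q).symm
  obtain ⟨α, hα⟩ : ∃ α : E3 × E3 → ℝ, ∀ q, α q = ⟪q.2, D q⟫ / (⟪q.2, D q⟫ - ⟪q.1, D q⟫ * ⟪q.1, q.2⟫) :=
    ⟨_, fun _ => rfl⟩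
  have hsgn : ∀ᶠ q : E3 × E3 in (U : Filter (E3 × E3)), 0 < ⟪q.2, D q⟫ ∧ ⟪q.1, D q⟫ < 0 := by
    filter_upwards [hprop] with q hq
    have s1 := c.strict hq.1 hq.2.1 hq.2.2
    have s2 := c.strict hq.2.1 hq.1 hq.2.2.symm
    rw [hD, inner_sub_right, inner_sub_right]
    exact ⟨by linarith, by linarith⟩
  have hden : ∀ᶠ q : E3 × E3 in (U : Filter (E3 × E3)),
      0 < ⟪q.2, D q⟫ ∧ ⟪q.2, D q⟫ ≤ ⟪q.2, D q⟫ - ⟪q.1, D q⟫ * ⟪q.1, q.2⟫ := by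
    filter_upwards [hsgn, hg] with q h1 h2
    have := mul_neg_of_neg_of_pos h1.2 h2
    exact ⟨h1.1, by linarith⟩
  obtain ⟨α0, -, hαt⟩ := ulim U (isCompact_Icc (a := (0 : ℝ)) (b := 1)) α (by
    filter_upwards [hden] with q h1
    rw [hα]
    have h2 := h1.1.trans_le h1.2
    exact ⟨by have := h1.1; positivity, (div_le_one h2).2 h1.2⟩)
  obtain ⟨u, hu⟩ : ∃ u : E3 × E3 → E3, ∀ q, u q = p q.1 + α q • D q - (α q * ⟪q.1, D q⟫) • q.1 :=
    ⟨_, fun _ => rfl⟩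
  have hut : Tendsto u U (𝓝 (p y0)) := by
    have := (hp1.add (hαt.smul hDt)).sub ((hαt.mul (hq1.inner (𝕜 := ℝ) hDt)).smul hq1)
    rw [smul_zero, inner_zero_right, mul_zero, zero_smul, add_zero, sub_zero] at this
    exact this.congr fun q => (hu q).symm
  have hu1 : ∀ᶠ q : E3 × E3 in (U : Filter (E3 × E3)), ⟪q.1, u q⟫ = ⟪q.1, p q.1⟫ := by
    filter_upwards [hprop] with q hq
    rw [hu, inner_sub_right, inner_add_right, inner_smul_right, inner_smul_right,
      real_inner_self_eq_norm_sq, hq.1]; ring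
  have hu2 : ∀ᶠ q : E3 × E3 in (U : Filter (E3 × E3)), ⟪q.2, u q⟫ = ⟪q.2, p q.2⟫ := by
    filter_upwards [hden] with q hq
    have h1 : ⟪q.2, D q⟫ - ⟪q.1, D q⟫ * ⟪q.1, q.2⟫ ≠ 0 := (hq.1.trans_le hq.2).ne'
    have h2 : α q * (⟪q.2, D q⟫ - ⟪q.1, D q⟫ * ⟪q.1, q.2⟫) = ⟪q.2, D q⟫ := by
      rw [hα, div_mul_cancel₀ _ h1]
    have h3 : ⟪q.2, D q⟫ = ⟪q.2, p q.2⟫ - ⟪q.2, p q.1⟫ := by rw [hD, inner_sub_right]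
    rw [hu, inner_sub_right, inner_add_right, inner_smul_right, inner_smul_right,
      real_inner_comm q.1 q.2]
    linarith
  have hpin := c.pint y0
  have hui : ∀ᶠ q : E3 × E3 in (U : Filter (E3 × E3)), u q ∈ interior K :=
    hut.eventually (isOpen_interior.mem_nhds hpin)
  have hdn : ∀ q, d q ≠ 0 := fun q h => by have := (hd q).1; rw [h] at this; simp at this
  have ht := c.tau_tendsto hpin nd0 hut hdt
  have ht' := c.tau_tendsto hpin (neg_ne_zero.2 nd0) hut hdt.neg
  obtain ⟨t0, ht0⟩ : ∃ t0, t0 = tau K (p y0) d0 := ⟨_, rfl⟩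
  obtain ⟨t0', ht0'⟩ : ∃ t0', t0' = tau K (p y0) (-d0) := ⟨_, rfl⟩
  have sp := c.tau_spec hpin nd0
  have sp' := c.tau_spec hpin (neg_ne_zero.2 nd0)
  rw [← ht0] at ht sp
  rw [← ht0'] at ht' sp'
  obtain ⟨w, hw⟩ : ∃ w : E3 × E3 → E3, ∀ q, w q = u q - tau K (u q) (-d q) • d q := ⟨_, fun _ => rfl⟩
  have hwt : Tendsto w U (𝓝 (p y0 + t0' • -d0)) := by
    have := hut.add (ht'.smul hdt.neg)
    exact this.congr fun q => by rw [hw, smul_neg, sub_eq_add_neg]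
  have hwK : ∀ᶠ q : E3 × E3 in (U : Filter (E3 × E3)), w q ∈ frontier K := by
    filter_upwards [hui] with q hq
    have := (c.tau_spec hq (neg_ne_zero.2 (hdn q))).2
    rwa [hw, sub_eq_add_neg, ← smul_neg]
  have haw := c.a_tendsto sp'.2 hwK hwt
  have hzt : Tendsto (fun q => u q + tau K (u q) (d q) • d q) U (𝓝 (p y0 + t0 • d0)) :=
    hut.add (ht.smul hdt)
  have hPt := (haw.inner (𝕜 := ℝ) (hzt.sub hwt)).const_add 1
  have hval : 1 + ⟪a (p y0 + t0' • -d0), (p y0 + t0 • d0) - (p y0 + t0' • -d0)⟫ ≠ 0 := by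
    have h1 := c.aZ n0 sp'.2 (by rw [inner_add_right, inner_smul_right, inner_neg_right, hy0d0]; ring)
    rw [add_sub_cancel_left, inner_smul_right, inner_neg_right] at h1
    have e : (p y0 + t0 • d0) - (p y0 + t0' • -d0) = (t0 + t0') • d0 := by module
    rw [e, inner_smul_right]
    obtain ⟨X, hX⟩ : ∃ X, X = ⟪a (p y0 + t0' • -d0), d0⟫ := ⟨_, rfl⟩
    rw [← hX] at h1 ⊢
    intro h2
    have h3 : t0 * X = 0 := by linarith
    have h4 := (mul_eq_zero.1 h3).resolve_left sp.1.ne'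
    rw [h4] at h1
    simp at h1
  have hPe := hPt.eventually (isOpen_ne.mem_nhds hval)
  show ∀ᶠ q : E3 × E3 in (U : Filter (E3 × E3)), _
  filter_upwards [hprop, hg, hu1, hu2, hui, hwK, hPe] with q e1 e2 e3 e4 e5 e6 e7
  have s1 := c.tau_spec e5 (hdn q)
  have s2 := c.tau_spec e5 (neg_ne_zero.2 (hdn q))
  rw [hw] at e6 e7
  exact c.ll_aux hM e1.1 e1.2.1 e1.2.2 e2 (hd q).1 (hd q).2.1 (hd q).2.2 e3 e4 s1.1 s2.1 s1.2 e6 e7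

lemma fam {M : E3 → E3 →ₗ[ℝ] E3} (hM : ∀ y, ‖y‖ = 1 → Conj K p a y (M y))
    {y0 : E3} (h0 : ‖y0‖ = 1) :
    ∃ δ > 0, Fam (lW p) (bW p M) {y | ‖y‖ = 1 ∧ dist y y0 < δ} := by
  obtain ⟨δ, hδ, h⟩ := Metric.eventually_nhds_iff.1 (c.ll_ev hM h0)
  refine ⟨δ, hδ, ?_, ?_, ?_, ?_⟩
  · intro y hy u v
    rw [bW_apply, bW_apply, (hM y hy.1).1, real_inner_comm]
  · intro y1 e1 y2 e2 y3 e3 a1 a2 a3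
    exact c.ti e1.1 e2.1 e3.1 a1 a2 a3
  · intro y1 e1 y2 e2 h12
    exact h (y := (y1, y2)) (by rw [Prod.dist_eq]; exact max_lt e1.2 e2.2) e1.1 e2.1 h12
  · intro y1 e1 y2 e2 y3 e3 a1 a2 a3
    exact c.posW hM e1.1 e2.1 a1

end Ctx

lemma three_pts {X : Type*} {s : Set X} (hs : s.Infinite) :
    ∃ i ∈ s, ∃ j ∈ s, ∃ k ∈ s, i ≠ j ∧ i ≠ k ∧ j ≠ k := by
  classical
  obtain ⟨t, ht, h3⟩ := hs.exists_subset_card_eq 3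
  obtain ⟨x, y, z, hxy, hxz, hyz, rfl⟩ := Finset.card_eq_three.1 h3
  exact ⟨x, ht (by simp), y, ht (by simp), z, ht (by simp), hxy, hxz, hyz⟩

lemma rank_E3 : 1 < Module.rank ℝ E3 := by
  rw [← Module.finrank_eq_rank]; simp

namespace Ctx
variable {K L : Set E3} {p a : E3 → E3} {r : ℝ} (c : Ctx K L p a r)
include c

lemma glob {M : E3 → E3 →ₗ[ℝ] E3} (hM : ∀ y, ‖y‖ = 1 → Conj K p a y (M y)) :
    ∃ B : E3 × ℝ →ₗ[ℝ] E3 × ℝ →ₗ[ℝ] ℝ, (∀ u v, B u v = B v u) ∧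
      ∀ y, ‖y‖ = 1 → MatchB (lW p) (bW p M) B y := by
  have hn : ∀ y : sphere (0 : E3) 1, ‖(y : E3)‖ = 1 := fun y => by simpa using y.2
  obtain ⟨w, hw, -, -⟩ := exists_orth 0 0
  haveI : PreconnectedSpace (sphere (0 : E3) 1) :=
    Subtype.preconnectedSpace (isPreconnected_sphere rank_E3 0 1)
  haveI : Nontrivial (sphere (0 : E3) 1) := by
    refine ⟨⟨w, by simpa using hw⟩, ⟨-w, by simpa using hw⟩, ?_⟩
    intro h
    have h1 : w = -w := congrArg Subtype.val h
    have h2 : (2 : ℝ) • w = 0 := by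
      rw [two_smul]; nth_rewrite 1 [h1]; simp
    have : w = 0 := (smul_eq_zero.1 h2).resolve_left two_ne_zero
    rw [this] at hw; simp at hw
  haveI : ConnectedSpace (sphere (0 : E3) 1) := { toNonempty := inferInstance }
  have key : ∀ y0 : sphere (0 : E3) 1, ∃ N : Set (sphere (0 : E3) 1), IsOpen N ∧ y0 ∈ N ∧
      Fam (lW p) (bW p M) (Subtype.val '' N) := by
    intro y0
    obtain ⟨δ, hδ, F⟩ := c.fam hM (hn y0)
    refine ⟨Metric.ball y0 δ, Metric.isOpen_ball, Metric.mem_ball_self hδ, ?_⟩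
    have e : {y : E3 | ‖y‖ = 1 ∧ dist y y0 < δ} = Subtype.val '' (Metric.ball y0 δ) := by
      ext y
      constructor
      · rintro ⟨h1, h2⟩
        exact ⟨⟨y, by simpa using h1⟩, h2, rfl⟩
      · rintro ⟨z, hz, rfl⟩
        exact ⟨hn z, hz⟩
    rwa [← e]
  have inf : ∀ N : Set (sphere (0 : E3) 1), IsOpen N → N.Nonempty → N.Infinite := by
    rintro N hN ⟨x, hx⟩
    exact infinite_of_mem_nhds x (hN.mem_nhds hx)
  have ne : ∀ {i j : sphere (0 : E3) 1}, i ≠ j → (i : E3) ≠ j := fun h h' => h (Subtype.ext h')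
  obtain ⟨N0, hN0, hy0, F0⟩ := key ⟨w, by simpa using hw⟩
  obtain ⟨i, hi, j, hj, k, hk, hij, hik, hjk⟩ := three_pts (inf N0 hN0 ⟨_, hy0⟩)
  obtain ⟨B, Bs, hB⟩ := F0.ex (mem_image_of_mem _ hi) (mem_image_of_mem _ hj)
    (mem_image_of_mem _ hk) (ne hij) (ne hik) (ne hjk)
  refine ⟨B, Bs, ?_⟩
  obtain ⟨U, hU⟩ : ∃ U : Set (sphere (0 : E3) 1),
    U = interior {y : sphere (0 : E3) 1 | MatchB (lW p) (bW p M) B (y : E3)} := ⟨_, rfl⟩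
  have hUm : ∀ y ∈ U, MatchB (lW p) (bW p M) B (y : E3) := by
    intro y hy; rw [hU] at hy; have h := interior_subset hy; exact h
  have hUo : IsOpen U := by rw [hU]; exact isOpen_interior
  have hUn : U.Nonempty := by
    refine ⟨⟨w, by simpa using hw⟩, ?_⟩
    rw [hU]
    exact interior_maximal (fun y hy => hB _ (mem_image_of_mem _ hy)) hN0 hy0
  have hUc : IsClosed U := by
    refine isClosed_of_closure_subset fun y hy => ?_
    obtain ⟨N, hN, hyN, F⟩ := key y
    obtain ⟨x, hx⟩ := mem_closure_iff.1 hy N hN hyN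
    obtain ⟨i, hi, j, hj, k, hk, hij, hik, hjk⟩ := three_pts (inf (N ∩ U) (hN.inter hUo) ⟨x, hx⟩)
    have i' := mem_image_of_mem Subtype.val hi.1
    have j' := mem_image_of_mem Subtype.val hj.1
    have k' := mem_image_of_mem Subtype.val hk.1
    obtain ⟨B1, -, hB1⟩ := F.ex i' j' k' (ne hij) (ne hik) (ne hjk)
    obtain ⟨q, hq, e⟩ := F.uniq i' j' k' (ne hij) (ne hik) (ne hjk) (hB1 _ i') (hB1 _ j') (hB1 _ k')
      (hUm _ hi.2) (hUm _ hj.2) (hUm _ hk.2)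
    rw [hU]
    refine interior_maximal (fun x hx => ?_) hN hyN
    obtain ⟨t, ht, h⟩ := hB1 _ (mem_image_of_mem Subtype.val hx)
    refine ⟨q * t, mul_pos hq ht, fun u v hu hv => ?_⟩
    rw [e, h u v hu hv]; ring
  have := IsClopen.eq_univ ⟨hUc, hUo⟩ hUn
  intro y hy
  exact hUm ⟨y, by simpa using hy⟩ (by rw [this]; trivial)

end Ctx

lemma ellip {L : Set E3} (q : LinearMap.BilinForm ℝ E3) (hs : ∀ u v, q u v = q v u)
    (hp : ∀ u, u ≠ 0 → 0 < q u u) (hL : ∀ x, x ∈ L ↔ q x x ≤ 1) :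
    ∃ T : E3 ≃ᵃ[ℝ] E3, L = T '' closedBall (0 : E3) 1 := by
  obtain ⟨v, hv⟩ := LinearMap.BilinForm.exists_orthogonal_basis (B := q) ⟨fun u v => by simp [hs u v]⟩
  have h3 : Module.finrank ℝ E3 = 3 := by simp
  obtain ⟨v', hv'⟩ : ∃ v' : Module.Basis (Fin 3) ℝ E3, ∀ i j, i ≠ j → q (v' i) (v' j) = 0 := by
    refine ⟨v.reindex (finCongr h3), fun i j h => ?_⟩
    simp only [Module.Basis.reindex_apply]
    exact hv (fun h' => h ((finCongr h3).symm.injective h'))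
  have hpos : ∀ i, 0 < q (v' i) (v' i) := fun i => hp _ (v'.ne_zero i)
  have hw : ∀ i, IsUnit ((√(q (v' i) (v' i)))⁻¹) := fun i =>
    (inv_ne_zero (Real.sqrt_pos.2 (hpos i)).ne').isUnit
  obtain ⟨b, hb⟩ : ∃ b : Module.Basis (Fin 3) ℝ E3, ∀ i, b i = (√(q (v' i) (v' i)))⁻¹ • v' i :=
    ⟨v'.isUnitSMul hw, fun i => v'.isUnitSMul_apply hw i⟩
  have hbb : ∀ i j, q (b i) (b j) = if i = j then 1 else 0 := by
    intro i j
    rw [hb, hb]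
    simp only [map_smul, LinearMap.smul_apply, smul_eq_mul]
    split_ifs with h
    · subst h
      have := Real.mul_self_sqrt (hpos i).le
      have h0 := (Real.sqrt_pos.2 (hpos i)).ne'
      field_simp
      nlinarith
    · rw [hv' i j h]; simp
  obtain ⟨T, hT⟩ : ∃ T : E3 ≃ₗ[ℝ] E3, ∀ x, T x = ∑ i, x i • b i := by
    refine ⟨(WithLp.linearEquiv 2 ℝ (Fin 3 → ℝ)).trans b.equivFun.symm, fun x => ?_⟩
    simp [Module.Basis.equivFun_symm_apply]
  have hq : ∀ x, q (T x) (T x) = ‖x‖ ^ 2 := by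
    intro x
    rw [hT, EuclideanSpace.norm_sq_eq]
    simp only [Fin.sum_univ_three, map_add, map_smul, LinearMap.add_apply, LinearMap.smul_apply,
      smul_eq_mul]
    have e01 := hbb 0 1
    have e02 := hbb 0 2
    have e12 := hbb 1 2
    have e10 := hbb 1 0
    have e20 := hbb 2 0
    have e21 := hbb 2 1
    have e00 := hbb 0 0
    have e11 := hbb 1 1
    have e22 := hbb 2 2
    simp at e01 e02 e12 e10 e20 e21 e00 e11 e22
    rw [e01, e02, e12, e10, e20, e21, e00, e11, e22]
    simp only [Real.norm_eq_abs, sq_abs]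
    ring
  refine ⟨T.toAffineEquiv, ?_⟩
  ext x
  constructor
  · intro hx
    refine ⟨T.symm x, ?_, by simp⟩
    have := (hL x).1 hx
    rw [← T.apply_symm_apply x, hq] at this
    rw [mem_closedBall_zero_iff]
    exact (sq_le_one_iff₀ (norm_nonneg _)).1 this
  · rintro ⟨w, hw, rfl⟩
    rw [mem_closedBall_zero_iff] at hw
    rw [LinearEquiv.coe_toAffineEquiv, hL, hq]
    exact (sq_le_one_iff₀ (norm_nonneg _)).2 hw

namespace Ctx
variable {K L : Set E3} {p a : E3 → E3} {r : ℝ} (c : Ctx K L p a r)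
include c

lemma frL {x : E3} (hx : x ∈ frontier L) : ∃ y, ‖y‖ = 1 ∧ p y = x := by
  have hcl : IsClosed L := c.Lc.isClosed
  have hxL : x ∈ L := hcl.frontier_subset hx
  obtain ⟨f, hf⟩ := geometric_hahn_banach_open_point c.Lconv.interior isOpen_interior hx.2
  obtain ⟨y, rfl⟩ := (InnerProductSpace.toDual ℝ E3).surjective f
  simp only [InnerProductSpace.toDual_apply_apply] at hf
  have h0 : (0 : E3) ∈ interior L :=
    mem_interior.2 ⟨ball 0 r, ball_subset_closedBall.trans c.ball, isOpen_ball, mem_ball_self c.r0⟩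
  have hy : y ≠ 0 := by
    rintro rfl
    have := hf 0 h0; simp at this
  have hle : ∀ u ∈ L, ⟪y, u⟫ ≤ ⟪y, x⟫ := by
    intro u hu
    have : u ∈ closure (interior L) := by
      rw [c.Lconv.closure_interior_eq_closure_of_nonempty_interior ⟨_, h0⟩]; exact subset_closure hu
    have hcl2 : IsClosed {u : E3 | ⟪y, u⟫ ≤ ⟪y, x⟫} :=
      isClosed_le (by fun_prop) continuous_const
    exact closure_minimal (fun v hv => (hf v hv).le) hcl2 this
  refine ⟨‖y‖⁻¹ • y, norm_smul_inv_norm (𝕜 := ℝ) hy, ?_⟩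
  rw [c.p_smul hy (inv_pos.2 (norm_pos_iff.2 hy))]
  exact (c.puniq y hy x hxL (le_antisymm (c.pmax y x hxL) (hle _ (c.pL y)))).symm

lemma final (hsym : L = -L) : ∃ T : E3 ≃ᵃ[ℝ] E3, L = T '' closedBall (0 : E3) 1 := by
  obtain ⟨M, hM⟩ : ∃ M : E3 → E3 →ₗ[ℝ] E3, ∀ y, ‖y‖ = 1 → Conj K p a y (M y) := by
    classical
    refine ⟨fun y => if h : ‖y‖ = 1 then (c.conj h).choose else 0, fun y h => ?_⟩
    simp only [h, dif_pos]
    exact (c.conj h).choose_spec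
  obtain ⟨B, Bs, hB⟩ := c.glob hM
  have hnhds : L ∈ 𝓝 (0 : E3) := mem_of_superset (closedBall_mem_nhds 0 c.r0) c.ball
  have f0 : ∀ x ∈ frontier L, B (x, 1) (x, 1) = 0 := by
    intro x hx
    obtain ⟨y, hy, rfl⟩ := c.frL hx
    obtain ⟨k, -, h⟩ := hB y hy
    rw [h _ _ (by simp [lW_apply]) (by simp [lW_apply]), bW_apply]
    simp
  have frs : ∀ x ∈ frontier L, -x ∈ frontier L := by
    intro x hx
    rw [hsym]
    have : frontier (-L) = -frontier L := (Homeomorph.neg E3).preimage_frontier L |>.symm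
    rw [this]; simpa using hx
  have exp : ∀ (x : E3) (t : ℝ), B (x, t) (x, t) = B (x, 0) (x, 0) + 2 * t * B (x, 0) (0, 1)
      + t ^ 2 * B (0, 1) (0, 1) := by
    intro x t
    have e : ((x, t) : E3 × ℝ) = (x, 0) + t • (0, 1) := by ext <;> simp
    rw [e]
    simp only [map_add, map_smul, LinearMap.add_apply, LinearMap.smul_apply, smul_eq_mul]
    rw [Bs (0, 1) (x, 0)]; ring
  have negl : ∀ x : E3, ((-x, (0 : ℝ)) : E3 × ℝ) = -(x, 0) := by intro x; ext <;> simp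
  have fr1 : ∀ x ∈ frontier L, B (x, 0) (x, 0) = -B (0, 1) (0, 1) ∧ B (x, 0) (0, 1) = 0 := by
    intro x hx
    have h1 := f0 x hx
    have h2 := f0 _ (frs x hx)
    rw [exp] at h1 h2
    rw [negl] at h2
    simp only [map_neg, LinearMap.neg_apply] at h2
    constructor <;> linarith
  have hab : Absorbent ℝ L := absorbent_nhds_zero hnhds
  have gp : ∀ x : E3, x ≠ 0 → 0 < gauge L x := fun x hx =>
    (gauge_pos hab (NormedSpace.isVonNBounded_of_isBounded ℝ c.Lc.isBounded)).2 hx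
  have sc : ∀ x : E3, x ≠ 0 → ∃ x' ∈ frontier L, x = gauge L x • x' := by
    intro x hx
    refine ⟨(gauge L x)⁻¹ • x, ?_, ?_⟩
    · rw [← gauge_eq_one_iff_mem_frontier c.Lconv hnhds,
        gauge_smul_of_nonneg (inv_nonneg.2 (gp x hx).le), smul_eq_mul, inv_mul_cancel₀ (gp x hx).ne']
    · rw [smul_smul, mul_inv_cancel₀ (gp x hx).ne', one_smul]
  have sml : ∀ (t : ℝ) (x : E3), ((t • x, (0 : ℝ)) : E3 × ℝ) = t • (x, 0) := by
    intro t x; ext <;> simp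
  have hq : ∀ x : E3, B (x, 0) (x, 0) = gauge L x ^ 2 * (-B (0, 1) (0, 1)) ∧ B (x, 0) (0, 1) = 0 := by
    intro x
    by_cases hx : x = 0
    · subst hx
      have : ((0, 0) : E3 × ℝ) = 0 := rfl
      simp [this]
    obtain ⟨x', hx', e⟩ := sc x hx
    obtain ⟨h1, h2⟩ := fr1 x' hx'
    obtain ⟨t, ht⟩ : ∃ t, t = gauge L x := ⟨_, rfl⟩
    rw [← ht] at e ⊢
    rw [e, sml]
    simp only [map_smul, LinearMap.smul_apply, smul_eq_mul, h1, h2]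
    constructor <;> ring
  have hc0 : B (0, 1) (0, 1) ≠ 0 := by
    intro hc
    obtain ⟨w, hw, -, -⟩ := exists_orth 0 0
    have hne : w ≠ -w := by
      intro h1
      have h2 : (2 : ℝ) • w = 0 := by
        rw [two_smul]; nth_rewrite 1 [h1]; simp
      have : w = 0 := (smul_eq_zero.1 h2).resolve_left two_ne_zero
      rw [this] at hw; simp at hw
    obtain ⟨u, hu, -, -, hpos⟩ := c.posW (y3 := w) hM hw (by simpa using hw : ‖-w‖ = 1) hne
    obtain ⟨k, hk, h⟩ := hB w hw
    have h5 := h u u hu hu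
    have h6 := exp u.1 u.2
    rw [(hq u.1).1, (hq u.1).2, hc] at h6
    have h7 : B u u = 0 := by simpa using h6
    rw [h7] at h5
    exact absurd h5 (mul_pos hk hpos).ne
  refine ellip ((-B (0, 1) (0, 1))⁻¹ • B.compl₁₂ (LinearMap.inl ℝ E3 ℝ) (LinearMap.inl ℝ E3 ℝ))
    ?_ ?_ ?_
  · intro u v
    simp [Bs (u, 0) (v, 0)]
  · intro u hu
    have : (-B (0, 1) (0, 1))⁻¹ * B (u, 0) (u, 0) = gauge L u ^ 2 := by
      rw [(hq u).1]; field_simp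
    simp only [LinearMap.smul_apply, LinearMap.compl₁₂_apply, LinearMap.inl_apply, smul_eq_mul, this]
    exact pow_pos (gp u hu) 2
  · intro u
    have : (-B (0, 1) (0, 1))⁻¹ * B (u, 0) (u, 0) = gauge L u ^ 2 := by
      rw [(hq u).1]; field_simp
    simp only [LinearMap.smul_apply, LinearMap.compl₁₂_apply, LinearMap.inl_apply, smul_eq_mul, this]
    rw [sq_le_one_iff₀ (gauge_nonneg u), gauge_le_one_iff_mem_closure c.Lconv hnhds,
      c.Lc.isClosed.closure_eq]

end Ctx

lemma not_int {S : Set E3} {x y : E3} (hy : y ≠ 0) (h : ∀ u ∈ S, ⟪y, u⟫ ≤ ⟪y, x⟫) :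
    x ∉ interior S := by
  intro hx
  have h1 : Tendsto (fun t : ℝ => x + t • y) (𝓝[>] 0) (𝓝 x) := by
    have : Continuous fun t : ℝ => x + t • y := by fun_prop
    have h2 := this.tendsto 0
    simp only [zero_smul, add_zero] at h2
    exact h2.mono_left nhdsWithin_le_nhds
  have h3 := (h1.eventually (mem_interior_iff_mem_nhds.1 hx)).and self_mem_nhdsWithin
  obtain ⟨t, ht, ht0⟩ := h3.exists
  have h4 := h _ ht
  rw [inner_add_right, inner_smul_right] at h4
  have h5 : 0 < t * ⟪y, y⟫ := mul_pos ht0 (real_inner_self_pos.2 hy)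
  linarith

lemma mk_ctx0 {K L : Set E3}
    (hKcomp : IsCompact K) (hKconv : Convex ℝ K)
    (hLcomp : IsCompact L) (hLconv : Convex ℝ L) (hLint : (interior L).Nonempty)
    (hLsym : L = -L) (hLstrict : StrictConvex ℝ L) (hLK : L ⊆ interior K) :
    ∃ (p : E3 → E3) (r : ℝ), Ctx0 K L p r := by
  obtain ⟨x, hx⟩ := hLint
  have hnx : -x ∈ L := by
    rw [hLsym]; simpa using interior_subset hx
  have h0 : (0 : E3) ∈ interior L := by
    have h1 := hLconv.combo_interior_self_mem_interior hx hnx (a := 1 / 2) (b := 1 / 2)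
      (by norm_num) (by norm_num) (by norm_num)
    simpa using h1
  obtain ⟨r, hr, hball⟩ := Metric.nhds_basis_closedBall.mem_iff.1 (mem_interior_iff_mem_nhds.1 h0)
  have hex : ∀ y : E3, ∃ q ∈ L, ∀ x ∈ L, ⟪y, x⟫ ≤ ⟪y, q⟫ := by
    intro y
    obtain ⟨q, hq, h⟩ := hLcomp.exists_isMaxOn ⟨0, interior_subset h0⟩
      (f := fun x => ⟪y, x⟫) (by fun_prop)
    exact ⟨q, hq, fun x hx => h hx⟩
  choose p hp hpm using hex
  refine ⟨p, r, hKcomp, hKconv, hLcomp, hLconv, hLK, hr, hball, hp, hpm, ?_⟩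
  intro y hy x hx he
  refine hLstrict.eq hx (hp y) (a := 1 / 2) (b := 1 / 2) (by norm_num) (by norm_num) (by norm_num)
    (not_int hy fun u hu => ?_)
  rw [inner_add_right, inner_smul_right, inner_smul_right, he]
  have := hpm y u hu
  linarith

lemma mem_graze {K L : Set E3} {p : E3 → E3} {r : ℝ} (c : Ctx0 K L p r) {z y : E3}
    (hy : y ≠ 0) (h : ⟪y, z⟫ = ⟪y, p y⟫) : p y ∈ graze L z := by
  constructor
  · refine ⟨subset_closure ⟨p y, c.pL y, 1, zero_le_one, by simp⟩, not_int hy ?_⟩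
    rintro u ⟨w, hw, l, hl, rfl⟩
    have h1 := c.pmax y w hw
    rw [inner_add_right, inner_smul_right, inner_sub_right, h]
    nlinarith [mul_nonneg hl (sub_nonneg.2 h1)]
  · exact ⟨subset_closure (c.pL y), not_int hy (c.pmax y)⟩

lemma mk_ctx {K L : Set E3} {p : E3 → E3} {r : ℝ} (c : Ctx0 K L p r)
    (Δ : E3 → AffineSubspace ℝ E3)
    (hΔ : ∀ z ∈ frontier K, IsPlane (Δ z) ∧ graze L z ⊆ (Δ z : Set E3)) :
    ∃ a, Ctx K L p a r := by
  have key : ∀ z : E3, ∃ a : E3, z ∈ frontier K → ∀ y, y ≠ 0 → ⟪y, z⟫ = ⟪y, p y⟫ →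
      ⟪a, p y - z⟫ = -1 := by
    intro z
    by_cases hz : z ∈ frontier K
    swap
    · exact ⟨0, fun h => absurd h hz⟩
    obtain ⟨hP, hg⟩ := hΔ z hz
    have hne : ((Δ z).direction)ᗮ ≠ ⊥ := by
      intro h
      have h1 := (Δ z).direction.finrank_add_finrank_orthogonal
      rw [h, finrank_bot] at h1
      have h2 : Module.finrank ℝ (Δ z).direction = 2 := hP
      have h3 : Module.finrank ℝ E3 = 3 := by simp
      omega
    obtain ⟨ν, hν, hν0⟩ := Submodule.exists_mem_ne_zero_of_ne_bot hne
    have h1 : ¬ ∀ y : E3, y ≠ 0 → ⟪y, z⟫ = ⟪y, p y⟫ → ⟪ν, p y - z⟫ = 0 := fun h => hν0 (c.NP hz h)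
    push Not at h1
    obtain ⟨y0, hy0, e0, hs⟩ := h1
    refine ⟨(-(⟪ν, p y0 - z⟫)⁻¹) • ν, fun _ y hy e => ?_⟩
    have h2 : p y - p y0 ∈ (Δ z).direction :=
      AffineSubspace.vsub_mem_direction (hg (mem_graze c hy e)) (hg (mem_graze c hy0 e0))
    have h3 : ⟪ν, p y - p y0⟫ = 0 := (Submodule.mem_orthogonal' _ _).1 hν _ h2
    have h4 : ⟪ν, p y - z⟫ = ⟪ν, p y0 - z⟫ := by
      rw [inner_sub_right] at h3 ⊢
      rw [inner_sub_right]; linarith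
    rw [real_inner_smul_left, h4, neg_mul, inv_mul_cancel₀ hs]
  choose a ha using key
  exact ⟨a, { toCtx0 := c, ha := ha }⟩

theorem statement0
    (K L : Set E3)
    (hKcomp : IsCompact K) (hKconv : Convex ℝ K) (hKint : (interior K).Nonempty)
    (hKsym : K = -K)
    (hLcomp : IsCompact L) (hLconv : Convex ℝ L) (hLint : (interior L).Nonempty)
    (hLsym : L = -L) (hLstrict : StrictConvex ℝ L)
    (hLK : L ⊆ interior K)
    (Δ : E3 → AffineSubspace ℝ E3)
    (hΔ : ∀ z ∈ frontier K, IsPlane (Δ z) ∧ graze L z ⊆ (Δ z : Set E3))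
    (hAF : AlmostFree K L Δ) :
    ∃ T : E3 ≃ᵃ[ℝ] E3, L = T '' closedBall (0 : E3) 1 := by
  obtain ⟨p, r, c0⟩ := mk_ctx0 hKcomp hKconv hLcomp hLconv hLint hLsym hLstrict hLK
  obtain ⟨a, c⟩ := mk_ctx c0 Δ hΔ
  exact c.final hLsym

end
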